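/- Let α be a countable ordinal with α > 1 and let (G_β) for 1 ≤ β < α be a family of nontrivial countable discrete amenable groups. Then there exist a complex Hilbert space 𝓗, a hyperfinite II₁ factor R on 𝓗, and a masa A ⊆ R such that: (i) the normalizer tower satisfies 𝒩^α(A) = R and 𝒩^β(A) ≠ 𝒩^{β+1}(A) for every β < α (so A has length exactly α); (ii) 𝒩¹(A) = N_R(A)'' is a factor distinct from R (i.e. A is semi-regular); (iii) for every β with 1 ≤ β < α, the unitary group U(𝒩^β(A)) is a normal subgroup of the normalizer group N_R(𝒩^β(A)), and the quotient group N_R(𝒩^β(A)) / U(𝒩^β(A)) is isomorphic to G_β. -/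

import Mathlib

noncomputable section

/-- A group `G` is amenable if it carries a left-invariant finitely additive
probability measure defined on all subsets of `G`. -/
def IsAmenable (G : Type*) [Group G] : Prop :=
  ∃ μ : Set G → ℝ,
    (∀ s : Set G, 0 ≤ μ s) ∧
    μ Set.univ = 1 ∧
    (∀ s t : Set G, s ∩ t = ∅ → μ (s ∪ t) = μ s + μ t) ∧
    (∀ (g : G) (s : Set G), μ ((fun x => g * x) '' s) = μ s)

variable {𝓗 : Type} [NormedAddCommGroup 𝓗] [InnerProductSpace ℂ 𝓗] [CompleteSpace 𝓗]

/-- The von Neumann algebra (double commutant) generated by a subset of `B(𝓗)`. -/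
def vNGen (S : Set (𝓗 →L[ℂ] 𝓗)) : Set (𝓗 →L[ℂ] 𝓗) :=
  Set.centralizer (Set.centralizer S)

/-- The set `N_M(B)` of unitaries of the von Neumann algebra `M` normalising the
subset `B`. -/
def normSet (M : VonNeumannAlgebra 𝓗) (B : Set (𝓗 →L[ℂ] 𝓗)) : Set (𝓗 →L[ℂ] 𝓗) :=
  {u | u ∈ M ∧ u ∈ unitary (𝓗 →L[ℂ] 𝓗) ∧ (fun x => u * x * star u) '' B = B}

/-- The normalizer tower `𝒩^α(A)` of a subset `A` of the von Neumann algebra `M`: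
`𝒩⁰(A) = A`, `𝒩^{β+1}(A) = (N_M(𝒩^β(A)))''`, and at limit ordinals
`𝒩^β(A) = (⋃_{γ<β} 𝒩^γ(A))''`. -/
def tower (M : VonNeumannAlgebra 𝓗) (A : Set (𝓗 →L[ℂ] 𝓗)) (o : Ordinal) :
    Set (𝓗 →L[ℂ] 𝓗) :=
  Ordinal.limitRecOn o A
    (fun _ B => vNGen (normSet M B))
    (fun o _ ih => vNGen (⋃ (γ : Ordinal) (h : γ < o), ih γ h))

/-- A subset of `B(𝓗)` is a factor if it meets its commutant exactly in the scalars. -/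
def IsFactorSet (C : Set (𝓗 →L[ℂ] 𝓗)) : Prop :=
  C ∩ Set.centralizer C = Set.range (fun z : ℂ => z • (1 : 𝓗 →L[ℂ] 𝓗))

/-- A von Neumann algebra `R` is hyperfinite if it is generated by an increasing
sequence of finite-dimensional *-subalgebras. -/
def IsHyperfinite (R : VonNeumannAlgebra 𝓗) : Prop :=
  ∃ Mseq : ℕ → StarSubalgebra ℂ (𝓗 →L[ℂ] 𝓗),
    Monotone Mseq ∧
    (∀ n, FiniteDimensional ℂ (Mseq n)) ∧
    (∀ n, (Mseq n : Set (𝓗 →L[ℂ] 𝓗)) ⊆ (R : Set (𝓗 →L[ℂ] 𝓗))) ∧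
    vNGen (⋃ n, (Mseq n : Set (𝓗 →L[ℂ] 𝓗))) = (R : Set (𝓗 →L[ℂ] 𝓗))

/-- `R` is a II₁ factor: a finite factor that is infinite-dimensional over `ℂ`. -/
def IsIIOneFactor (R : VonNeumannAlgebra 𝓗) : Prop :=
  IsFactorSet (R : Set (𝓗 →L[ℂ] 𝓗)) ∧
  (∀ v ∈ R, star v * v = 1 → v * star v = 1) ∧
  ¬ ∃ s : Finset (𝓗 →L[ℂ] 𝓗),
      (R : Set (𝓗 →L[ℂ] 𝓗)) ⊆ (Submodule.span ℂ (s : Set (𝓗 →L[ℂ] 𝓗)) : Set (𝓗 →L[ℂ] 𝓗))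

/-!
Well-order the groups `G β` and form their iterated wreath product. The stabilizers in it of the
coordinates of a base point from `β` on form an increasing chain of subgroups in which each one
has the next as its normalizer, with quotient `G β`. For a group `Γ` with such a chain, let `Γ`
act on the Heisenberg group over the ring of finitely supported functions from `Γ` to `𝔽₂[X]`, and
let `Λ` be the semidirect product. The preimage `H` in `Λ` of a subgroup of the chain is relatively
ICC, and then the Fourier support of a unitary of `L(Λ)` normalizing `L(H)` lies in a single coset
of `H` in its normalizer. So the normalizer tower in `L(Λ)` follows the chain of subgroups. It
starts at the masa `L(K)`, where `K` is an abelian subgroup of the Heisenberg group whose normalizer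
in `Λ` is the preimage of the first subgroup of the chain.

The centre of the Heisenberg group generates the algebra of bounded functions on its dual group, on
which `Γ` acts essentially freely. As `Γ` is amenable, the orbit relation is an increasing union,
up to null sets, of relations with finite classes that vary continuously. Each of them, together
with a finite subset of the locally finite Heisenberg group, spans a finite-dimensional algebra,
and `L(Λ)` is generated by an increasing sequence of these algebras.
-/

open scoped InnerProductSpace ComplexConjugate

/-! ### Operators on `ℓ²` -/

/-- The Hilbert space `ℓ²(X)`. -/
abbrev Ell2 (X : Type*) : Type _ := lp (fun _ : X => ℂ) 2

namespace Ell2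

variable {X : Type*}

open Classical in
/-- The canonical basis vector `δ_x` of `ℓ²(X)`. -/
def basis (x : X) : Ell2 X := lp.single 2 x 1

open Classical in
theorem basis_apply (x y : X) : basis x y = if y = x then 1 else 0 := by
  rw [basis, lp.single_apply, Pi.single_apply]

theorem norm_basis (x : X) : ‖basis x‖ = 1 := by
  classical
  rw [basis, lp.norm_single (by norm_num), norm_one]

theorem inner_basis_left (x : X) (ξ : Ell2 X) : ⟪basis x, ξ⟫_ℂ = ξ x := by
  classical
  have := lp.inner_single_left (𝕜 := ℂ) x (1 : ℂ) ξ
  rw [basis]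
  convert this using 1
  simp

theorem summable_norm_sq (ξ : Ell2 X) : Summable fun x => ‖ξ x‖ ^ 2 := by
  have := lp.memℓp ξ
  rw [memℓp_gen_iff (by norm_num)] at this
  simpa using this

theorem memℓp_two_iff {f : X → ℂ} : Memℓp f 2 ↔ Summable fun x => ‖f x‖ ^ 2 := by
  rw [memℓp_gen_iff (by norm_num)]
  simp

theorem norm_sq_eq_tsum (ξ : Ell2 X) : ‖ξ‖ ^ 2 = ∑' x, ‖ξ x‖ ^ 2 := by
  have := lp.norm_rpow_eq_tsum (p := 2) (by norm_num) ξ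
  simpa using this

theorem summable_comp_equiv (e : X ≃ X) (ξ : Ell2 X) : Summable fun x => ‖ξ (e x)‖ ^ 2 :=
  (e.summable_iff (f := fun x => ‖ξ x‖ ^ 2)).2 (summable_norm_sq ξ)

/-- The unitary operator on `ℓ²(X)` induced by a permutation of `X`. -/
def permOp (e : Equiv.Perm X) : Ell2 X →L[ℂ] Ell2 X :=
  LinearMap.mkContinuous
    { toFun := fun ξ => ⟨fun x => ξ (e.symm x), memℓp_two_iff.2 (summable_comp_equiv e.symm ξ)⟩
      map_add' := fun _ _ => rfl
      map_smul' := fun _ _ => rfl } 1 (by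
    intro ξ
    rw [one_mul]
    refine le_of_eq ((sq_eq_sq₀ (norm_nonneg _) (norm_nonneg _)).1 ?_)
    rw [norm_sq_eq_tsum, norm_sq_eq_tsum]
    exact e.symm.tsum_eq (fun x => ‖ξ x‖ ^ 2))

@[simp]
theorem permOp_apply (e : Equiv.Perm X) (ξ : Ell2 X) (x : X) : permOp e ξ x = ξ (e.symm x) := rfl

theorem indicator_norm_sq_le (S : Set X) (ξ : Ell2 X) (x : X) :
    ‖S.indicator ξ x‖ ^ 2 ≤ ‖ξ x‖ ^ 2 := by
  by_cases h : x ∈ S <;> simp [h]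

theorem summable_indicator (S : Set X) (ξ : Ell2 X) :
    Summable fun x => ‖S.indicator ξ x‖ ^ 2 :=
  Summable.of_nonneg_of_le (fun _ => sq_nonneg _) (indicator_norm_sq_le S ξ) (summable_norm_sq ξ)

/-- The projection of `ℓ²(X)` onto `ℓ²(S)`. -/
def proj (S : Set X) : Ell2 X →L[ℂ] Ell2 X :=
  LinearMap.mkContinuous
    { toFun := fun ξ => ⟨S.indicator ξ, memℓp_two_iff.2 (summable_indicator S ξ)⟩
      map_add' := fun ξ η => by
        apply lp.ext
        exact Set.indicator_add S ξ η
      map_smul' := fun c ξ => by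
        apply lp.ext
        exact Set.indicator_const_smul S c ξ } 1 (by
    intro ξ
    rw [one_mul]
    refine (sq_le_sq₀ (norm_nonneg _) (norm_nonneg _)).1 ?_
    rw [norm_sq_eq_tsum, norm_sq_eq_tsum]
    exact Summable.tsum_le_tsum (indicator_norm_sq_le S ξ) (summable_indicator S ξ)
      (summable_norm_sq ξ))

theorem proj_apply (S : Set X) (ξ : Ell2 X) (x : X) : proj S ξ x = S.indicator ξ x := rfl

/-- The matrix coefficients of an operator on `ℓ²(X)`. -/
def coef (T : Ell2 X →L[ℂ] Ell2 X) (x y : X) : ℂ := T (basis y) x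

theorem coef_eq_inner (T : Ell2 X →L[ℂ] Ell2 X) (x y : X) :
    coef T x y = ⟪basis x, T (basis y)⟫_ℂ := (inner_basis_left _ _).symm

theorem coef_star (T : Ell2 X →L[ℂ] Ell2 X) (x y : X) : coef (star T) x y = conj (coef T y x) := by
  rw [coef_eq_inner, coef_eq_inner, ContinuousLinearMap.star_eq_adjoint,
    ContinuousLinearMap.adjoint_inner_right, inner_conj_symm]

theorem apply_eq_inner (T : Ell2 X →L[ℂ] Ell2 X) (ξ : Ell2 X) (x : X) :
    T ξ x = ⟪star T (basis x), ξ⟫_ℂ := by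
  rw [← inner_basis_left, ContinuousLinearMap.star_eq_adjoint,
    ContinuousLinearMap.adjoint_inner_left]

theorem hasSum_apply (T : Ell2 X →L[ℂ] Ell2 X) (ξ : Ell2 X) (x : X) :
    HasSum (fun z => coef T x z * ξ z) (T ξ x) := by
  rw [apply_eq_inner]
  refine (lp.hasSum_inner (𝕜 := ℂ) (star T (basis x)) ξ).congr_fun fun z => ?_
  have := coef_star T z x
  rw [coef] at this
  rw [this, RCLike.inner_apply, RCLike.conj_conj, mul_comm]

theorem hasSum_coef_mul (S T : Ell2 X →L[ℂ] Ell2 X) (x y : X) :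
    HasSum (fun z => coef S x z * coef T z y) (coef (S * T) x y) :=
  hasSum_apply S (T (basis y)) x

theorem coef_mul (S T : Ell2 X →L[ℂ] Ell2 X) (x y : X) :
    coef (S * T) x y = ∑' z, coef S x z * coef T z y :=
  (hasSum_coef_mul S T x y).tsum_eq.symm

theorem coef_ext {S T : Ell2 X →L[ℂ] Ell2 X} (h : ∀ x y, coef S x y = coef T x y) : S = T := by
  ext ξ x
  refine (hasSum_apply S ξ x).unique ?_
  simp_rw [h]
  exact hasSum_apply T ξ x

open Classical in
theorem coef_one (x y : X) : coef (1 : Ell2 X →L[ℂ] Ell2 X) x y = if x = y then 1 else 0 :=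
  basis_apply y x

@[simp]
theorem coef_smul (c : ℂ) (T : Ell2 X →L[ℂ] Ell2 X) (x y : X) :
    coef (c • T) x y = c * coef T x y := rfl

@[simp]
theorem coef_add (S T : Ell2 X →L[ℂ] Ell2 X) (x y : X) :
    coef (S + T) x y = coef S x y + coef T x y := rfl

@[simp]
theorem coef_sub (S T : Ell2 X →L[ℂ] Ell2 X) (x y : X) :
    coef (S - T) x y = coef S x y - coef T x y := rfl

theorem permOp_basis (e : Equiv.Perm X) (x : X) : permOp e (basis x) = basis (e x) := by
  classical
  ext y
  simp only [permOp_apply, basis_apply, Equiv.symm_apply_eq]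

theorem coef_mul_permOp (e : Equiv.Perm X) (T : Ell2 X →L[ℂ] Ell2 X) (x y : X) :
    coef (T * permOp e) x y = coef T x (e y) := by
  rw [coef, mul_apply_eq_comp, permOp_basis, coef]

open Classical in
theorem coef_proj_mul (S : Set X) (T : Ell2 X →L[ℂ] Ell2 X) (x y : X) :
    coef (proj S * T) x y = if x ∈ S then coef T x y else 0 := by
  rw [coef, mul_apply_eq_comp, proj_apply, Set.indicator_apply, coef]

open Classical in
theorem proj_basis (S : Set X) (x : X) : proj S (basis x) = if x ∈ S then basis x else 0 := by
  ext y
  rw [proj_apply, Set.indicator_apply, basis_apply]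
  by_cases hy : y = x
  · subst hy
    by_cases hyS : y ∈ S <;> simp [hyS, basis_apply]
  · by_cases hx : x ∈ S <;> simp [hx, hy, basis_apply]

open Classical in
theorem coef_mul_proj (S : Set X) (T : Ell2 X →L[ℂ] Ell2 X) (x y : X) :
    coef (T * proj S) x y = if y ∈ S then coef T x y else 0 := by
  rw [coef, mul_apply_eq_comp, proj_basis]
  split_ifs with h
  · rfl
  · simp

theorem permOp_mul (e f : Equiv.Perm X) : permOp (e * f) = permOp e * permOp f := rfl

theorem permOp_one : permOp (1 : Equiv.Perm X) = 1 := rfl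

theorem star_permOp (e : Equiv.Perm X) : star (permOp e) = permOp e⁻¹ := by
  classical
  refine coef_ext fun x y => ?_
  rw [coef_star, coef, coef, permOp_basis, permOp_basis, basis_apply, basis_apply]
  have h : y = e x ↔ x = e⁻¹ y := by rw [Equiv.Perm.eq_inv_iff_eq, eq_comm]
  simp only [apply_ite conj, map_one, map_zero, h]

theorem permOp_mem_unitary (e : Equiv.Perm X) :
    permOp e ∈ unitary (Ell2 X →L[ℂ] Ell2 X) := by
  rw [Unitary.mem_iff, star_permOp, ← permOp_mul, ← permOp_mul]
  simp [permOp_one]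

theorem eq_zero_of_eqOn_infinite (ξ : Ell2 X) {s : Set X} (hs : s.Infinite) {c : ℂ}
    (h : ∀ x ∈ s, ξ x = c) : c = 0 := by
  have hsum := (summable_norm_sq ξ).subtype s
  have : Infinite s := hs.to_subtype
  have hc : Summable fun _ : s => ‖c‖ ^ 2 := by
    refine hsum.congr fun x => ?_
    simp [h x.val x.2]
  have := (summable_const_iff _).1 hc
  simpa using this

theorem norm_proj_sq (S : Set X) (ξ : Ell2 X) :
    ‖proj S ξ‖ ^ 2 = ∑' x, S.indicator (fun x => ‖ξ x‖ ^ 2) x := by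
  rw [norm_sq_eq_tsum]
  refine tsum_congr fun x => ?_
  rw [proj_apply]
  by_cases h : x ∈ S <;> simp [h]

theorem sum_norm_proj_sq_le {ι : Type*} (t : Finset ι) (S : ι → Set X)
    (hS : Pairwise fun i j => Disjoint (S i) (S j)) (ξ : Ell2 X) :
    ∑ i ∈ t, ‖proj (S i) ξ‖ ^ 2 ≤ ‖ξ‖ ^ 2 := by
  simp_rw [norm_proj_sq, norm_sq_eq_tsum]
  have hsum : ∀ i, Summable ((S i).indicator fun x => ‖ξ x‖ ^ 2) :=
    fun i => (summable_norm_sq ξ).indicator _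
  rw [← Summable.tsum_finsetSum fun i _ => hsum i]
  refine Summable.tsum_le_tsum (fun x => ?_) (summable_sum fun i _ => hsum i) (summable_norm_sq ξ)
  by_cases hx : ∃ i ∈ t, x ∈ S i
  · obtain ⟨i, hi, hxi⟩ := hx
    rw [Finset.sum_eq_single i]
    · simp [hxi]
    · intro j _ hj
      have := Set.disjoint_left.1 (hS hj.symm) hxi
      simp [this]
    · simp [hi]
  · push Not at hx
    rw [Finset.sum_eq_zero]
    · positivity
    · intro i hi
      simp [hx i hi]

theorem apply_basis_eq_smul_of_coef_eq_zero {T : Ell2 X →L[ℂ] Ell2 X} {y : X}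
    (h : ∀ x ≠ y, coef T x y = 0) : T (basis y) = coef T y y • basis y := by
  classical
  ext x
  rw [lp.coeFn_smul, Pi.smul_apply, basis_apply, smul_eq_mul]
  split_ifs with hx
  · rw [hx, mul_one, coef]
  · rw [mul_zero]
    exact h x hx

theorem exists_coef_ne_zero {u : Ell2 X →L[ℂ] Ell2 X} (hu : u ∈ unitary (Ell2 X →L[ℂ] Ell2 X))
    (y : X) : ∃ x, coef u x y ≠ 0 := by
  classical
  by_contra! h
  have huy : u (basis y) = 0 := lp.ext (funext h)
  have hy : basis y = 0 := norm_eq_zero.1 <| by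
    rw [← ContinuousLinearMap.norm_map_of_mem_unitary hu, huy, norm_zero]
  simpa [hy] using basis_apply y y

end Ell2

/-! ### Group von Neumann algebras -/

omit [CompleteSpace 𝓗] in
theorem vNGen_mono {S T : Set (𝓗 →L[ℂ] 𝓗)} (h : S ⊆ T) : vNGen S ⊆ vNGen T :=
  Set.centralizer_subset (Set.centralizer_subset h)

omit [CompleteSpace 𝓗] in
theorem vNGen_vNGen (S : Set (𝓗 →L[ℂ] 𝓗)) : vNGen (vNGen S) = vNGen S := by
  rw [vNGen, vNGen, Set.centralizer_centralizer_centralizer]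

section NormSet

variable {M : VonNeumannAlgebra 𝓗} {B : Set (𝓗 →L[ℂ] 𝓗)} {u v : 𝓗 →L[ℂ] 𝓗}

theorem mul_mem_normSet (hu : u ∈ normSet M B) (hv : v ∈ normSet M B) : u * v ∈ normSet M B := by
  refine ⟨mul_mem hu.1 hv.1, mul_mem hu.2.1 hv.2.1, ?_⟩
  have hcomp : (fun x => u * v * x * star (u * v)) =
      (fun x => u * x * star u) ∘ fun x => v * x * star v := by
    ext1 x
    simp only [Function.comp_apply, star_mul, mul_assoc]
  rw [hcomp, Set.image_comp, hv.2.2, hu.2.2]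

theorem conj_mem_iff_of_mem_normSet (hu : u ∈ normSet M B) {x : 𝓗 →L[ℂ] 𝓗} :
    u * x * star u ∈ B ↔ x ∈ B := by
  have hinj : Function.Injective fun x => u * x * star u :=
    (Unitary.conjStarAlgAut ℂ _ ⟨u, hu.2.1⟩).injective
  rw [← hinj.mem_set_image (s := B) (a := x), hu.2.2]

end NormSet

theorem commute_conj_star_of_commute_conj {A : Type*} [Semiring A] [StarRing A] {u a p : A}
    (hu : u ∈ unitary A) (h : Commute (u * a * star u) p) : Commute a (star u * p * u) := by
  have hmap := h.map (Unitary.conjStarAlgAut ℕ A (star ⟨u, hu⟩))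
  have hconj : star u * (u * a * star u) * u = a := by
    rw [mul_assoc u, ← mul_assoc (star u), Unitary.star_mul_self_of_mem hu, one_mul, mul_assoc,
      Unitary.star_mul_self_of_mem hu, mul_one]
  rw [Unitary.conjStarAlgAut_star_apply, Unitary.conjStarAlgAut_star_apply] at hmap
  rwa [← hconj]

section RelativeConjugacy

variable {Λ : Type*} [Group Λ]

/-- The orbit of `g` under conjugation by the subgroup `H`. -/
def conjOrbit (H : Subgroup Λ) (g : Λ) : Set Λ := {x | ∃ h ∈ H, x = h * g * h⁻¹}

/-- The subgroup `H` is relatively ICC in `Λ`: every nontrivial element of `Λ`, not only of `H`,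
has infinitely many `H`-conjugates. -/
def IsRelICC (H : Subgroup Λ) : Prop := ∀ g : Λ, g ≠ 1 → (conjOrbit H g).Infinite

theorem conjOrbit_mono {H K : Subgroup Λ} (h : H ≤ K) (g : Λ) : conjOrbit H g ⊆ conjOrbit K g :=
  fun _ ⟨k, hk, e⟩ => ⟨k, h hk, e⟩

theorem IsRelICC.mono {H K : Subgroup Λ} (hH : IsRelICC H) (h : H ≤ K) : IsRelICC K :=
  fun g hg => (hH g hg).mono (conjOrbit_mono h g)

theorem IsRelICC.infinite [Nontrivial Λ] {H : Subgroup Λ} (hH : IsRelICC H) : Infinite Λ := by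
  obtain ⟨g, hg⟩ := exists_ne (1 : Λ)
  exact Set.infinite_univ_iff.1 ((hH g hg).mono (Set.subset_univ _))

theorem infinite_conjOrbit_of_injective {H : Subgroup Λ} {g : Λ} {ι β : Type*} [Infinite ι]
    (h : ι → Λ) (hH : ∀ i, h i ∈ H) (φ : Λ → β)
    (hinj : Function.Injective fun i => φ (h i * g * (h i)⁻¹)) : (conjOrbit H g).Infinite := by
  have h_conj_injective : Function.Injective fun i => h i * g * (h i)⁻¹ :=
    Function.Injective.of_comp (f := φ) hinj
  refine (Set.infinite_range_of_injective h_conj_injective).mono ?_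
  rintro _ ⟨i, rfl⟩
  exact ⟨h i, hH i, rfl⟩

end RelativeConjugacy

namespace GroupVN

open Ell2

variable {Λ : Type} [Group Λ]

/-- Left translation on `ℓ²(Λ)`. -/
def left (g : Λ) : Ell2 Λ →L[ℂ] Ell2 Λ := permOp (Equiv.mulLeft g)

/-- Right translation `δ_x ↦ δ_{xg}` on `ℓ²(Λ)`. -/
def right (g : Λ) : Ell2 Λ →L[ℂ] Ell2 Λ := permOp (Equiv.mulRight g)

theorem left_basis (g x : Λ) : left g (basis x) = basis (g * x) := permOp_basis _ _

theorem right_basis (g x : Λ) : right g (basis x) = basis (x * g) := permOp_basis _ _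

theorem left_apply (g : Λ) (ξ : Ell2 Λ) (x : Λ) : left g ξ x = ξ (g⁻¹ * x) := rfl

theorem right_apply (g : Λ) (ξ : Ell2 Λ) (x : Λ) : right g ξ x = ξ (x * g⁻¹) := rfl

theorem coef_left_mul (g : Λ) (T : Ell2 Λ →L[ℂ] Ell2 Λ) (x y : Λ) :
    coef (left g * T) x y = coef T (g⁻¹ * x) y := rfl

theorem coef_right_mul (g : Λ) (T : Ell2 Λ →L[ℂ] Ell2 Λ) (x y : Λ) :
    coef (right g * T) x y = coef T (x * g⁻¹) y := rfl

theorem coef_mul_left (g : Λ) (T : Ell2 Λ →L[ℂ] Ell2 Λ) (x y : Λ) :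
    coef (T * left g) x y = coef T x (g * y) := coef_mul_permOp _ _ _ _

theorem coef_mul_right (g : Λ) (T : Ell2 Λ →L[ℂ] Ell2 Λ) (x y : Λ) :
    coef (T * right g) x y = coef T x (y * g) := coef_mul_permOp _ _ _ _

open Classical in
theorem coef_left (g x y : Λ) : coef (left g) x y = if x = g * y then 1 else 0 := by
  rw [coef, left_basis, basis_apply]

theorem left_mul (g h : Λ) : left (g * h) = left g * left h := by
  ext ξ x
  simp [left_apply, mul_assoc]

theorem left_one : left (1 : Λ) = 1 := by
  ext ξ x
  simp [left_apply]

theorem star_left (g : Λ) : star (left g) = left g⁻¹ := by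
  rw [left, star_permOp, Equiv.Perm.inv_def, Equiv.mulLeft_symm, left]

theorem star_right (g : Λ) : star (right g) = right g⁻¹ := by
  rw [right, star_permOp, Equiv.Perm.inv_def, Equiv.mulRight_symm, right]

theorem left_mem_unitary (g : Λ) : left g ∈ unitary (Ell2 Λ →L[ℂ] Ell2 Λ) :=
  permOp_mem_unitary _

theorem commute_left_iff {T : Ell2 Λ →L[ℂ] Ell2 Λ} {g : Λ} :
    Commute (left g) T ↔ ∀ x y, coef T (g * x) (g * y) = coef T x y := by
  constructor
  · intro h x y
    rw [← coef_mul_left, ← h.eq, coef_left_mul, inv_mul_cancel_left]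
  · intro h
    refine coef_ext fun x y => ?_
    rw [coef_mul_left, coef_left_mul, ← h, mul_inv_cancel_left]

theorem commute_right_iff {T : Ell2 Λ →L[ℂ] Ell2 Λ} {g : Λ} :
    Commute (right g) T ↔ ∀ x y, coef T (x * g) (y * g) = coef T x y := by
  constructor
  · intro h x y
    rw [← coef_mul_right, ← h.eq, coef_right_mul, mul_inv_cancel_right]
  · intro h
    refine coef_ext fun x y => ?_
    rw [coef_mul_right, coef_right_mul, ← h, inv_mul_cancel_right]

variable (Λ) in
/-- The group von Neumann algebra `L(Λ)`, as the commutant of the right translations. -/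
def groupVN : VonNeumannAlgebra (Ell2 Λ) where
  toStarSubalgebra := StarSubalgebra.centralizer ℂ (Set.range (right (Λ := Λ)))
  centralizer_centralizer' := by
    change Set.centralizer (Set.centralizer
      (StarSubalgebra.centralizer ℂ (Set.range (right (Λ := Λ))) :
        Set (Ell2 Λ →L[ℂ] Ell2 Λ))) = _
    rw [StarSubalgebra.coe_centralizer, Set.centralizer_centralizer_centralizer]
    rfl

theorem mem_groupVN {T : Ell2 Λ →L[ℂ] Ell2 Λ} :
    T ∈ groupVN Λ ↔ ∀ g x y, coef T (x * g) (y * g) = coef T x y := by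
  have : T ∈ groupVN Λ ↔ T ∈ StarSubalgebra.centralizer ℂ (Set.range (right (Λ := Λ))) := Iff.rfl
  rw [this, StarSubalgebra.mem_centralizer_iff]
  constructor
  · intro h g
    exact commute_right_iff.1 (h _ ⟨g, rfl⟩).1
  · rintro h _ ⟨g, rfl⟩
    exact ⟨commute_right_iff.2 (h g), by rw [star_right]; exact commute_right_iff.2 (h _)⟩

theorem commute_right {T : Ell2 Λ →L[ℂ] Ell2 Λ} (hT : T ∈ groupVN Λ) (g : Λ) :
    Commute (right g) T := commute_right_iff.2 (mem_groupVN.1 hT g)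

theorem coef_eq {T : Ell2 Λ →L[ℂ] Ell2 Λ} (hT : T ∈ groupVN Λ) (x y : Λ) :
    coef T x y = coef T (x * y⁻¹) 1 := by
  rw [← mem_groupVN.1 hT y (x * y⁻¹) 1]
  simp

theorem left_mem_groupVN (g : Λ) : left g ∈ groupVN Λ := by
  rw [mem_groupVN]
  intro h x y
  classical
  simp [coef_left, ← mul_assoc]

/-- The subalgebra `L(H)` of `L(Λ)`: elements whose Fourier coefficients are supported in `H`. -/
def subgroupVN (H : Subgroup Λ) : Set (Ell2 Λ →L[ℂ] Ell2 Λ) :=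
  {T | T ∈ groupVN Λ ∧ ∀ g, g ∉ H → coef T g 1 = 0}

theorem coef_eq_zero {H : Subgroup Λ} {T : Ell2 Λ →L[ℂ] Ell2 Λ} (hT : T ∈ subgroupVN H) {x y : Λ}
    (h : x * y⁻¹ ∉ H) : coef T x y = 0 := by
  rw [coef_eq hT.1, hT.2 _ h]

theorem left_mem_subgroupVN {H : Subgroup Λ} {g : Λ} : left g ∈ subgroupVN H ↔ g ∈ H := by
  classical
  constructor
  · intro h
    by_contra hg
    simpa [coef_left] using h.2 g hg
  · intro h
    refine ⟨left_mem_groupVN g, fun k hk => ?_⟩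
    rw [coef_left, if_neg]
    rintro rfl
    simp [h] at hk

theorem subgroupVN_top : subgroupVN (⊤ : Subgroup Λ) = (groupVN Λ : Set (Ell2 Λ →L[ℂ] Ell2 Λ)) := by
  ext T
  simp [subgroupVN]

theorem star_mem_subgroupVN {H : Subgroup Λ} {T : Ell2 Λ →L[ℂ] Ell2 Λ} (hT : T ∈ subgroupVN H) :
    star T ∈ subgroupVN H := by
  refine ⟨star_mem hT.1, fun g hg => ?_⟩
  rw [coef_star, coef_eq_zero hT, map_zero]
  simpa using hg

theorem mul_mem_subgroupVN {H : Subgroup Λ} {S T : Ell2 Λ →L[ℂ] Ell2 Λ} (hS : S ∈ subgroupVN H)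
    (hT : T ∈ subgroupVN H) : S * T ∈ subgroupVN H := by
  refine ⟨mul_mem hS.1 hT.1, fun g hg => ?_⟩
  rw [coef_mul]
  refine (tsum_congr fun z => ?_).trans tsum_zero
  by_cases hz : z ∈ H
  · rw [coef_eq_zero hS, zero_mul]
    intro h
    exact hg (by simpa using mul_mem h hz)
  · rw [hT.2 z hz, mul_zero]

theorem smul_one_mem_subgroupVN (H : Subgroup Λ) (c : ℂ) :
    c • (1 : Ell2 Λ →L[ℂ] Ell2 Λ) ∈ subgroupVN H := by
  classical
  constructor
  · rw [mem_groupVN]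
    intro g x y
    simp [coef_one]
  · intro g hg
    have : g ≠ 1 := by rintro rfl; exact hg H.one_mem
    simp [coef_one, this]

theorem vNGen_left_subset (H : Subgroup Λ) : vNGen (left '' (H : Set Λ)) ⊆ subgroupVN H := by
  classical
  intro T hT
  refine ⟨mem_groupVN.2 fun g => ?_, fun g hg => ?_⟩
  · refine commute_right_iff.1 (hT _ ?_)
    rintro _ ⟨h, -, rfl⟩
    refine commute_left_iff.2 fun x y => ?_
    rw [coef, coef, right_basis, right_basis, basis_apply, basis_apply]
    simp [mul_assoc]
  · have : proj (H : Set Λ) * T = T * proj (H : Set Λ) := by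
      refine hT _ ?_
      rintro _ ⟨h, hh, rfl⟩
      refine commute_left_iff.2 fun x y => ?_
      rw [← mul_one (proj _), coef_proj_mul, coef_proj_mul, coef_one, coef_one]
      have : h * x ∈ H ↔ x ∈ H := H.mul_mem_cancel_left hh
      simp [this]
    have h2 := congrArg (fun S => coef S g 1) this
    simp only [coef_proj_mul, coef_mul_proj] at h2
    simpa [hg, H.one_mem] using h2.symm

theorem subgroupVN_eq (H : Subgroup Λ) : subgroupVN H = vNGen (left '' (H : Set Λ)) := by
  refine Set.Subset.antisymm (fun T hT S hS => ?_) (vNGen_left_subset H)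
  have hS' : ∀ h ∈ H, ∀ x y, coef S (h * x) (h * y) = coef S x y := fun h hh =>
    commute_left_iff.1 (hS _ ⟨h, hh, rfl⟩)
  refine coef_ext fun k g => ?_
  rw [coef_mul, coef_mul, ← (Equiv.mulRight g).tsum_eq,
    ← ((Equiv.inv Λ).trans (Equiv.mulRight k)).tsum_eq (fun z => coef T k z * coef S z g)]
  refine tsum_congr fun h => ?_
  simp only [Equiv.coe_mulRight, Equiv.trans_apply, Equiv.inv_apply]
  rw [coef_eq hT.1 (h * g) g, coef_eq hT.1 k]
  by_cases hh : h ∈ H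
  · rw [← hS' h hh (h⁻¹ * k) g, mul_inv_cancel_left, mul_comm]
    simp
  · simp [hT.2 h hh]

theorem subgroupVN_mono {H K : Subgroup Λ} (h : H ≤ K) : subgroupVN H ⊆ subgroupVN K :=
  fun _ hT => ⟨hT.1, fun g hg => hT.2 g fun hg' => hg (h hg')⟩

theorem subgroupVN_injective : Function.Injective (subgroupVN (Λ := Λ)) := fun H K h => by
  ext g
  rw [← left_mem_subgroupVN, h, left_mem_subgroupVN]

theorem vNGen_subgroupVN (H : Subgroup Λ) : vNGen (subgroupVN H) = subgroupVN H := by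
  rw [subgroupVN_eq, vNGen_vNGen]

theorem vNGen_iUnion_subgroupVN {ι : Type*} (K : ι → Subgroup Λ) (H : Subgroup Λ)
    (hH : ∀ g, g ∈ H ↔ ∃ i, g ∈ K i) : vNGen (⋃ i, subgroupVN (K i)) = subgroupVN H := by
  refine Set.Subset.antisymm ?_ ?_
  · rw [← vNGen_subgroupVN H]
    exact vNGen_mono (Set.iUnion_subset fun i => subgroupVN_mono fun g hg => (hH g).2 ⟨i, hg⟩)
  · rw [subgroupVN_eq]
    refine vNGen_mono ?_
    rintro _ ⟨g, hg, rfl⟩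
    obtain ⟨i, hi⟩ := (hH g).1 hg
    exact Set.mem_iUnion.2 ⟨i, left_mem_subgroupVN.2 hi⟩

theorem coef_conj {T : Ell2 Λ →L[ℂ] Ell2 Λ} {h : Λ} (hl : Commute (left h) T)
    (hr : Commute (right h) T) (x : Λ) : coef T (h * x * h⁻¹) 1 = coef T x 1 := by
  rw [← commute_right_iff.1 hr (h * x * h⁻¹) 1, inv_mul_cancel_right, one_mul,
    ← commute_left_iff.1 hl x 1, mul_one]

theorem coef_eq_zero_of_infinite_conjOrbit {H : Subgroup Λ} {T : Ell2 Λ →L[ℂ] Ell2 Λ}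
    (hl : ∀ h ∈ H, Commute (left h) T) (hr : ∀ h ∈ H, Commute (right h) T) {g : Λ}
    (hg : (conjOrbit H g).Infinite) : coef T g 1 = 0 := by
  refine eq_zero_of_eqOn_infinite (T (basis 1)) hg ?_
  rintro _ ⟨h, hh, rfl⟩
  exact coef_conj (hl h hh) (hr h hh) g

theorem centralizer_subgroupVN (H : Subgroup Λ) :
    Set.centralizer (subgroupVN H) = Set.centralizer (left '' (H : Set Λ)) := by
  rw [subgroupVN_eq, vNGen, Set.centralizer_centralizer_centralizer]

theorem coef_eq_zero_of_mem_centralizer {H : Subgroup Λ} {T : Ell2 Λ →L[ℂ] Ell2 Λ}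
    (hT : T ∈ groupVN Λ) (hc : T ∈ Set.centralizer (subgroupVN H)) {g : Λ}
    (hg : (conjOrbit H g).Infinite) : coef T g 1 = 0 :=
  coef_eq_zero_of_infinite_conjOrbit (fun _ hh => hc _ (left_mem_subgroupVN.2 hh))
    (fun h _ => commute_right hT h) hg

theorem subgroupVN_subset_centralizer {H : Subgroup Λ} (hH : ∀ g ∈ H, ∀ h ∈ H, g * h = h * g) :
    subgroupVN H ⊆ Set.centralizer (subgroupVN H) := by
  rw [centralizer_subgroupVN, subgroupVN_eq]
  refine Set.centralizer_subset ?_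
  rintro _ ⟨g, hg, rfl⟩ _ ⟨h, hh, rfl⟩
  rw [← left_mul, ← left_mul, hH g hg h hh]

theorem centralizer_inter_groupVN {H : Subgroup Λ} (hcomm : ∀ g ∈ H, ∀ h ∈ H, g * h = h * g)
    (hinf : ∀ g ∉ H, (conjOrbit H g).Infinite) :
    Set.centralizer (subgroupVN H) ∩ (groupVN Λ : Set _) = subgroupVN H :=
  Set.Subset.antisymm
    (fun _ hT => ⟨hT.2, fun g hg => coef_eq_zero_of_mem_centralizer hT.2 hT.1 (hinf g hg)⟩)
    (fun _ hT => ⟨subgroupVN_subset_centralizer hcomm hT, hT.1⟩)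

theorem eq_smul_one {T : Ell2 Λ →L[ℂ] Ell2 Λ} (hT : T ∈ groupVN Λ)
    (h : ∀ g, g ≠ 1 → coef T g 1 = 0) : T = coef T 1 1 • (1 : Ell2 Λ →L[ℂ] Ell2 Λ) := by
  classical
  refine coef_ext fun x y => ?_
  rw [coef_smul, coef_one, coef_eq hT]
  by_cases hxy : x = y
  · simp [hxy]
  · rw [h _ (by rwa [Ne, mul_inv_eq_one]), if_neg hxy, mul_zero]

theorem isFactorSet_subgroupVN {H : Subgroup Λ} (hH : IsRelICC H) :
    IsFactorSet (subgroupVN H) := by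
  refine Set.Subset.antisymm (fun T hT => ⟨coef T 1 1, ?_⟩) ?_
  · exact (eq_smul_one hT.1.1 fun g hg =>
      coef_eq_zero_of_mem_centralizer hT.1.1 hT.2 (hH g hg)).symm
  · rintro _ ⟨c, rfl⟩
    exact ⟨smul_one_mem_subgroupVN H c, fun S _ => by simp⟩

theorem coef_mul_star_eq_coef_star_mul {v : Ell2 Λ →L[ℂ] Ell2 Λ} (hv : v ∈ groupVN Λ) :
    coef (v * star v) 1 1 = coef (star v * v) 1 1 := by
  rw [coef_mul, coef_mul, ← (Equiv.inv Λ).tsum_eq]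
  refine tsum_congr fun z => ?_
  rw [coef_star, coef_star, coef_eq hv 1]
  simp [mul_comm]

theorem eq_zero_of_coef_star_mul_self_eq_zero {q : Ell2 Λ →L[ℂ] Ell2 Λ} (hq : q ∈ groupVN Λ)
    (h : coef (star q * q) 1 1 = 0) : q = 0 := by
  have hq1 : q (basis 1) = 0 := by
    rwa [coef_eq_inner, mul_apply_eq_comp, ContinuousLinearMap.star_eq_adjoint,
      ContinuousLinearMap.adjoint_inner_right, inner_self_eq_zero] at h
  refine coef_ext fun x y => ?_
  rw [coef_eq hq, coef, hq1]
  rfl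

theorem mul_star_eq_one_of_star_mul_eq_one {v : Ell2 Λ →L[ℂ] Ell2 Λ} (hv : v ∈ groupVN Λ)
    (h : star v * v = 1) : v * star v = 1 := by
  set q : Ell2 Λ →L[ℂ] Ell2 Λ := 1 - v * star v with hq
  have hqmem : q ∈ groupVN Λ := sub_mem (one_mem _) (mul_mem hv (star_mem hv))
  have hqq : star q * q = q := by
    have hidem : v * star v * (v * star v) = v * star v := by
      rw [mul_assoc, ← mul_assoc (star v), h, one_mul]
    simp only [hq, star_sub, star_one, star_mul, star_star, mul_sub, sub_mul, hidem, one_mul,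
      mul_one, sub_self, sub_zero]
  have htrace : coef (star q * q) 1 1 = 0 := by
    rw [hqq, hq, coef_sub, coef_mul_star_eq_coef_star_mul hv, h, sub_self]
  exact (sub_eq_zero.1 (eq_zero_of_coef_star_mul_self_eq_zero hqmem htrace)).symm

theorem linearIndependent_left : LinearIndependent ℂ (left : Λ → Ell2 Λ →L[ℂ] Ell2 Λ) := by
  classical
  refine linearIndependent_iff'.2 fun t c h g hg => ?_
  have hcoef := congrArg (fun T => coef T g 1) h
  simpa [coef_eq_inner, inner_sum, inner_smul_right, left_basis, inner_basis_left, basis_apply, hg]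
    using hcoef

theorem not_groupVN_subset_span_finset [Infinite Λ] :
    ¬ ∃ s : Finset (Ell2 Λ →L[ℂ] Ell2 Λ), (groupVN Λ : Set (Ell2 Λ →L[ℂ] Ell2 Λ)) ⊆
      (Submodule.span ℂ (s : Set (Ell2 Λ →L[ℂ] Ell2 Λ)) : Set (Ell2 Λ →L[ℂ] Ell2 Λ)) := by
  rintro ⟨s, hs⟩
  have hind : LinearIndependent ℂ (fun g : Λ =>
      (⟨left g, hs (left_mem_groupVN g)⟩ : Submodule.span ℂ (s : Set (Ell2 Λ →L[ℂ] Ell2 Λ)))) :=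
    LinearIndependent.of_comp (Submodule.subtype _) linearIndependent_left
  exact not_finite_iff_infinite.2 ‹Infinite Λ› hind.finite

theorem isIIOneFactor_groupVN [Nontrivial Λ] (h : IsRelICC (⊤ : Subgroup Λ)) :
    IsIIOneFactor (groupVN Λ) := by
  have := h.infinite
  refine ⟨?_, fun _ => mul_star_eq_one_of_star_mul_eq_one, not_groupVN_subset_span_finset⟩
  rw [← subgroupVN_top]
  exact isFactorSet_subgroupVN h

/-- The right coset `Hk`. -/
def rightCoset (H : Subgroup Λ) (k : Λ) : Set Λ := {x | x * k⁻¹ ∈ H}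

theorem right_mem_unitary (g : Λ) : right g ∈ unitary (Ell2 Λ →L[ℂ] Ell2 Λ) :=
  permOp_mem_unitary _

theorem mem_rightCoset_self (H : Subgroup Λ) (k : Λ) : k ∈ rightCoset H k := by
  simp [rightCoset, H.one_mem]

theorem commute_proj_rightCoset {H : Subgroup Λ} {T : Ell2 Λ →L[ℂ] Ell2 Λ}
    (hT : T ∈ subgroupVN H) (k : Λ) : Commute T (proj (rightCoset H k)) := by
  classical
  refine coef_ext fun x y => ?_
  rw [coef_proj_mul, coef_mul_proj]
  by_cases hxy : x * y⁻¹ ∈ H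
  · have hiff : x ∈ rightCoset H k ↔ y ∈ rightCoset H k := by
      have e : x * k⁻¹ = x * y⁻¹ * (y * k⁻¹) := by group
      rw [rightCoset, Set.mem_ofPred_eq, Set.mem_ofPred_eq, e, H.mul_mem_cancel_left hxy]
    simp [hiff]
  · simp [coef_eq_zero hT hxy]

theorem proj_mul_right (H : Subgroup Λ) (k g : Λ) :
    proj (rightCoset H k) * right g = right g * proj (rightCoset H (k * g⁻¹)) := by
  classical
  ext ξ x
  simp only [mul_apply_eq_comp, proj_apply, right_apply, Set.indicator_apply, rightCoset,
    Set.mem_ofPred_eq]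
  congr 2
  group

theorem rightCoset_mul (H : Subgroup Λ) {h : Λ} (hh : h ∈ H) (k : Λ) :
    rightCoset H (h * k) = rightCoset H k := by
  ext x
  simp only [rightCoset, Set.mem_ofPred_eq, mul_inv_rev, ← mul_assoc]
  exact H.mul_mem_cancel_right (H.inv_mem hh)

theorem disjoint_rightCoset {H : Subgroup Λ} {k l : Λ} (h : k * l⁻¹ ∉ H) :
    Disjoint (rightCoset H k) (rightCoset H l) := by
  refine Set.disjoint_left.2 fun x hx hy => h ?_
  have := H.mul_mem (H.inv_mem hx) hy
  simpa [mul_assoc] using this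

section Normalizer

variable {H : Subgroup Λ} {u : Ell2 Λ →L[ℂ] Ell2 Λ}

theorem conj_left_mem (hu : u ∈ normSet (groupVN Λ) (subgroupVN H)) {h : Λ} (hh : h ∈ H) :
    u * left h * star u ∈ subgroupVN H :=
  (conj_mem_iff_of_mem_normSet hu).2 (left_mem_subgroupVN.2 hh)

theorem apply_left_basis_one (hu : u ∈ groupVN Λ) (h : Λ) :
    (u * left h) (basis 1) = right h (u (basis 1)) := by
  rw [← mul_apply_eq_comp, (commute_right hu h).eq, mul_apply_eq_comp, mul_apply_eq_comp,
    left_basis, right_basis, mul_one, one_mul]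

theorem right_proj_rightCoset_mul (hu : u ∈ normSet (groupVN Λ) (subgroupVN H)) {h : Λ}
    (hh : h ∈ H) (k : Λ) :
    right h⁻¹ (proj (rightCoset H (k * h)) (u (basis 1))) =
      (u * left h⁻¹ * star u) (proj (rightCoset H k) (u (basis 1))) := by
  have hproj := proj_mul_right H k h⁻¹
  rw [inv_inv] at hproj
  have hcancel : u * left h⁻¹ * star u * u = u * left h⁻¹ := by
    rw [mul_assoc, Unitary.star_mul_self_of_mem hu.2.1, mul_one]
  calc right h⁻¹ (proj (rightCoset H (k * h)) (u (basis 1)))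
      = proj (rightCoset H k) (right h⁻¹ (u (basis 1))) := by
        rw [← mul_apply_eq_comp, ← hproj, mul_apply_eq_comp]
    _ = (proj (rightCoset H k) * (u * left h⁻¹ * star u * u)) (basis 1) := by
        rw [← apply_left_basis_one hu.1, hcancel]
        rfl
    _ = (u * left h⁻¹ * star u) (proj (rightCoset H k) (u (basis 1))) := by
        rw [← mul_assoc, ← (commute_proj_rightCoset (conj_left_mem hu (inv_mem hh)) k).eq]
        rfl

theorem norm_proj_rightCoset_mul (hu : u ∈ normSet (groupVN Λ) (subgroupVN H)) {h : Λ}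
    (hh : h ∈ H) (k : Λ) :
    ‖proj (rightCoset H (k * h)) (u (basis 1))‖ = ‖proj (rightCoset H k) (u (basis 1))‖ := by
  have hconj : u * left h⁻¹ * star u ∈ unitary (Ell2 Λ →L[ℂ] Ell2 Λ) :=
    mul_mem (mul_mem hu.2.1 (left_mem_unitary _)) (Unitary.star_mem hu.2.1)
  rw [← ContinuousLinearMap.norm_map_of_mem_unitary (right_mem_unitary h⁻¹),
    right_proj_rightCoset_mul hu hh, ContinuousLinearMap.norm_map_of_mem_unitary hconj]

theorem proj_rightCoset_apply_eq_zero (hu : u ∈ normSet (groupVN Λ) (subgroupVN H)) {k : Λ}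
    {h : ℕ → Λ} (hH : ∀ i, h i ∈ H) (hk : ∀ i j, i ≠ j → k * h i * (h j)⁻¹ * k⁻¹ ∉ H) :
    proj (rightCoset H k) (u (basis 1)) = 0 := by
  set ξ := u (basis 1) with hξ
  have hdisj : Pairwise fun i j =>
      Disjoint (rightCoset H (k * h i)) (rightCoset H (k * h j)) := fun i j hij =>
    disjoint_rightCoset (by simpa [mul_assoc] using hk i j hij)
  have hsum : ∀ N : ℕ, N * ‖proj (rightCoset H k) ξ‖ ^ 2 ≤ ‖ξ‖ ^ 2 := fun N => by
    have hle := sum_norm_proj_sq_le (Finset.range N) _ hdisj ξ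
    simpa only [hξ, norm_proj_rightCoset_mul hu (hH _), Finset.sum_const, Finset.card_range,
      nsmul_eq_mul] using hle
  by_contra hne
  have hpos : 0 < ‖proj (rightCoset H k) ξ‖ ^ 2 := pow_pos (norm_pos_iff.2 hne) 2
  obtain ⟨N, hN⟩ := exists_nat_gt (‖ξ‖ ^ 2 / ‖proj (rightCoset H k) ξ‖ ^ 2)
  rw [div_lt_iff₀ hpos] at hN
  exact absurd (hsum N) (not_le.2 hN)

theorem coef_eq_zero_of_mem_normSet (hu : u ∈ normSet (groupVN Λ) (subgroupVN H)) {k : Λ}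
    {h : ℕ → Λ} (hH : ∀ i, h i ∈ H) (hk : ∀ i j, i ≠ j → k * h i * (h j)⁻¹ * k⁻¹ ∉ H) :
    coef u k 1 = 0 := by
  have hval : proj (rightCoset H k) (u (basis 1)) k = u (basis 1) k := by
    rw [proj_apply, Set.indicator_of_mem (mem_rightCoset_self H k)]
  rw [coef, ← hval, proj_rightCoset_apply_eq_zero hu hH hk]
  rfl

theorem finite_rightCosets_of_coef_ne_zero (hu : u ∈ normSet (groupVN Λ) (subgroupVN H)) {k : Λ}
    (hk : coef u k 1 ≠ 0) : ((fun h => rightCoset H (k * h)) '' (H : Set Λ)).Finite := by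
  by_contra hinf
  choose h hh he using fun i => (Set.Infinite.natEmbedding _ hinf i).2
  refine hk (coef_eq_zero_of_mem_normSet hu hh fun i j hij hmem => hij ?_)
  apply (Set.Infinite.natEmbedding _ hinf).injective
  rw [← Subtype.coe_inj, ← he, ← he]
  have hfactor : k * h i = k * h i * (h j)⁻¹ * k⁻¹ * (k * h j) := by group
  simp only
  rw [hfactor, rightCoset_mul H hmem]

theorem infinite_conjOrbit_inf_comap_conj {k : Λ}
    (hfin : ((fun h => rightCoset H (k * h)) '' (H : Set Λ)).Finite) {x : Λ}
    (hx : (conjOrbit H x).Infinite) :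
    (conjOrbit (H ⊓ H.comap (MulAut.conj k).toMonoidHom) x).Infinite := by
  intro hf
  refine hx ?_
  obtain ⟨t, htH, hbij⟩ := Set.exists_subset_bijOn (H : Set Λ) fun h => rightCoset H (k * h)
  have htf : t.Finite := Set.Finite.of_finite_image (hbij.image_eq ▸ hfin) hbij.injOn
  refine ((htf.prod hf).image fun p : Λ × Λ => p.1⁻¹ * p.2 * p.1).subset ?_
  rintro _ ⟨h, hh, rfl⟩
  obtain ⟨s, hs, hsh⟩ : rightCoset H (k * h⁻¹) ∈ (fun h => rightCoset H (k * h)) '' t :=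
    hbij.image_eq ▸ ⟨h⁻¹, H.inv_mem hh, rfl⟩
  have hmem : k * h⁻¹ * (k * s)⁻¹ ∈ H := by
    have hself := mem_rightCoset_self H (k * h⁻¹)
    rwa [← hsh] at hself
  refine ⟨(s, (s * h) * x * (s * h)⁻¹), ⟨hs, s * h, ⟨H.mul_mem (htH hs) hh, ?_⟩, rfl⟩, ?_⟩
  · simpa [mul_assoc] using H.inv_mem hmem
  · simp [mul_assoc]

theorem commute_left_conj_proj (hu : u ∈ normSet (groupVN Λ) (subgroupVN H)) {h : Λ}
    (hh : h ∈ H) (k : Λ) : Commute (left h) (star u * proj (rightCoset H k) * u) :=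
  commute_conj_star_of_commute_conj hu.2.1 (commute_proj_rightCoset (conj_left_mem hu hh) k)

theorem commute_right_conj_proj (hu : u ∈ groupVN Λ) {h k : Λ} (hh : k * h * k⁻¹ ∈ H) :
    Commute (right h) (star u * proj (rightCoset H k) * u) := by
  have hcoset : rightCoset H (k * h⁻¹) = rightCoset H k := by
    have hfactor : k * h⁻¹ = k * h⁻¹ * k⁻¹ * k := by group
    rw [hfactor, rightCoset_mul]
    simpa [mul_assoc] using H.inv_mem hh
  have hproj : Commute (right h) (proj (rightCoset H k)) := by
    rw [commute_iff_eq, proj_mul_right, hcoset]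
  exact ((commute_right (star_mem hu) h).mul_right hproj).mul_right (commute_right hu h)

theorem proj_rightCoset_apply_eq_smul (hH : IsRelICC H)
    (hu : u ∈ normSet (groupVN Λ) (subgroupVN H)) {k : Λ} (hk : coef u k 1 ≠ 0) :
    ∃ c : ℂ, proj (rightCoset H k) (u (basis 1)) = c • u (basis 1) := by
  set Q := star u * proj (rightCoset H k) * u with hQ
  have hQcoef : ∀ x ≠ 1, coef Q x 1 = 0 := fun x hx =>
    coef_eq_zero_of_infinite_conjOrbit (H := H ⊓ H.comap (MulAut.conj k).toMonoidHom)
      (fun _ hh => commute_left_conj_proj hu hh.1 k)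
      (fun _ hh => commute_right_conj_proj hu.1 hh.2)
      (infinite_conjOrbit_inf_comap_conj (finite_rightCosets_of_coef_ne_zero hu hk) (hH x hx))
  refine ⟨coef Q 1 1, ?_⟩
  rw [← map_smul, ← apply_basis_eq_smul_of_coef_eq_zero hQcoef, ← mul_apply_eq_comp u, hQ,
    ← mul_assoc, ← mul_assoc, Unitary.mul_star_self_of_mem hu.2.1, one_mul, mul_apply_eq_comp]

-- The projection of `u δ₁` to the coset `Hk` is a scalar multiple of `u δ₁` that is nonzero at `k`.
theorem mem_rightCoset_of_mem_normSet (hH : IsRelICC H)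
    (hu : u ∈ normSet (groupVN Λ) (subgroupVN H)) {k : Λ} (hk : coef u k 1 ≠ 0) {l : Λ}
    (hl : coef u l 1 ≠ 0) : l ∈ rightCoset H k := by
  obtain ⟨c, hc⟩ := proj_rightCoset_apply_eq_smul hH hu hk
  have hval : ∀ x, (rightCoset H k).indicator (u (basis 1)) x = c * coef u x 1 := fun x =>
    congrArg (fun ξ : Ell2 Λ => ξ x) hc
  by_contra hlk
  have hc0 : c = 0 := by
    have := hval l
    rw [Set.indicator_of_notMem hlk, eq_comm, mul_eq_zero] at this
    exact this.resolve_right hl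
  have := hval k
  rw [Set.indicator_of_mem (mem_rightCoset_self H k), hc0, zero_mul] at this
  exact hk this

theorem conj_mem_subgroupVN {k : Λ} (hk : k ∈ Subgroup.normalizer (H : Set Λ))
    {x : Ell2 Λ →L[ℂ] Ell2 Λ} (hx : x ∈ subgroupVN H) :
    left k * x * star (left k) ∈ subgroupVN H := by
  refine ⟨mul_mem (mul_mem (left_mem_groupVN k) hx.1) (star_mem (left_mem_groupVN k)), ?_⟩
  intro g hg
  rw [star_left, coef_mul_left, coef_left_mul, coef_eq_zero hx]
  intro hmem
  apply hg
  simpa using (Subgroup.mem_normalizer_iff'.1 hk (k⁻¹ * g)).1 (by simpa using hmem)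

theorem left_mem_normSet {k : Λ} (hk : k ∈ Subgroup.normalizer (H : Set Λ)) :
    left k ∈ normSet (groupVN Λ) (subgroupVN H) := by
  refine ⟨left_mem_groupVN k, left_mem_unitary k, Set.Subset.antisymm ?_ fun x hx => ?_⟩
  · rintro _ ⟨y, hy, rfl⟩
    exact conj_mem_subgroupVN hk hy
  · refine ⟨_, conj_mem_subgroupVN (inv_mem hk) hx, ?_⟩
    simp only [star_left, inv_inv]
    calc left k * (left k⁻¹ * x * left k) * left k⁻¹
        = (left k * left k⁻¹) * x * (left k * left k⁻¹) := by simp only [mul_assoc]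
      _ = x := by rw [← left_mul, mul_inv_cancel, left_one, one_mul, mul_one]

theorem mem_normSet_of_mem_subgroupVN {w : Ell2 Λ →L[ℂ] Ell2 Λ} (hw : w ∈ subgroupVN H)
    (hwu : w ∈ unitary (Ell2 Λ →L[ℂ] Ell2 Λ)) : w ∈ normSet (groupVN Λ) (subgroupVN H) := by
  refine ⟨hw.1, hwu, Set.Subset.antisymm ?_ fun x hx => ?_⟩
  · rintro _ ⟨y, hy, rfl⟩
    exact mul_mem_subgroupVN (mul_mem_subgroupVN hw hy) (star_mem_subgroupVN hw)
  · refine ⟨star w * x * w, mul_mem_subgroupVN (mul_mem_subgroupVN (star_mem_subgroupVN hw) hx) hw,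
      ?_⟩
    calc w * (star w * x * w) * star w = (w * star w) * x * (w * star w) := by
          simp only [mul_assoc]
      _ = x := by rw [Unitary.mul_star_self_of_mem hwu, one_mul, mul_one]

theorem mul_left_inv_mem_subgroupVN (hH : IsRelICC H)
    (hu : u ∈ normSet (groupVN Λ) (subgroupVN H)) {k : Λ} (hk : coef u k 1 ≠ 0) :
    u * left k⁻¹ ∈ subgroupVN H := by
  refine ⟨mul_mem hu.1 (left_mem_groupVN _), fun g hg => ?_⟩
  by_contra hne
  rw [coef_mul_left, mul_one, coef_eq hu.1, inv_inv] at hne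
  have hmem := mem_rightCoset_of_mem_normSet hH hu hk hne
  exact hg (by simpa [rightCoset] using hmem)

theorem mem_normalizer_of_coef_ne_zero (hH : IsRelICC H)
    (hu : u ∈ normSet (groupVN Λ) (subgroupVN H)) {k : Λ} (hk : coef u k 1 ≠ 0) :
    k ∈ Subgroup.normalizer (H : Set Λ) := by
  have hw := mul_left_inv_mem_subgroupVN hH hu hk
  have hwu : u * left k⁻¹ ∈ unitary (Ell2 Λ →L[ℂ] Ell2 Λ) :=
    mul_mem hu.2.1 (left_mem_unitary _)
  rw [Subgroup.mem_normalizer_iff]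
  intro g
  have hconj : u * left k⁻¹ * left (k * g * k⁻¹) * star (u * left k⁻¹) = u * left g * star u := by
    rw [star_mul, star_left, inv_inv, mul_assoc u, ← left_mul, mul_assoc u, ← mul_assoc (left _),
      ← left_mul, ← mul_assoc]
    group
  rw [← left_mem_subgroupVN, ← conj_mem_iff_of_mem_normSet hu, ← hconj,
    conj_mem_iff_of_mem_normSet (mem_normSet_of_mem_subgroupVN hw hwu), left_mem_subgroupVN]

end Normalizer

theorem vNGen_normSet_of_le {H K : Subgroup Λ} (hK : K ≤ Subgroup.normalizer (H : Set Λ))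
    (h : ∀ u ∈ normSet (groupVN Λ) (subgroupVN H), ∀ k ∉ K, coef u k 1 = 0) :
    vNGen (normSet (groupVN Λ) (subgroupVN H)) = subgroupVN K := by
  refine Set.Subset.antisymm ?_ ?_
  · rw [← vNGen_subgroupVN K]
    exact vNGen_mono fun u hu => ⟨hu.1, h u hu⟩
  · rw [subgroupVN_eq]
    refine vNGen_mono ?_
    rintro _ ⟨g, hg, rfl⟩
    exact left_mem_normSet (hK hg)

theorem vNGen_normSet {H : Subgroup Λ} (hH : IsRelICC H) :
    vNGen (normSet (groupVN Λ) (subgroupVN H)) = subgroupVN (Subgroup.normalizer (H : Set Λ)) :=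
  vNGen_normSet_of_le le_rfl fun _ hu _ hk => by
    by_contra hne
    exact hk (mem_normalizer_of_coef_ne_zero hH hu hne)

open Classical in
/-- The quotient map on the unitary normalizer of `L(H)` induced by a homomorphism `ψ` on the
normalizer `K` of `H` with kernel `H`: such a unitary is supported on a single coset of `H`, at any
point of which `ψ` may be evaluated. The value `1` is junk. -/
def normSetMap {Q : Type*} [Group Q] (K : Subgroup Λ) (ψ : K →* Q) (u : Ell2 Λ →L[ℂ] Ell2 Λ) : Q :=
  if h : ∃ k : K, coef u k 1 ≠ 0 then ψ h.choose else 1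

section NormSetMap

variable {Q : Type*} [Group Q] {H K : Subgroup Λ} {ψ : K →* Q} (hH : IsRelICC H)
  (hK : Subgroup.normalizer (H : Set Λ) = K) (hψ : ∀ k : K, ψ k = 1 ↔ (k : Λ) ∈ H)
include hH hψ

theorem normSetMap_eq {u : Ell2 Λ →L[ℂ] Ell2 Λ} (hu : u ∈ normSet (groupVN Λ) (subgroupVN H))
    {k : K} (hk : coef u k 1 ≠ 0) : normSetMap K ψ u = ψ k := by
  have h : ∃ k : K, coef u k 1 ≠ 0 := ⟨k, hk⟩
  rw [normSetMap, dif_pos h]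
  rw [← mul_inv_eq_one, ← map_inv, ← map_mul, hψ]
  exact mem_rightCoset_of_mem_normSet hH hu hk h.choose_spec

omit hψ in
include hK in
theorem exists_coef_ne_zero_of_normSet {u : Ell2 Λ →L[ℂ] Ell2 Λ}
    (hu : u ∈ normSet (groupVN Λ) (subgroupVN H)) : ∃ k : K, coef u k 1 ≠ 0 := by
  obtain ⟨k, hk⟩ := exists_coef_ne_zero hu.2.1 1
  exact ⟨⟨k, hK ▸ mem_normalizer_of_coef_ne_zero hH hu hk⟩, hk⟩

include hK in
theorem normSetMap_mul {u v : Ell2 Λ →L[ℂ] Ell2 Λ}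
    (hu : u ∈ normSet (groupVN Λ) (subgroupVN H)) (hv : v ∈ normSet (groupVN Λ) (subgroupVN H)) :
    normSetMap K ψ (u * v) = normSetMap K ψ u * normSetMap K ψ v := by
  have huv := mul_mem_normSet hu hv
  obtain ⟨m, hm⟩ := exists_coef_ne_zero_of_normSet hH hK huv
  obtain ⟨z, hz⟩ : ∃ z, coef u m z * coef v z 1 ≠ 0 := by
    by_contra! h
    rw [coef_mul, tsum_congr h, tsum_zero] at hm
    exact hm rfl
  have huz : coef u (m * z⁻¹) 1 ≠ 0 := coef_eq hu.1 m z ▸ left_ne_zero_of_mul hz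
  have hvz : coef v z 1 ≠ 0 := right_ne_zero_of_mul hz
  have hzK : z ∈ K := hK ▸ mem_normalizer_of_coef_ne_zero hH hv hvz
  rw [normSetMap_eq hH hψ huv hm, normSetMap_eq hH hψ hv (k := ⟨z, hzK⟩) hvz,
    normSetMap_eq hH hψ hu (k := m * ⟨z, hzK⟩⁻¹) huz, ← map_mul, inv_mul_cancel_right]

include hK in
theorem normSetMap_eq_one_iff {u : Ell2 Λ →L[ℂ] Ell2 Λ}
    (hu : u ∈ normSet (groupVN Λ) (subgroupVN H)) : normSetMap K ψ u = 1 ↔ u ∈ subgroupVN H := by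
  obtain ⟨m, hm⟩ := exists_coef_ne_zero_of_normSet hH hK hu
  rw [normSetMap_eq hH hψ hu hm, hψ]
  constructor
  · intro hmH
    refine ⟨hu.1, fun g hg => ?_⟩
    by_contra hne
    exact hg (by simpa using H.mul_mem (mem_rightCoset_of_mem_normSet hH hu hm hne) hmH)
  · intro h
    by_contra hmH
    exact hm (h.2 _ hmH)

include hK in
theorem exists_normSetMap_eq (hsurj : Function.Surjective ψ) (q : Q) :
    ∃ u ∈ normSet (groupVN Λ) (subgroupVN H), normSetMap K ψ u = q := by
  classical
  obtain ⟨k, rfl⟩ := hsurj q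
  have hk : left (k : Λ) ∈ normSet (groupVN Λ) (subgroupVN H) :=
    left_mem_normSet (by rw [hK]; exact k.2)
  exact ⟨_, hk, normSetMap_eq hH hψ hk (by simp [coef_left])⟩

end NormSetMap

end GroupVN

/-- A tower of subgroups of `Λ`, indexed by ordinals up to `α`, whose von Neumann algebras are the
normalizer tower of the masa `L(group 0)` of `L(Λ)`. The bottom step `group 0 ≤ group 1` is
singled out, since a masa does not come from a relatively ICC subgroup. -/
structure SubgroupTower (α : Ordinal) (G : Ordinal → Type*) [∀ β, Group (G β)]
    (Λ : Type*) [Group Λ] where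
  group : Ordinal → Subgroup Λ
  comm : ∀ g ∈ group 0, ∀ h ∈ group 0, g * h = h * g
  infinite_conjOrbit_zero : ∀ g ∉ group 0, (conjOrbit (group 0) g).Infinite
  one_le_normalizer : group 1 ≤ Subgroup.normalizer (group 0 : Set Λ)
  exists_seq : ∀ k ∉ group 1, ∃ h : ℕ → Λ, (∀ i, h i ∈ group 0) ∧
    ∀ i j, i ≠ j → k * h i * (h j)⁻¹ * k⁻¹ ∉ group 0
  zero_ne_one : group 0 ≠ group 1
  isRelICC_one : IsRelICC (group 1)
  one_le : ∀ β, 1 ≤ β → group 1 ≤ group β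
  normalizer_eq : ∀ β, 1 ≤ β → β < α → Subgroup.normalizer (group β : Set Λ) = group (β + 1)
  exists_hom : ∀ β, 1 ≤ β → β < α → ∃ ψ : group (β + 1) →* G β,
    Function.Surjective ψ ∧ ∀ k, ψ k = 1 ↔ (k : Λ) ∈ group β
  limit : ∀ β, Order.IsSuccLimit β → β ≤ α → ∀ g, g ∈ group β ↔ ∃ γ < β, g ∈ group γ
  top : group α = ⊤

section Tower

variable (R : VonNeumannAlgebra 𝓗) (A : Set (𝓗 →L[ℂ] 𝓗))

theorem tower_zero : tower R A 0 = A := Ordinal.limitRecOn_zero ..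

theorem tower_add_one (β : Ordinal) : tower R A (β + 1) = vNGen (normSet R (tower R A β)) :=
  Ordinal.limitRecOn_add_one ..

theorem tower_limit {β : Ordinal} (hβ : Order.IsSuccLimit β) :
    tower R A β = vNGen (⋃ (γ : Ordinal) (_ : γ < β), tower R A γ) :=
  Ordinal.limitRecOn_limit _ _ _ _ hβ

theorem tower_one : tower R A 1 = vNGen (normSet R A) := by
  rw [← zero_add (1 : Ordinal), tower_add_one, tower_zero]

end Tower

namespace SubgroupTower

open GroupVN

variable {α : Ordinal} {G : Ordinal → Type*} [∀ β, Group (G β)] {Λ : Type} [Group Λ]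
  (t : SubgroupTower α G Λ)

theorem isRelICC {β : Ordinal} (hβ : 1 ≤ β) : IsRelICC (t.group β) :=
  t.isRelICC_one.mono (t.one_le β hβ)

include t in
theorem nontrivial : Nontrivial Λ := by
  by_contra h
  rw [not_nontrivial_iff_subsingleton] at h
  exact t.zero_ne_one (Subsingleton.elim _ _)

theorem vNGen_normSet_zero :
    vNGen (normSet (groupVN Λ) (subgroupVN (t.group 0))) = subgroupVN (t.group 1) := by
  refine vNGen_normSet_of_le t.one_le_normalizer fun u hu k hk => ?_
  obtain ⟨h, hh, hk⟩ := t.exists_seq k hk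
  exact coef_eq_zero_of_mem_normSet hu hh hk

theorem vNGen_normSet_group {β : Ordinal} (hβ : β < α) :
    vNGen (normSet (groupVN Λ) (subgroupVN (t.group β))) = subgroupVN (t.group (β + 1)) := by
  rcases eq_zero_or_pos β with rfl | hpos
  · rw [zero_add, t.vNGen_normSet_zero]
  · have h1 : 1 ≤ β := Order.one_le_iff_pos.2 hpos
    rw [vNGen_normSet (t.isRelICC h1), t.normalizer_eq β h1 hβ]

theorem tower_eq {β : Ordinal} (hβ : β ≤ α) :
    tower (groupVN Λ) (subgroupVN (t.group 0)) β = subgroupVN (t.group β) := by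
  induction β using Ordinal.limitRecOn with
  | zero => exact tower_zero _ _
  | add_one β ih =>
    have hlt : β < α := Order.add_one_le_iff.1 hβ
    rw [tower_add_one, ih hlt.le, t.vNGen_normSet_group hlt]
  | limit β hl ih =>
    rw [tower_limit _ _ hl, ← vNGen_iUnion_subgroupVN (fun γ : Set.Iio β => t.group γ) (t.group β)
      (fun g => by simp [t.limit β hl hβ g])]
    congr 1
    ext x
    simp only [Set.mem_iUnion, Subtype.exists, Set.mem_Iio]
    refine exists_congr fun γ => exists_congr fun hγ => ?_
    rw [ih γ hγ (hγ.le.trans hβ)]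

theorem tower_top : tower (groupVN Λ) (subgroupVN (t.group 0)) α = groupVN Λ := by
  rw [t.tower_eq le_rfl, t.top, subgroupVN_top]

theorem group_ne_group_add_one (hG : ∀ β, 1 ≤ β → β < α → Nontrivial (G β)) {β : Ordinal}
    (hβ : β < α) : t.group β ≠ t.group (β + 1) := by
  intro h
  rcases eq_zero_or_pos β with rfl | hpos
  · rw [zero_add] at h
    exact t.zero_ne_one h
  · have h1 : 1 ≤ β := Order.one_le_iff_pos.2 hpos
    have := hG β h1 hβ
    obtain ⟨ψ, hsurj, hker⟩ := t.exists_hom β h1 hβ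
    obtain ⟨g, hg⟩ := exists_ne (1 : G β)
    obtain ⟨k, rfl⟩ := hsurj g
    exact hg ((hker k).2 (by rw [h]; exact k.2))

theorem tower_ne_tower_add_one (hG : ∀ β, 1 ≤ β → β < α → Nontrivial (G β)) {β : Ordinal}
    (hβ : β < α) : tower (groupVN Λ) (subgroupVN (t.group 0)) β ≠
      tower (groupVN Λ) (subgroupVN (t.group 0)) (β + 1) := by
  rw [t.tower_eq hβ.le, t.tower_eq (Order.add_one_le_iff.2 hβ)]
  exact subgroupVN_injective.ne (t.group_ne_group_add_one hG hβ)

theorem isFactorSet_tower_one :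
    IsFactorSet (tower (groupVN Λ) (subgroupVN (t.group 0)) 1) := by
  rw [tower_one, t.vNGen_normSet_zero]
  exact isFactorSet_subgroupVN t.isRelICC_one

theorem tower_one_ne (hα : 1 < α) (hG : ∀ β, 1 ≤ β → β < α → Nontrivial (G β)) :
    tower (groupVN Λ) (subgroupVN (t.group 0)) 1 ≠ (groupVN Λ : Set _) := by
  rw [tower_one, t.vNGen_normSet_zero, ← subgroupVN_top]
  refine subgroupVN_injective.ne fun h => t.group_ne_group_add_one hG hα ?_
  rw [h, eq_comm, eq_top_iff, ← h]
  exact t.one_le _ (by simp)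

include t in
theorem isIIOneFactor : IsIIOneFactor (groupVN Λ) :=
  have := t.nontrivial
  isIIOneFactor_groupVN (t.isRelICC_one.mono le_top)

theorem exists_quotient_map {β : Ordinal} (h1 : 1 ≤ β) (hβ : β < α) :
    ∃ φ : (Ell2 Λ →L[ℂ] Ell2 Λ) → G β,
      (∀ u ∈ normSet (groupVN Λ) (subgroupVN (t.group β)),
        ∀ v ∈ normSet (groupVN Λ) (subgroupVN (t.group β)), φ (u * v) = φ u * φ v) ∧
      (∀ g : G β, ∃ u ∈ normSet (groupVN Λ) (subgroupVN (t.group β)), φ u = g) ∧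
      (∀ u ∈ normSet (groupVN Λ) (subgroupVN (t.group β)),
        (φ u = 1 ↔ u ∈ subgroupVN (t.group β))) := by
  obtain ⟨ψ, hsurj, hker⟩ := t.exists_hom β h1 hβ
  have hH := t.isRelICC h1
  have hK := t.normalizer_eq β h1 hβ
  exact ⟨normSetMap _ ψ, fun u hu v hv => normSetMap_mul hH hK hker hu hv,
    fun q => exists_normSetMap_eq hH hK hker hsurj q,
    fun u hu => normSetMap_eq_one_iff hH hK hker hu⟩

end SubgroupTower

/-! ### Følner sets -/

section Folner

open scoped Pointwise
open Finset

open Classical in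
/-- The elements of `F` which left multiplication by `s` moves out of `F`. -/
def exitSet {Γ : Type*} [Group Γ] (s : Γ) (F : Finset Γ) : Finset Γ := {a ∈ F | s * a ∉ F}

/-- An invariant finitely additive probability measure, as in the definition of amenability. -/
structure IsInvariantMean {Γ : Type*} [Group Γ] (μ : Set Γ → ℝ) : Prop where
  nonneg (s : Set Γ) : 0 ≤ μ s
  univ : μ Set.univ = 1
  union (s t : Set Γ) : s ∩ t = ∅ → μ (s ∪ t) = μ s + μ t
  smul (g : Γ) (s : Set Γ) : μ ((fun x => g * x) '' s) = μ s

section Group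

variable {Γ : Type*} [Group Γ]

theorem isAmenable_iff : IsAmenable Γ ↔ ∃ μ : Set Γ → ℝ, IsInvariantMean μ :=
  ⟨fun ⟨μ, h1, h2, h3, h4⟩ => ⟨μ, h1, h2, h3, h4⟩, fun ⟨μ, h⟩ => ⟨μ, h.1, h.2, h.3, h.4⟩⟩

open Classical in
theorem mem_exitSet {s a : Γ} {F : Finset Γ} : a ∈ exitSet s F ↔ a ∈ F ∧ s * a ∉ F := mem_filter

namespace IsInvariantMean

variable {μ : Set Γ → ℝ} (hμ : IsInvariantMean μ)

include hμ

theorem empty : μ ∅ = 0 := by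
  simpa using hμ.union ∅ ∅ (Set.inter_self _)

theorem mono {s t : Set Γ} (hst : s ⊆ t) : μ s ≤ μ t := by
  have h := hμ.union s (t \ s) (Set.inter_sdiff_self s t)
  rw [Set.union_sdiff_cancel hst] at h
  linarith [hμ.nonneg (t \ s)]

theorem biUnion {ι : Type*} {s : ι → Set Γ} (hs : Pairwise (Function.onFun Disjoint s))
    (L : Finset ι) : μ (⋃ k ∈ L, s k) = ∑ k ∈ L, μ (s k) := by
  classical
  induction L using Finset.induction_on with
  | empty => simp [hμ.empty]
  | insert k L hk ih =>
    rw [set_biUnion_insert, hμ.union, ih, sum_insert hk]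
    rw [← Set.disjoint_iff_inter_eq_empty, Set.disjoint_iUnion₂_right]
    exact fun l hl => hs fun h => hk (h ▸ hl)

theorem range_eq_one {f : Γ → Γ} (hf : Function.Injective f) {L : Finset Γ}
    (hL : ∀ g, f g * g⁻¹ ∈ L) : μ (Set.range f) = 1 := by
  let piece (k : Γ) : Set Γ := {g | f g * g⁻¹ = k}
  have hpiece : Pairwise (Function.onFun Disjoint piece) := fun k l hkl =>
    Set.disjoint_left.2 fun g (hk : _ = k) (hl : _ = l) => hkl (hk.symm.trans hl)
  have himage (k : Γ) : (fun x => k * x) '' piece k = f '' piece k :=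
    Set.image_congr fun g (hg : _ = k) => by rw [← hg, inv_mul_cancel_right]
  have huniv : ⋃ k ∈ L, piece k = Set.univ :=
    Set.eq_univ_of_forall fun g => Set.mem_biUnion (hL g) rfl
  calc μ (Set.range f) = μ (⋃ k ∈ L, f '' piece k) := by
        rw [← Set.image_univ, ← huniv, Set.image_iUnion₂]
    _ = ∑ k ∈ L, μ (f '' piece k) :=
        hμ.biUnion (fun k l hkl => (Set.disjoint_image_iff hf).2 (hpiece hkl)) L
    _ = ∑ k ∈ L, μ (piece k) := sum_congr rfl fun k _ => by rw [← himage, hμ.smul]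
    _ = 1 := by rw [← hμ.biUnion hpiece, huniv, hμ.univ]

end IsInvariantMean

open Classical in
theorem card_add_card_exitSet_le (F S : Finset Γ) {s : Γ} (hs : s ∈ S) :
    #F + #(exitSet s F) ≤ #(insert 1 S * F) := by
  have hdisj : Disjoint F ((exitSet s F).image (s * ·)) := by
    rw [disjoint_right]
    intro x hx
    obtain ⟨a, ha, rfl⟩ := mem_image.1 hx
    exact (mem_exitSet.1 ha).2
  rw [← card_image_of_injective (exitSet s F) (mul_right_injective s),
    ← card_union_of_disjoint hdisj]
  refine card_le_card (union_subset (fun x hx => ?_) (image_subset_iff.2 fun a ha => ?_))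
  · exact mem_mul.2 ⟨1, mem_insert_self _ _, x, hx, one_mul x⟩
  · exact mul_mem_mul (mem_insert_of_mem hs) (mem_exitSet.1 ha).1

open Classical in
theorem pow_mul_card_le {K : Finset Γ} {c : ℝ} (hc : 0 ≤ c)
    (h : ∀ F : Finset Γ, c * #F ≤ #(K * F)) (n : ℕ) (F : Finset Γ) :
    c ^ n * #F ≤ #(K ^ n * F) := by
  induction n with
  | zero => simp
  | succ n ih =>
    calc c ^ (n + 1) * #F = c * (c ^ n * #F) := by ring
      _ ≤ c * #(K ^ n * F) := mul_le_mul_of_nonneg_left ih hc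
      _ ≤ #(K * (K ^ n * F)) := h _
      _ = #(K ^ (n + 1) * F) := by rw [← mul_assoc, ← pow_succ']

open Classical in
theorem exists_injective_of_two_mul_card_le {L : Finset Γ}
    (hL : ∀ F : Finset Γ, 2 * #F ≤ #(L * F)) :
    ∃ f : Γ × Bool → Γ, Function.Injective f ∧ ∀ p, f p * p.1⁻¹ ∈ L := by
  have hall (A : Finset (Γ × Bool)) : #A ≤ #(A.biUnion fun p => L * {p.1}) :=
    calc #A ≤ #(A.image Prod.fst ×ˢ (univ : Finset Bool)) := card_le_card fun p hp =>
          mem_product.2 ⟨mem_image_of_mem _ hp, mem_univ _⟩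
      _ = 2 * #(A.image Prod.fst) := by rw [card_product, card_univ, Fintype.card_bool, mul_comm]
      _ ≤ #(L * A.image Prod.fst) := hL _
      _ ≤ #(A.biUnion fun p => L * {p.1}) := card_le_card fun x hx => by
          obtain ⟨k, hk, g, hg, rfl⟩ := mem_mul.1 hx
          obtain ⟨p, hp, rfl⟩ := mem_image.1 hg
          exact mem_biUnion.2 ⟨p, hp, mul_mem_mul hk (mem_singleton_self _)⟩
  obtain ⟨f, hf, hfL⟩ := (all_card_le_biUnion_card_iff_exists_injective _).1 hall
  refine ⟨f, hf, fun p => ?_⟩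
  obtain ⟨k, hk, x, hx, h⟩ := mem_mul.1 (hfL p)
  rwa [← h, mem_singleton.1 hx, mul_inv_cancel_right]

open Classical in
theorem IsInvariantMean.exists_card_mul_lt {μ : Set Γ → ℝ} (hμ : IsInvariantMean μ)
    (L : Finset Γ) : ∃ F : Finset Γ, #(L * F) < 2 * #F := by
  by_contra! h
  obtain ⟨f, hf, hL⟩ := exists_injective_of_two_mul_card_le h
  have hrange (i : Bool) : μ (Set.range fun g => f (g, i)) = 1 :=
    hμ.range_eq_one (fun g g' e => congrArg Prod.fst (hf e)) fun g => hL (g, i)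
  have hdisj : (Set.range fun g => f (g, true)) ∩ Set.range (fun g => f (g, false)) = ∅ := by
    rw [← Set.disjoint_iff_inter_eq_empty, Set.disjoint_left]
    rintro _ ⟨g, rfl⟩ ⟨g', e⟩
    cases congrArg Prod.snd (hf e)
  have hle := hμ.mono (Set.subset_univ
    ((Set.range fun g => f (g, true)) ∪ Set.range fun g => f (g, false)))
  rw [hμ.union _ _ hdisj, hrange, hrange, hμ.univ] at hle
  norm_num at hle

/-- Without Følner sets finite sets would grow exponentially under multiplication by
`insert 1 S`, and Hall's marriage theorem would turn this into a paradoxical decomposition. -/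
theorem IsAmenable.exists_card_exitSet_le (hΓ : IsAmenable Γ) (S : Finset Γ) {ε : ℝ}
    (hε : 0 < ε) : ∃ F : Finset Γ, F.Nonempty ∧ ∀ s ∈ S, (#(exitSet s F) : ℝ) ≤ ε * #F := by
  classical
  by_contra! hF
  have grow (F : Finset Γ) : (1 + ε) * #F ≤ #(insert 1 S * F) := by
    rcases F.eq_empty_or_nonempty with rfl | hne
    · simp
    obtain ⟨s, hs, hlt⟩ := hF F hne
    have hcard : (#F : ℝ) + #(exitSet s F) ≤ #(insert 1 S * F) :=
      mod_cast card_add_card_exitSet_le F S hs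
    linarith
  obtain ⟨n, hn⟩ := pow_unbounded_of_one_lt 2 (show 1 < 1 + ε by linarith)
  obtain ⟨μ, hμ⟩ := isAmenable_iff.1 hΓ
  obtain ⟨F, hlt⟩ := hμ.exists_card_mul_lt (insert 1 S ^ n)
  have hgrow := pow_mul_card_le (by linarith) grow n F
  have hle : 2 * (#F : ℝ) ≤ (1 + ε) ^ n * #F := mul_le_mul_of_nonneg_right hn.le (by positivity)
  have hlt : (#(insert 1 S ^ n * F) : ℝ) < 2 * #F := mod_cast hlt
  linarith

open Classical in
theorem card_exitSet_mul_le (A B : Finset Γ) (n v : Γ) : #(exitSet (n * v) (A * B)) ≤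
    #(exitSet v A) * #B + ∑ a ∈ A with v * a ∈ A, #(exitSet ((v * a)⁻¹ * n * (v * a)) B) := by
  have hsub : exitSet (n * v) (A * B) ⊆ exitSet v A * B ∪
      {a ∈ A | v * a ∈ A}.biUnion fun a => {a} * exitSet ((v * a)⁻¹ * n * (v * a)) B := by
    intro x hx
    obtain ⟨hx, hexit⟩ := mem_exitSet.1 hx
    obtain ⟨a, ha, b, hb, rfl⟩ := mem_mul.1 hx
    by_cases h : v * a ∈ A
    · refine mem_union_right _ (mem_biUnion.2 ⟨a, mem_filter.2 ⟨ha, h⟩,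
        mul_mem_mul (mem_singleton_self a) (mem_exitSet.2 ⟨hb, fun hB => hexit ?_⟩)⟩)
      convert mul_mem_mul h hB using 1
      group
    · exact mem_union_left _ (mul_mem_mul (mem_exitSet.2 ⟨ha, h⟩) hb)
  refine (card_le_card hsub).trans ((card_union_le _ _).trans
    (add_le_add card_mul_le (card_biUnion_le.trans_eq ?_)))
  simp only [card_singleton_mul]

open Classical in
theorem card_mul_of_inf_eq_bot {N V : Subgroup Γ} (hbot : N ⊓ V = ⊥) {A B : Finset Γ}
    (hA : ∀ a ∈ A, a ∈ V) (hB : ∀ b ∈ B, b ∈ N) : #(A * B) = #A * #B := by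
  rw [card_mul_iff]
  rintro ⟨a, b⟩ hab ⟨a', b'⟩ hab' (e : a * b = a' * b')
  obtain ⟨ha : a ∈ A, hb : b ∈ B⟩ := hab
  obtain ⟨ha' : a' ∈ A, hb' : b' ∈ B⟩ := hab'
  have heq : a'⁻¹ * a = b' * b⁻¹ := by
    rw [inv_mul_eq_iff_eq_mul, ← mul_assoc, ← e, mul_inv_cancel_right]
  have hmem : a'⁻¹ * a ∈ N ⊓ V :=
    ⟨heq ▸ N.mul_mem (hB _ hb') (N.inv_mem (hB _ hb)),
      V.mul_mem (V.inv_mem (hA _ ha')) (hA _ ha)⟩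
  rw [hbot, Subgroup.mem_bot, inv_mul_eq_one] at hmem
  subst hmem
  rw [mul_left_cancel e]

end Group

/-- Følner's condition for the subgroup `N`: it contains almost invariant finite sets. -/
def IsFolner {Γ : Type*} [Group Γ] (N : Subgroup Γ) : Prop :=
  ∀ S : Finset Γ, (∀ s ∈ S, s ∈ N) → ∀ ε : ℝ, 0 < ε → ∃ F : Finset Γ, F.Nonempty ∧
    (∀ a ∈ F, a ∈ N) ∧ ∀ s ∈ S, (#(exitSet s F) : ℝ) ≤ ε * #F

namespace IsFolner

variable {Γ Δ : Type*} [Group Γ] [Group Δ]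

theorem of_isAmenable (h : IsAmenable Γ) : IsFolner (⊤ : Subgroup Γ) := fun S _ _ hε =>
  have ⟨F, hne, hF⟩ := h.exists_card_exitSet_le S hε
  ⟨F, hne, fun _ _ => trivial, hF⟩

theorem map {N : Subgroup Γ} (h : IsFolner N) {φ : Γ →* Δ} (hφ : Function.Injective φ) :
    IsFolner (N.map φ) := fun S hS ε hε => by
  classical
  obtain ⟨F, hne, hFN, hF⟩ := h (S.preimage φ hφ.injOn) (fun s hs => by
    obtain ⟨t, ht, e⟩ := hS _ (mem_preimage.1 hs)
    exact hφ e ▸ ht) ε hε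
  refine ⟨F.image φ, hne.image _, ?_, fun s hs => ?_⟩
  · intro a ha
    obtain ⟨b, hb, rfl⟩ := mem_image.1 ha
    exact ⟨b, hFN b hb, rfl⟩
  · obtain ⟨t, -, rfl⟩ := hS s hs
    have hsub : exitSet (φ t) (F.image φ) ⊆ (exitSet t F).image φ := by
      intro x hx
      obtain ⟨hx, hexit⟩ := mem_exitSet.1 hx
      obtain ⟨a, ha, rfl⟩ := mem_image.1 hx
      refine mem_image_of_mem _ (mem_exitSet.2 ⟨ha, fun h => hexit ?_⟩)
      exact map_mul φ t a ▸ mem_image_of_mem _ h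
    rw [card_image_of_injective _ hφ]
    exact (Nat.cast_le.2 ((card_le_card hsub).trans card_image_le)).trans
      (hF t (mem_preimage.2 hs))

theorem comap {N : Subgroup Δ} (h : IsFolner N) {φ : Γ →* Δ} (hφ : Function.Injective φ)
    (hN : N ≤ φ.range) : IsFolner (N.comap φ) := fun S hS ε hε => by
  classical
  obtain ⟨F, hne, hFN, hF⟩ := h (S.image φ) (by simpa using hS) ε hε
  have himage : (F.preimage φ hφ.injOn).image φ = F :=
    image_preimage_of_bij φ F ⟨fun x hx => hx, hφ.injOn, fun x hx => by
      obtain ⟨t, rfl⟩ := hN (hFN x hx)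
      exact ⟨t, hx, rfl⟩⟩
  refine ⟨F.preimage φ hφ.injOn, ?_, fun a ha => hFN _ (mem_preimage.1 ha), fun s hs => ?_⟩
  · rwa [← image_nonempty (f := φ), himage]
  · have hsub : (exitSet s (F.preimage φ hφ.injOn)).image φ ⊆ exitSet (φ s) F := by
      intro x hx
      obtain ⟨a, ha, rfl⟩ := mem_image.1 hx
      simpa [mem_exitSet] using ha
    rw [← card_image_of_injective (F.preimage φ hφ.injOn) hφ, himage,
      ← card_image_of_injective (exitSet s _) hφ]
    exact (Nat.cast_le.2 (card_le_card hsub)).trans (hF _ (mem_image_of_mem _ hs))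

theorem bot : IsFolner (⊥ : Subgroup Γ) := fun S hS ε hε => by
  refine ⟨{1}, singleton_nonempty 1, by simp, fun s hs => ?_⟩
  obtain rfl : s = 1 := hS s hs
  have h : exitSet (1 : Γ) {1} = ∅ := by simp [exitSet]
  simp [h, hε.le]

/-- If `A ⊆ V` is almost invariant and `B ⊆ N` is almost invariant under the conjugates by `A`
of the `N`-components of `S`, then `A * B` is almost invariant under `S`. -/
theorem sup {N V : Subgroup Γ} (hN : IsFolner N) (hV : IsFolner V)
    (hle : V ≤ Subgroup.normalizer (N : Set Γ)) (hbot : N ⊓ V = ⊥) : IsFolner (N ⊔ V) := by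
  classical
  intro S hS ε hε
  have hdec : ∀ s ∈ S, ∃ n ∈ N, ∃ v ∈ V, n * v = s := fun s hs => by
    have : s ∈ ((N ⊔ V : Subgroup Γ) : Set Γ) := hS s hs
    rw [Subgroup.coe_mul_of_right_le_normalizer_left _ _ hle] at this
    exact Set.mem_mul.1 this
  choose! n hn v hv hnv using hdec
  obtain ⟨A, hAne, hAV, hA⟩ := hV (S.image v) (forall_mem_image.2 hv) (ε / 2) (half_pos hε)
  obtain ⟨B, hBne, hBN, hB⟩ := hN (image₂ (fun b s => b⁻¹ * n s * b) A S)
    (forall_mem_image₂.2 fun b hb t ht =>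
      (Subgroup.mem_normalizer_iff''.1 (hle (hAV b hb)) (n t)).1 (hn t ht)) (ε / 2) (half_pos hε)
  refine ⟨A * B, hAne.mul hBne, fun x hx => ?_, fun s hs => ?_⟩
  · obtain ⟨a, ha, b, hb, rfl⟩ := mem_mul.1 hx
    exact mul_mem (Subgroup.mem_sup_right (hAV _ ha)) (Subgroup.mem_sup_left (hBN _ hb))
  · have hsum : ∑ a ∈ A with v s * a ∈ A, (#(exitSet ((v s * a)⁻¹ * n s * (v s * a)) B) : ℝ) ≤
        #A * (ε / 2 * #B) := by
      refine (sum_le_card_nsmul _ _ (ε / 2 * #B) fun a ha =>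
        hB _ (mem_image₂_of_mem (mem_filter.1 ha).2 hs)).trans ?_
      rw [nsmul_eq_mul]
      gcongr
      exact filter_subset _ _
    calc (#(exitSet s (A * B)) : ℝ)
      _ ≤ #(exitSet (v s) A) * #B +
          ∑ a ∈ A with v s * a ∈ A, (#(exitSet ((v s * a)⁻¹ * n s * (v s * a)) B) : ℝ) := by
        conv_lhs => rw [← hnv s hs]
        exact_mod_cast card_exitSet_mul_le A B (n s) (v s)
      _ ≤ ε / 2 * #A * #B + #A * (ε / 2 * #B) := by
        gcongr
        exact hA _ (mem_image_of_mem _ hs)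
      _ = ε * #(A * B) := by
        rw [card_mul_of_inf_eq_bot hbot hAV hBN, Nat.cast_mul]
        ring

theorem iSup_of_directed {ι : Type*} {N : ι → Subgroup Γ} (h : ∀ i, IsFolner (N i))
    (hd : Directed (· ≤ ·) N) : IsFolner (⨆ i, N i) := by
  rcases isEmpty_or_nonempty ι with hι | hι
  · rw [iSup_of_empty]
    exact bot
  intro S hS ε hε
  obtain ⟨i, hi⟩ := Directed.exists_mem_subset_of_finset_subset_biUnion
    (f := fun i => (N i : Set Γ)) hd (s := S) (by
      rw [← Subgroup.coe_iSup_of_directed hd]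
      exact hS)
  obtain ⟨F, hne, hFN, hF⟩ := h i S hi ε hε
  exact ⟨F, hne, fun a ha => Subgroup.mem_iSup_of_mem i (hFN a ha), hF⟩

theorem iSup_wellOrder {ι : Type*} [LinearOrder ι] [WellFoundedLT ι] {V : ι → Subgroup Γ}
    (hV : ∀ i, IsFolner (V i))
    (hle : ∀ i, V i ≤ Subgroup.normalizer ((⨆ j : Set.Iio i, V j : Subgroup Γ) : Set Γ))
    (hbot : ∀ i, (⨆ j : Set.Iio i, V j) ⊓ V i = ⊥) : IsFolner (⨆ i, V i) := by
  set N : ι → Subgroup Γ := fun i => ⨆ j : Set.Iio i, V j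
  have hmono : ∀ i j, i < j → N i ⊔ V i ≤ N j := by
    intro i j hij
    refine sup_le (iSup_le fun k => ?_) ?_
    · exact le_iSup (fun l : Set.Iio j => V l) ⟨k, lt_trans k.2 hij⟩
    · exact le_iSup (fun l : Set.Iio j => V l) ⟨i, hij⟩
  have hmono_sup : Monotone fun i => N i ⊔ V i := fun i j hij => by
    rcases hij.eq_or_lt with rfl | hij
    · exact le_rfl
    · exact (hmono i j hij).trans le_sup_left
  have hN_folner : ∀ i, IsFolner (N i) := by
    intro i
    induction i using WellFoundedLT.induction with
    | ind i ih =>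
      have hN_eq : N i = ⨆ j : Set.Iio i, (N j ⊔ V j) :=
        le_antisymm (iSup_mono fun j => le_sup_right) (iSup_le fun j => hmono _ _ j.2)
      rw [hN_eq]
      refine iSup_of_directed (fun j => (ih j j.2).sup (hV j) (hle j) (hbot j)) ?_
      exact (hmono_sup.comp (Subtype.mono_coe _)).directed_le
  have hV_sup : (⨆ i, V i) = ⨆ i, (N i ⊔ V i) :=
    le_antisymm (iSup_mono fun j => le_sup_right)
      (iSup_le fun i => sup_le (iSup_le fun k => le_iSup V k) (le_iSup V i))
  rw [hV_sup]
  exact iSup_of_directed (fun i => (hN_folner i).sup (hV i) (hle i) (hbot i)) hmono_sup.directed_le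

theorem iSup_of_commute {ι : Type*} {V : ι → Subgroup Γ} (hV : ∀ i, IsFolner (V i))
    (hcomm : ∀ i j, i ≠ j → ∀ a ∈ V i, ∀ b ∈ V j, a * b = b * a)
    (hbot : ∀ i, (⨆ j : {j // j ≠ i}, V j) ⊓ V i = ⊥) : IsFolner (⨆ i, V i) := by
  obtain ⟨_, _⟩ := exists_wellFoundedLT ι
  refine iSup_wellOrder hV (fun i => ?_) fun i => ?_
  · rw [Subgroup.iSup_eq_closure, Subgroup.le_normalizer_closure_iff]
    intro a ha b hb
    obtain ⟨j, hj⟩ := Set.mem_iUnion.1 hb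
    rw [hcomm i j j.2.ne' a ha b hj, mul_inv_cancel_right]
    exact Subgroup.subset_closure hb
  · rw [eq_bot_iff, ← hbot i]
    refine inf_le_inf_right _ (iSup_le fun j => ?_)
    exact le_iSup (fun j : {j // j ≠ i} => V j) ⟨j, j.2.ne⟩

theorem card_exitSet_ofAdd_image_Ico_le (m : ℤ) (n : ℕ) :
    #(exitSet (Multiplicative.ofAdd m) ((Ico (0 : ℤ) n).image Multiplicative.ofAdd)) ≤
      m.natAbs := by
  have hsub : exitSet (Multiplicative.ofAdd m) ((Ico (0 : ℤ) n).image Multiplicative.ofAdd) ⊆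
      (Ico 0 (-m) ∪ Ico (n - m) n).image Multiplicative.ofAdd := by
    intro x hx
    obtain ⟨hx, hexit⟩ := mem_exitSet.1 hx
    obtain ⟨a, ha, rfl⟩ := mem_image.1 hx
    have hma : m + a ∉ Ico (0 : ℤ) n := fun h => hexit (mem_image.2 ⟨m + a, h, rfl⟩)
    refine mem_image_of_mem _ ?_
    simp only [mem_Ico, mem_union] at hma ha ⊢
    omega
  have hcard := ((card_le_card hsub).trans card_image_le).trans (card_union_le _ _)
  rw [Int.card_Ico, Int.card_Ico] at hcard
  omega

theorem int : IsFolner (⊤ : Subgroup (Multiplicative ℤ)) := by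
  intro S _ ε hε
  let M : ℕ := S.sup fun s => s.toAdd.natAbs
  obtain ⟨n, hn⟩ := exists_nat_gt (M / ε)
  have hpos : 0 < n := Nat.cast_pos.1 (lt_of_le_of_lt (by positivity) hn)
  rw [div_lt_iff₀' hε] at hn
  refine ⟨(Ico (0 : ℤ) n).image Multiplicative.ofAdd, ?_, fun _ _ => trivial, fun s hs => ?_⟩
  · exact (nonempty_Ico.2 (mod_cast hpos)).image _
  · rw [card_image_of_injective _ Multiplicative.ofAdd.injective, Int.card_Ico, sub_zero,
      Int.toNat_natCast]
    have hle : s.toAdd.natAbs ≤ M := le_sup (f := fun s : Multiplicative ℤ => s.toAdd.natAbs) hs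
    exact (Nat.cast_le.2 ((card_exitSet_ofAdd_image_Ico_le s.toAdd n).trans hle)).trans hn.le

end IsFolner

end Folner

/-! ### Iterated wreath products -/

namespace IteratedWreath

section Fam

variable {I : Type*} (G : I → Type*) [∀ i, One (G i)]

/-- Finitely supported families of elements of the `G i`: the set on which the iterated wreath
product of the `G i` acts. -/
def Fam : Type _ := {x : ∀ i, G i // {i | x i ≠ 1}.Finite}

variable {G}

namespace Fam

instance : CoeFun (Fam G) fun _ => ∀ i, G i := ⟨Subtype.val⟩

@[ext]
theorem ext {x y : Fam G} (h : ∀ i, x i = y i) : x = y := Subtype.ext (funext h)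

instance : One (Fam G) := ⟨⟨fun _ => 1, by simp⟩⟩

@[simp]
theorem one_apply (i : I) : (1 : Fam G) i = 1 := rfl

/-- The family `x` with its coordinate at `i` replaced by `g`. -/
def update [DecidableEq I] (x : Fam G) (i : I) (g : G i) : Fam G :=
  ⟨Function.update x.1 i g, (x.2.insert i).subset fun j hj => by
    by_cases h : j = i
    · exact Or.inl h
    · right
      simpa [Function.update_of_ne h] using hj⟩

@[simp]
theorem update_self [DecidableEq I] (x : Fam G) (i : I) (g : G i) : x.update i g i = g :=
  Function.update_self i g x.1

theorem update_of_ne [DecidableEq I] (x : Fam G) {i j : I} (h : j ≠ i) (g : G i) :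
    x.update i g j = x j :=
  Function.update_of_ne h g x.1

open Classical in
/-- The graph of `x` over its support. -/
def graph (x : Fam G) : Finset (Σ i, G i) := x.2.toFinset.image fun i => ⟨i, x i⟩

theorem mk_mem_graph {x : Fam G} {i : I} {g : G i} :
    (⟨i, g⟩ : Σ i, G i) ∈ x.graph ↔ x i = g ∧ g ≠ 1 := by
  simp only [graph, Finset.mem_image, Set.Finite.mem_toFinset, Set.mem_ofPred_eq, Sigma.mk.injEq]
  constructor
  · rintro ⟨j, hj, rfl, h⟩
    obtain rfl := eq_of_heq h
    exact ⟨rfl, hj⟩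
  · rintro ⟨rfl, h⟩
    exact ⟨i, h, rfl, HEq.rfl⟩

theorem graph_injective : Function.Injective (graph : Fam G → Finset (Σ i, G i)) := by
  intro x y h
  ext i
  by_contra hne
  rcases eq_or_ne (x i) 1 with hx | hx
  · have hy : y i ≠ 1 := fun hy => hne (hx.trans hy.symm)
    exact hne (mk_mem_graph.1 (h ▸ mk_mem_graph.2 ⟨rfl, hy⟩)).1
  · exact hne (mk_mem_graph.1 (h ▸ mk_mem_graph.2 ⟨rfl, hx⟩)).1.symm

instance [Countable I] [∀ i, Countable (G i)] : Countable (Fam G) := graph_injective.countable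

end Fam

end Fam

variable {I : Type*} [LinearOrder I] {G : I → Type*} [∀ i, Group (G i)]

/-- The families `x` and `y` agree above `i`. -/
def AgreeAbove (i : I) (x y : Fam G) : Prop := ∀ j, i < j → x j = y j

open Classical in
/-- The map multiplying the `i`-th coordinate by `g` on the families agreeing with `y` above
`i`. -/
def shiftFun (i : I) (g : G i) (y x : Fam G) : Fam G :=
  if AgreeAbove i x y then x.update i (g * x i) else x

theorem shiftFun_of_ne {i j : I} (h : j ≠ i) (g : G i) (y x : Fam G) :
    shiftFun i g y x j = x j := by
  rw [shiftFun]
  split_ifs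
  · exact x.update_of_ne h _
  · rfl

open Classical in
theorem shiftFun_self (i : I) (g : G i) (y x : Fam G) :
    shiftFun i g y x i = (if AgreeAbove i x y then g else 1) * x i := by
  rw [shiftFun]
  split_ifs <;> simp

theorem shiftFun_self_self (i : I) (g : G i) (y : Fam G) : shiftFun i g y y i = g * y i := by
  classical
  have h : AgreeAbove i y y := fun _ _ => rfl
  rw [shiftFun_self]
  simp only [if_pos h]

theorem agreeAbove_shiftFun (i : I) (g : G i) (y x : Fam G) : AgreeAbove i (shiftFun i g y x) x :=
  fun _ hj => shiftFun_of_ne hj.ne' g y x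

theorem AgreeAbove.symm {i : I} {x y : Fam G} (h : AgreeAbove i x y) : AgreeAbove i y x :=
  fun j hj => (h j hj).symm

theorem AgreeAbove.trans {i : I} {x y z : Fam G} (h : AgreeAbove i x y) (h' : AgreeAbove i y z) :
    AgreeAbove i x z := fun j hj => (h j hj).trans (h' j hj)

theorem AgreeAbove.congr_left {i : I} {x x' y : Fam G} (h : AgreeAbove i x x') :
    AgreeAbove i x y ↔ AgreeAbove i x' y := ⟨h.symm.trans, h.trans⟩

theorem shiftFun_shiftFun (i : I) (g h : G i) (y x : Fam G) :
    shiftFun i g y (shiftFun i h y x) = shiftFun i (g * h) y x := by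
  classical
  refine Fam.ext fun j => ?_
  by_cases hj : j = i
  · subst hj
    simp only [shiftFun_self, (agreeAbove_shiftFun j h y x).congr_left]
    split_ifs <;> simp [mul_assoc]
  · simp only [shiftFun_of_ne hj]

theorem shiftFun_one (i : I) (y x : Fam G) : shiftFun i 1 y x = x := by
  refine Fam.ext fun j => ?_
  by_cases hj : j = i
  · subst hj
    simp [shiftFun_self]
  · exact shiftFun_of_ne hj _ _ _

/-- The permutation multiplying the `i`-th coordinate by `g` on the families agreeing with `y`
above `i`. -/
def shift (i : I) (y : Fam G) : G i →* Equiv.Perm (Fam G) where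
  toFun g := ⟨shiftFun i g y, shiftFun i g⁻¹ y, fun x => by simp [shiftFun_shiftFun, shiftFun_one],
    fun x => by simp [shiftFun_shiftFun, shiftFun_one]⟩
  map_one' := Equiv.ext fun x => shiftFun_one i y x
  map_mul' g h := Equiv.ext fun x => (shiftFun_shiftFun i g h y x).symm

@[simp]
theorem shift_apply (i : I) (y : Fam G) (g : G i) (x : Fam G) :
    shift i y g x = shiftFun i g y x := rfl

/-- The change of the `i`-th coordinate under `w` only depends on the coordinates above `i`. -/
def IsTriangular (w : Equiv.Perm (Fam G)) : Prop :=
  ∀ i x y, AgreeAbove i x y → w x i * (x i)⁻¹ = w y i * (y i)⁻¹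

theorem IsTriangular.agreeAbove {w : Equiv.Perm (Fam G)} (hw : IsTriangular w) {i : I}
    {x y : Fam G} (h : AgreeAbove i x y) : AgreeAbove i (w x) (w y) := fun j hj => by
  have := hw j x y fun k hk => h k (hj.trans hk)
  rw [h j hj] at this
  exact mul_right_cancel this

theorem IsTriangular.mul {w v : Equiv.Perm (Fam G)} (hw : IsTriangular w) (hv : IsTriangular v) :
    IsTriangular (w * v) := fun i x y h => by
  have h1 := hw i (v x) (v y) (hv.agreeAbove h)
  have h2 := hv i x y h
  have e : ∀ z, (w * v) z i * (z i)⁻¹ = w (v z) i * (v z i)⁻¹ * (v z i * (z i)⁻¹) := fun z => by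
    rw [Equiv.Perm.mul_apply]
    group
  rw [e, e, h1, h2]

variable (G) in
/-- The group of triangular permutations. -/
def triangular : Subgroup (Equiv.Perm (Fam G)) where
  carrier := {w | IsTriangular w ∧ IsTriangular w⁻¹}
  mul_mem' := fun {w v} hw hv => ⟨hw.1.mul hv.1, by rw [mul_inv_rev]; exact hv.2.mul hw.2⟩
  one_mem' := by
    have : IsTriangular (1 : Equiv.Perm (Fam G)) := fun i x y _ => by simp
    exact ⟨this, by rw [inv_one]; exact this⟩
  inv_mem' := fun {w} hw => ⟨hw.2, by rw [inv_inv]; exact hw.1⟩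

theorem isTriangular_shift (i : I) (y : Fam G) (g : G i) : IsTriangular (shift i y g) := by
  classical
  intro j x z h
  by_cases hj : j = i
  · subst hj
    simp [shiftFun_self, h.congr_left]
  · simp [shiftFun_of_ne hj]

variable (G) in
/-- The iterated wreath product of the family `G`. -/
def wreath : Subgroup (Equiv.Perm (Fam G)) :=
  Subgroup.closure (Set.range fun p : Σ i, G i × Fam G => shift p.1 p.2.2 p.2.1)

theorem shift_mem (i : I) (y : Fam G) (g : G i) : shift i y g ∈ wreath G :=
  Subgroup.subset_closure ⟨⟨i, g, y⟩, rfl⟩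

theorem wreath_le : wreath G ≤ triangular G := by
  rw [wreath, Subgroup.closure_le]
  rintro _ ⟨⟨i, g, y⟩, rfl⟩
  exact ⟨isTriangular_shift i y g, by rw [← map_inv]; exact isTriangular_shift i y g⁻¹⟩

theorem isTriangular (w : wreath G) : IsTriangular (w : Equiv.Perm (Fam G)) := (wreath_le w.2).1

theorem mul_apply_one {i : I} (w v : wreath G) (hv : AgreeAbove i (v.1 1) 1) :
    (w * v).1 1 i = w.1 1 i * v.1 1 i := by
  have := isTriangular w i _ _ hv
  simp only [Fam.one_apply, inv_one, mul_one] at this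
  rw [← this]
  simp

variable (G) in
/-- The elements of the iterated wreath product fixing the coordinates of `1` in `U`. -/
def stab (U : UpperSet I) : Subgroup (wreath G) where
  carrier := {w | ∀ i ∈ U, w.1 1 i = 1}
  one_mem' := fun i _ => rfl
  mul_mem' := fun {w v} hw hv i hi => by
    rw [mul_apply_one w v fun j hj => hv j (U.upper hj.le hi), hw i hi, hv i hi, mul_one]
  inv_mem' := fun {w} hw i hi => by
    have := mul_apply_one w⁻¹ w (i := i) fun j hj => hw j (U.upper hj.le hi)
    rw [hw i hi, mul_one, inv_mul_cancel] at this
    exact this.symm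

theorem mem_stab {U : UpperSet I} {w : wreath G} : w ∈ stab G U ↔ ∀ i ∈ U, w.1 1 i = 1 := Iff.rfl

theorem agreeAbove_of_mem_stab {i : I} {w : wreath G} (hw : w ∈ stab G (UpperSet.Ioi i)) :
    AgreeAbove i (w.1 1) 1 := fun j hj => hw j hj

/-- The `i`-th coordinate of the image of `1`. -/
def stabHom (i : I) : stab G (UpperSet.Ioi i) →* G i where
  toFun w := w.1.1 1 i
  map_one' := rfl
  map_mul' w v := mul_apply_one w.1 v.1 (agreeAbove_of_mem_stab v.2)

theorem stabHom_surjective (i : I) : Function.Surjective (stabHom (G := G) i) := fun g => by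
  refine ⟨⟨⟨shift i 1 g, shift_mem i 1 g⟩, fun j hj => ?_⟩, ?_⟩
  · exact shiftFun_of_ne (ne_of_gt hj) _ _ _
  · change shiftFun i g 1 1 i = g
    rw [shiftFun_self_self]
    simp

theorem mem_stab_Ici_iff {i : I} {w : wreath G} :
    w ∈ stab G (UpperSet.Ici i) ↔ w ∈ stab G (UpperSet.Ioi i) ∧ w.1 1 i = 1 := by
  simp only [mem_stab, UpperSet.mem_Ici_iff, UpperSet.mem_Ioi_iff]
  constructor
  · exact fun h => ⟨fun j hj => h j hj.le, h i le_rfl⟩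
  · rintro ⟨h1, h2⟩ j hj
    rcases hj.eq_or_lt with rfl | hj
    · exact h2
    · exact h1 j hj

theorem stabHom_eq_one_iff {i : I} (w : stab G (UpperSet.Ioi i)) :
    stabHom i w = 1 ↔ (w : wreath G) ∈ stab G (UpperSet.Ici i) := by
  rw [mem_stab_Ici_iff]
  exact ⟨fun h => ⟨w.2, h⟩, fun h => h.2⟩

theorem conj_mem_stab_Ici {i : I} {w n : wreath G} (hw : w ∈ stab G (UpperSet.Ioi i))
    (hn : n ∈ stab G (UpperSet.Ici i)) : w * n * w⁻¹ ∈ stab G (UpperSet.Ici i) := by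
  have hn' := (mem_stab_Ici_iff.1 hn).1
  have h : stabHom i (⟨w, hw⟩ * ⟨n, hn'⟩ * ⟨w, hw⟩⁻¹) = 1 := by
    rw [map_mul, map_mul, (stabHom_eq_one_iff ⟨n, hn'⟩).2 hn, mul_one, map_inv, mul_inv_cancel]
  exact (stabHom_eq_one_iff _).1 h

theorem shift_mem_stab {i : I} {y : Fam G} (hy : ¬ AgreeAbove i y 1) (g : G i) (U : UpperSet I) :
    (⟨shift i y g, shift_mem i y g⟩ : wreath G) ∈ stab G U := by
  intro j _
  change shiftFun i g y 1 j = 1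
  rw [shiftFun, if_neg fun h => hy h.symm, Fam.one_apply]

theorem inv_mul_shift_mul_apply_one (w : wreath G) (i : I) (g : G i) :
    (w⁻¹ * ⟨shift i (w.1 1) g, shift_mem i _ g⟩ * w).1 1 i = (w.1 1 i)⁻¹ * g * w.1 1 i := by
  have h := isTriangular w⁻¹ i _ _ (agreeAbove_shiftFun i g (w.1 1) (w.1 1))
  have hw : (w⁻¹).1 (w.1 1) = 1 := by simp
  rw [shiftFun_self_self, hw, Fam.one_apply, one_mul, mul_inv_eq_iff_eq_mul] at h
  exact h.trans (mul_assoc _ _ _).symm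

/-- If `w` moved `1` above `i`, the shift by `g ≠ 1` along `w 1` would fix `1`, but its conjugate
by `w⁻¹` would change the `i`-th coordinate of `1`. -/
theorem normalizer_stab_le (i : I) [Nontrivial (G i)] :
    Subgroup.normalizer (stab G (UpperSet.Ici i) : Set (wreath G)) ≤
      stab G (UpperSet.Ioi i) := by
  intro w hw j hj
  by_contra hne
  obtain ⟨g, hg⟩ := exists_ne (1 : G i)
  have hs := shift_mem_stab (fun h => hne (h j hj)) g (UpperSet.Ici i)
  have h := (Subgroup.mem_normalizer_iff.1 (inv_mem hw) _).1 hs i (UpperSet.mem_Ici_iff.2 le_rfl)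
  rw [inv_inv, inv_mul_shift_mul_apply_one] at h
  rw [mul_assoc, inv_mul_eq_one, right_eq_mul] at h
  exact hg h

theorem normalizer_stab (i : I) [Nontrivial (G i)] :
    Subgroup.normalizer (stab G (UpperSet.Ici i) : Set (wreath G)) = stab G (UpperSet.Ioi i) := by
  refine (normalizer_stab_le i).antisymm fun w hw => Subgroup.mem_normalizer_iff.2 fun n =>
    ⟨conj_mem_stab_Ici hw, fun h => ?_⟩
  simpa [mul_assoc] using conj_mem_stab_Ici (inv_mem hw) h

theorem finite_support (w : wreath G) : {i | w.1 1 i ≠ 1}.Finite := (w.1 1).2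

open Classical in
/-- The family `x` with the coordinates not above `i` replaced by `1`. -/
def Fam.trunc (i : I) (x : Fam G) : Fam G :=
  ⟨fun j => if i < j then x j else 1, x.2.subset fun j hj => by
    simp only [Set.mem_ofPred_eq] at hj ⊢
    split_ifs at hj with h
    · exact hj
    · exact absurd rfl hj⟩

theorem Fam.trunc_of_le {i j : I} (h : j ≤ i) (x : Fam G) : x.trunc i j = 1 := if_neg h.not_gt

theorem Fam.agreeAbove_trunc (i : I) (x : Fam G) : AgreeAbove i x (x.trunc i) :=
  fun _ hj => (if_pos hj).symm

theorem AgreeAbove.shift_eq {i : I} {y z : Fam G} (h : AgreeAbove i y z) (g : G i) :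
    shift i y g = shift i z g := by
  classical
  refine Equiv.ext fun x => ?_
  have : AgreeAbove i x y ↔ AgreeAbove i x z := ⟨fun h' => h'.trans h, fun h' => h'.trans h.symm⟩
  simp only [shift_apply, shiftFun, this]

variable (G) in
/-- The permutations preserving the coordinates in `J`. -/
def fixCoord (J : Set I) : Subgroup (Equiv.Perm (Fam G)) where
  carrier := {w | ∀ x, ∀ j ∈ J, w x j = x j}
  one_mem' := fun _ _ _ => rfl
  mul_mem' := fun hw hv x j hj => (hw _ j hj).trans (hv x j hj)
  inv_mem' := fun {w} hw x j hj => by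
    have := hw (w⁻¹ x) j hj
    simpa using this.symm

variable (G) in
/-- The families which are trivial up to `i`; they represent the classes of `AgreeAbove i`. -/
def TrivialUpTo (i : I) : Type _ := {y : Fam G // ∀ j ≤ i, y j = 1}

variable (G) in
/-- The group generated by the shifts of the `i`-th coordinate. -/
def level (i : I) : Subgroup (Equiv.Perm (Fam G)) :=
  ⨆ y : TrivialUpTo G i, (shift i y.1).range

theorem shift_mem_level (i : I) (y : Fam G) (g : G i) : shift i y g ∈ level G i := by
  rw [(y.agreeAbove_trunc i).shift_eq]
  exact Subgroup.mem_iSup_of_mem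
    (⟨y.trunc i, fun j hj => Fam.trunc_of_le hj y⟩ : TrivialUpTo G i) ⟨g, rfl⟩

theorem wreath_eq : wreath G = ⨆ i, level G i := by
  refine le_antisymm ?_ (iSup_le fun i => iSup_le fun y => ?_)
  · rw [wreath, Subgroup.closure_le]
    rintro _ ⟨⟨i, g, y⟩, rfl⟩
    exact Subgroup.mem_iSup_of_mem i (shift_mem_level i y g)
  · rintro _ ⟨g, rfl⟩
    exact shift_mem i _ g

theorem level_le_fixCoord {i : I} {J : Set I} (h : i ∉ J) : level G i ≤ fixCoord G J := by
  refine iSup_le fun y => ?_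
  rintro _ ⟨g, rfl⟩ x j hj
  exact shiftFun_of_ne (ne_of_mem_of_not_mem hj h) _ _ _

omit [LinearOrder I] in
theorem fixCoord_inf_eq_bot {J K : Set I} (h : ∀ i, i ∈ J ∨ i ∈ K) :
    fixCoord G J ⊓ fixCoord G K = ⊥ := by
  rw [eq_bot_iff]
  rintro w ⟨hJ, hK⟩
  refine Equiv.ext fun x => Fam.ext fun i => ?_
  rcases h i with h | h
  · exact hJ x i h
  · exact hK x i h

theorem agreeAbove_apply_iff {w : Equiv.Perm (Fam G)} (hw : w ∈ triangular G) {i : I}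
    {x y : Fam G} : AgreeAbove i (w x) (w y) ↔ AgreeAbove i x y :=
  ⟨fun h => by simpa using hw.2.agreeAbove h, hw.1.agreeAbove⟩

theorem conj_shift {i j : I} (hj : j < i) {w : Equiv.Perm (Fam G)} (hw : w ∈ triangular G)
    (hi : w ∈ fixCoord G {i}ᶜ) (y : Fam G) (g : G j) :
    w * shift j y g * w⁻¹ = shift j (w y) g := by
  classical
  rw [mul_inv_eq_iff_eq_mul]
  refine Equiv.ext fun x => Fam.ext fun k => ?_
  change w (shiftFun j g y x) k = shiftFun j g (w y) (w x) k
  by_cases hki : k = i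
  · subst hki
    have h := hw.1 k (shiftFun j g y x) x fun l hl => shiftFun_of_ne (hj.trans hl).ne' _ _ _
    rw [shiftFun_of_ne hj.ne' g y x] at h
    rw [shiftFun_of_ne hj.ne']
    exact mul_right_cancel h
  · rw [hi _ k hki]
    by_cases hkj : k = j
    · subst hkj
      simp only [shiftFun_self, agreeAbove_apply_iff hw]
      rw [hi x k hki]
    · rw [shiftFun_of_ne hkj, shiftFun_of_ne hkj, hi x k hki]

theorem TrivialUpTo.not_agreeAbove {i : I} {y z : TrivialUpTo G i} (h : y ≠ z) :
    ¬ AgreeAbove i y.1 z.1 := fun hA => h <| Subtype.ext <| Fam.ext fun j => by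
  rcases lt_or_ge i j with hj | hj
  · exact hA j hj
  · rw [y.2 j hj, z.2 j hj]

theorem eq_one_of_shift_apply_self {i : I} {y : Fam G} {g : G i} (h : shift i y g y = y) :
    g = 1 := by
  have hi : shiftFun i g y y i = y i := congrArg (fun x : Fam G => x i) h
  rwa [shiftFun_self_self, mul_eq_right] at hi

theorem shift_injective (i : I) (y : Fam G) : Function.Injective (shift i y) := by
  rw [injective_iff_map_eq_one]
  exact fun g hg => eq_one_of_shift_apply_self (by rw [hg, Equiv.Perm.one_apply])

theorem commute_shift {i : I} {y z : Fam G} (h : ¬ AgreeAbove i y z) (g g' : G i) :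
    Commute (shift i y g) (shift i z g') := by
  classical
  refine Equiv.ext fun x => Fam.ext fun k => ?_
  change shiftFun i g y (shiftFun i g' z x) k = shiftFun i g' z (shiftFun i g y x) k
  by_cases hk : k = i
  · subst hk
    simp only [shiftFun_self, (agreeAbove_shiftFun k g' z x).congr_left,
      (agreeAbove_shiftFun k g y x).congr_left]
    split_ifs with hy hz hz
    · exact absurd (hy.symm.trans hz) h
    all_goals simp
  · simp only [shiftFun_of_ne hk]

theorem isFolner_level {i : I} (h : IsAmenable (G i)) : IsFolner (level G i) := by
  refine IsFolner.iSup_of_commute (fun y => ?_) ?_ fun y => ?_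
  · rw [MonoidHom.range_eq_map]
    exact (IsFolner.of_isAmenable h).map (shift_injective i y.1)
  · rintro y z hyz _ ⟨g, rfl⟩ _ ⟨g', rfl⟩
    exact commute_shift (TrivialUpTo.not_agreeAbove hyz) g g'
  · rw [eq_bot_iff]
    rintro _ ⟨hw, ⟨g, rfl⟩⟩
    have hfix : (⨆ z : {z // z ≠ y}, (shift i z.1.1).range) ≤
        MulAction.stabilizer (Equiv.Perm (Fam G)) y.1 := by
      refine iSup_le fun z => ?_
      rintro _ ⟨g, rfl⟩
      exact if_neg (TrivialUpTo.not_agreeAbove z.2.symm)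
    rw [eq_one_of_shift_apply_self (hfix hw), map_one, Subgroup.mem_bot]

theorem level_le_triangular (i : I) : level G i ≤ triangular G :=
  le_trans (by rw [wreath_eq]; exact le_iSup (level G) i) wreath_le

theorem isFolner_wreath [WellFoundedLT I] (h : ∀ i, IsAmenable (G i)) : IsFolner (wreath G) := by
  rw [wreath_eq]
  refine IsFolner.iSup_wellOrder (fun i => isFolner_level (h i)) (fun i => ?_) fun i => ?_
  · rw [Subgroup.iSup_eq_closure, Subgroup.le_normalizer_closure_iff]
    intro w hw v hv
    obtain ⟨j, hj⟩ := Set.mem_iUnion.1 hv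
    refine Subgroup.subset_closure (Set.mem_iUnion.2 ⟨j, ?_⟩)
    have hconj : level G j.1 ≤ (level G j.1).comap (MulAut.conj w).toMonoidHom := by
      conv_lhs => rw [level]
      refine iSup_le fun y => ?_
      rintro _ ⟨g, rfl⟩
      change w * shift j.1 y.1 g * w⁻¹ ∈ level G j.1
      rw [conj_shift j.2 (level_le_triangular i hw) (level_le_fixCoord (by simp) hw)]
      exact shift_mem_level _ _ _
    exact hconj hj
  · rw [eq_bot_iff, ← fixCoord_inf_eq_bot (J := Set.Ici i) (K := {i}ᶜ) (G := G)]
    · refine inf_le_inf (iSup_le fun j => level_le_fixCoord ?_) (level_le_fixCoord (by simp))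
      exact fun h => not_lt_of_ge h j.2
    · intro j
      rcases eq_or_ne j i with rfl | h
      · exact Or.inl (Set.mem_Ici.2 le_rfl)
      · exact Or.inr h

end IteratedWreath

/-! ### The Heisenberg extension -/

/-- The lamp configurations: finitely supported functions on `Γ` with values in `𝔽₂[X]`. Any
infinite elementary abelian 2-group of values would do. -/
abbrev Lamp (Γ : Type*) : Type _ := Γ →₀ Polynomial (ZMod 2)

instance {Γ : Type*} [Group Γ] : DistribMulAction Γ (Lamp Γ) := Finsupp.comapDistribMulAction

namespace Lamp

variable {Γ : Type*} [Group Γ]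

theorem smul_apply (g : Γ) (a : Lamp Γ) (x : Γ) : (g • a) x = a (g⁻¹ * x) :=
  Finsupp.comapSMul_apply g a x

theorem smul_mul (g : Γ) (a b : Lamp Γ) : g • (a * b) = g • a * g • b := by
  ext1 x
  simp

theorem smul_single (g x : Γ) (p : Polynomial (ZMod 2)) :
    g • (Finsupp.single x p : Lamp Γ) = Finsupp.single (g * x) p :=
  Finsupp.comapSMul_single g x p

theorem infinite_smul {D : Set Γ} (hD : D.Infinite) {a : Lamp Γ} (ha : a ≠ 0) :
    ((fun g => g • a) '' D).Infinite := by
  classical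
  intro hfin
  obtain ⟨x, hx⟩ := Finsupp.ne_iff.1 ha
  have hsupp : (⋃ b ∈ (fun g => g • a) '' D, (b.support : Set Γ)).Finite :=
    hfin.biUnion fun b _ => b.support.finite_toSet
  refine hD (Set.Finite.of_finite_image (f := fun g => g * x) (hsupp.subset ?_)
    (mul_left_injective x).injOn)
  rintro _ ⟨g, hg, rfl⟩
  refine Set.mem_biUnion (Set.mem_image_of_mem _ hg) ?_
  simpa [smul_apply] using hx

end Lamp

/-- The semidirect product by `Γ` of the Heisenberg group of the ring `Lamp Γ`, whose elements
`(a, b, c)` multiply as the unitriangular matrices with entries `a`, `b` above the diagonal and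
`c` in the corner. -/
@[ext]
structure HeisExt (Γ : Type*) where
  a : Lamp Γ
  b : Lamp Γ
  c : Lamp Γ
  g : Γ

namespace HeisExt

open Finsupp Polynomial

variable {Γ : Type*} [Group Γ]

instance : Mul (HeisExt Γ) :=
  ⟨fun q r => ⟨q.a + q.g • r.a, q.b + q.g • r.b, q.c + q.g • r.c + q.a * q.g • r.b, q.g * r.g⟩⟩

instance : One (HeisExt Γ) := ⟨⟨0, 0, 0, 1⟩⟩

instance : Inv (HeisExt Γ) :=
  ⟨fun q => ⟨q.g⁻¹ • -q.a, q.g⁻¹ • -q.b, q.g⁻¹ • (-q.c + q.a * q.b), q.g⁻¹⟩⟩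

@[simp] theorem mul_a (q r : HeisExt Γ) : (q * r).a = q.a + q.g • r.a := rfl
@[simp] theorem mul_b (q r : HeisExt Γ) : (q * r).b = q.b + q.g • r.b := rfl
@[simp] theorem mul_c (q r : HeisExt Γ) : (q * r).c = q.c + q.g • r.c + q.a * q.g • r.b := rfl
@[simp] theorem mul_g (q r : HeisExt Γ) : (q * r).g = q.g * r.g := rfl
@[simp] theorem one_a : (1 : HeisExt Γ).a = 0 := rfl
@[simp] theorem one_b : (1 : HeisExt Γ).b = 0 := rfl
@[simp] theorem one_c : (1 : HeisExt Γ).c = 0 := rfl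
@[simp] theorem one_g : (1 : HeisExt Γ).g = 1 := rfl
@[simp] theorem inv_a (q : HeisExt Γ) : q⁻¹.a = q.g⁻¹ • -q.a := rfl
@[simp] theorem inv_b (q : HeisExt Γ) : q⁻¹.b = q.g⁻¹ • -q.b := rfl
@[simp] theorem inv_c (q : HeisExt Γ) : q⁻¹.c = q.g⁻¹ • (-q.c + q.a * q.b) := rfl
@[simp] theorem inv_g (q : HeisExt Γ) : q⁻¹.g = q.g⁻¹ := rfl

instance : Group (HeisExt Γ) :=
  Group.ofLeftAxioms
    (fun q r s => by
      ext1
      · simp [add_assoc, mul_smul]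
      · simp [add_assoc, mul_smul]
      · simp only [mul_c, mul_a, mul_b, mul_g, smul_add, mul_smul, Lamp.smul_mul, add_mul, mul_add]
        abel
      · simp [mul_assoc])
    (fun q => by ext1 <;> simp)
    (fun q => by
      ext1
      · simp
      · simp
      · simp only [mul_c, inv_c, inv_a, inv_g, one_c, ← Lamp.smul_mul, ← smul_add]
        rw [smul_eq_zero_iff_eq]
        ext1 x
        simp
      · simp)

/-- The projection onto `Γ`. -/
def proj : HeisExt Γ →* Γ where
  toFun q := q.g
  map_one' := rfl
  map_mul' _ _ := rfl

@[simp] theorem proj_apply (q : HeisExt Γ) : proj q = q.g := rfl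

/-- The inclusion of `Γ`. -/
def lift : Γ →* HeisExt Γ where
  toFun g := ⟨0, 0, 0, g⟩
  map_one' := rfl
  map_mul' g h := by ext1 <;> simp

theorem proj_surjective : Function.Surjective (proj (Γ := Γ)) := fun g => ⟨lift g, rfl⟩

instance [Countable Γ] : Countable (HeisExt Γ) := by
  have hpoly : Countable (ZMod 2)[X] := by
    rw [← Cardinal.mk_le_aleph0_iff]
    exact Polynomial.cardinalMk_le_max.trans (max_le Cardinal.mk_le_aleph0 le_rfl)
  have hinj : Function.Injective fun q : HeisExt Γ => (q.a, q.b, q.c, q.g) := fun q r h => by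
    simpa [HeisExt.ext_iff] using h
  exact hinj.countable

/-- The abelian subgroup of the elements `(a, b, c)` of the Heisenberg group with `a` supported off
`N` and `b` supported on `N`. -/
def cartan (N : Subgroup Γ) : Subgroup (HeisExt Γ) where
  carrier := {q | q.g = 1 ∧ (∀ x ∈ N, q.a x = 0) ∧ ∀ x ∉ N, q.b x = 0}
  one_mem' := ⟨rfl, fun _ _ => rfl, fun _ _ => rfl⟩
  mul_mem' := fun {q r} hq hr => ⟨by simp [hq.1, hr.1],
    fun x hx => by simp [hq.1, hq.2.1 x hx, hr.2.1 x hx],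
    fun x hx => by simp [hq.1, hq.2.2 x hx, hr.2.2 x hx]⟩
  inv_mem' := fun {q} hq => ⟨by simp [hq.1], fun x hx => by simp [hq.1, hq.2.1 x hx],
    fun x hx => by simp [hq.1, hq.2.2 x hx]⟩

variable {N : Subgroup Γ}

theorem a_mul_b_eq_zero {q r : HeisExt Γ} (hq : q ∈ cartan N) (hr : r ∈ cartan N) :
    q.a * r.b = 0 := by
  ext1 x
  by_cases hx : x ∈ N
  · simp [hq.2.1 x hx]
  · simp [hr.2.2 x hx]

theorem cartan_comm {q r : HeisExt Γ} (hq : q ∈ cartan N) (hr : r ∈ cartan N) :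
    q * r = r * q := by
  ext1
  · simp [hq.1, hr.1, add_comm]
  · simp [hq.1, hr.1, add_comm]
  · simp [hq.1, hr.1, a_mul_b_eq_zero hq hr, a_mul_b_eq_zero hr hq, add_comm]
  · simp [hq.1, hr.1]

theorem cartan_le : cartan N ≤ N.comap proj := fun q hq => by
  have : q.g = 1 := hq.1
  simp [this, one_mem]

/-- A central element of the Heisenberg group. -/
def central (c : Lamp Γ) : HeisExt Γ := ⟨0, 0, c, 1⟩

theorem central_mem_cartan (c : Lamp Γ) : central c ∈ cartan N :=
  ⟨rfl, fun _ _ => rfl, fun _ _ => rfl⟩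

theorem infinite_conjOrbit_cartan_of_g_ne {q : HeisExt Γ} (hq : q.g ≠ 1) :
    (conjOrbit (cartan N) q).Infinite := by
  refine infinite_conjOrbit_of_injective (fun p => central (single 1 p))
    (fun p => central_mem_cartan _) (fun r => r.c 1) fun p p' h => ?_
  simpa [central, Lamp.smul_single, Finsupp.single_apply, hq] using h

theorem infinite_conjOrbit_cartan {q : HeisExt Γ} (hq : q ∉ cartan N) :
    (conjOrbit (cartan N) q).Infinite := by
  by_cases hg : q.g = 1
  swap
  · exact infinite_conjOrbit_cartan_of_g_ne hg
  have hoff : (∃ x ∈ N, q.a x ≠ 0) ∨ ∃ x ∉ N, q.b x ≠ 0 := by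
    by_contra! h
    exact hq ⟨hg, h.1, h.2⟩
  rcases hoff with ⟨x, hx, hne⟩ | ⟨x, hx, hne⟩
  · refine infinite_conjOrbit_of_injective (fun p => ⟨0, single x p, 0, 1⟩)
      (fun p => ⟨rfl, fun _ _ => rfl, fun y hy => ?_⟩) (fun r => r.c x) fun p p' h => ?_
    · exact Finsupp.single_eq_of_ne (ne_of_mem_of_not_mem hx hy).symm
    · simpa [hg, hne] using h
  · refine infinite_conjOrbit_of_injective (fun p => ⟨single x p, 0, 0, 1⟩)
      (fun p => ⟨rfl, fun y hy => ?_, fun _ _ => rfl⟩) (fun r => r.c x) fun p p' h => ?_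
    · exact Finsupp.single_eq_of_ne (ne_of_mem_of_not_mem hy hx)
    · simpa [hg, hne] using h

theorem comap_le_normalizer_cartan :
    N.comap proj ≤ Subgroup.normalizer (cartan N : Set (HeisExt Γ)) := by
  rw [Subgroup.le_normalizer_iff]
  intro k hk q hq
  have hk : k.g ∈ N := hk
  obtain ⟨h1, h2, h3⟩ := hq
  have hiff : ∀ x, k.g⁻¹ * x ∈ N ↔ x ∈ N := fun x => N.mul_mem_cancel_left (inv_mem hk)
  refine ⟨by simp [h1], fun x hx => ?_, fun x hx => ?_⟩
  · simp [h1, h2 _ ((hiff x).2 hx)]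
  · simp [h1, h3 _ fun h => hx ((hiff x).1 h)]

theorem exists_seq_cartan {k : HeisExt Γ} (hk : k ∉ N.comap proj) : ∃ h : ℕ → HeisExt Γ,
    (∀ i, h i ∈ cartan N) ∧ ∀ i j, i ≠ j → k * h i * (h j)⁻¹ * k⁻¹ ∉ cartan N := by
  have hk : k.g ∉ N := hk
  refine ⟨fun i => ⟨0, single 1 (X ^ i), 0, 1⟩, fun i => ⟨rfl, fun _ _ => rfl, fun y hy => ?_⟩,
    fun i j hij hmem => hij ?_⟩
  · exact Finsupp.single_eq_of_ne (ne_of_mem_of_not_mem (one_mem N) hy).symm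
  · have hval : k.b k.g + X ^ i - X ^ j - k.b k.g = 0 := by
      simpa [← sub_eq_add_neg] using hmem.2.2 k.g hk
    have hdiff : (X ^ i : (ZMod 2)[X]) - X ^ j = 0 := by linear_combination hval
    simpa using congrArg natDegree (sub_eq_zero.1 hdiff)

theorem cartan_ne : cartan N ≠ N.comap proj := fun h => by
  have hmem : (⟨single 1 1, 0, 0, 1⟩ : HeisExt Γ) ∈ N.comap proj := N.one_mem
  rw [← h] at hmem
  simpa using hmem.2.1 1 N.one_mem

theorem infinite_conjOrbit_comap_proj_of_equivariant (hN : (N : Set Γ).Infinite) {q : HeisExt Γ}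
    (φ : HeisExt Γ → Lamp Γ) (hφ : ∀ g, φ (lift g * q * (lift g)⁻¹) = g • φ q) (hq : φ q ≠ 0) :
    (conjOrbit (N.comap proj) q).Infinite := by
  refine Set.Infinite.of_image φ ((Lamp.infinite_smul hN hq).mono ?_)
  rintro _ ⟨g, hg, rfl⟩
  exact ⟨_, ⟨lift g, hg, rfl⟩, hφ g⟩

theorem isRelICC_comap_proj (hN : (N : Set Γ).Infinite) : IsRelICC (N.comap proj) := by
  intro q hq
  by_cases hg : q.g = 1
  swap
  · exact (infinite_conjOrbit_cartan_of_g_ne hg).mono (conjOrbit_mono cartan_le q)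
  by_cases ha : q.a = 0
  · by_cases hb : q.b = 0
    · exact infinite_conjOrbit_comap_proj_of_equivariant hN c (fun g => by simp [lift, hg])
        fun hc => hq (HeisExt.ext ha hb hc hg)
    · exact infinite_conjOrbit_comap_proj_of_equivariant hN b (fun g => by simp [lift, hg]) hb
  · exact infinite_conjOrbit_comap_proj_of_equivariant hN a (fun g => by simp [lift, hg]) ha

end HeisExt

/-- An increasing continuous chain of subgroups of `Γ`, indexed by ordinals up to `α`, in which from
index `1` on each subgroup has the next one as its normalizer, with quotient `G β`. -/
structure NormalizerChain (α : Ordinal) (G : Ordinal → Type*) [∀ β, Group (G β)]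
    (Γ : Type*) [Group Γ] where
  group : Ordinal → Subgroup Γ
  mono : Monotone group
  normalizer_eq : ∀ β, 1 ≤ β → β < α → Subgroup.normalizer (group β : Set Γ) = group (β + 1)
  exists_hom : ∀ β, 1 ≤ β → β < α → ∃ ψ : group (β + 1) →* G β,
    Function.Surjective ψ ∧ ∀ k, ψ k = 1 ↔ (k : Γ) ∈ group β
  exists_lt : ∀ β, Order.IsSuccLimit β → ∀ g ∈ group β, ∃ γ < β, g ∈ group γ
  top : group α = ⊤

namespace NormalizerChain

variable {α : Ordinal} {G : Ordinal → Type*} [∀ β, Group (G β)] {Γ Δ : Type*} [Group Γ] [Group Δ]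

/-- The preimage of a chain under a surjective homomorphism. -/
def comap (N : NormalizerChain α G Γ) (φ : Δ →* Γ) (hφ : Function.Surjective φ) :
    NormalizerChain α G Δ where
  group β := (N.group β).comap φ
  mono _ _ h := Subgroup.comap_mono (N.mono h)
  normalizer_eq β h1 hβ := by
    rw [← N.normalizer_eq β h1 hβ, Subgroup.comap_normalizer_eq_of_surjective _ hφ]
  exists_hom β h1 hβ := by
    obtain ⟨ψ, hψ, hker⟩ := N.exists_hom β h1 hβ
    exact ⟨ψ.comp (φ.subgroupComap _),
      hψ.comp (φ.subgroupComap_surjective_of_surjective _ hφ), fun k => hker _⟩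
  exists_lt β hβ g := N.exists_lt β hβ (φ g)
  top := by rw [N.top, Subgroup.comap_top]

end NormalizerChain

namespace HeisExt

variable {α : Ordinal} {G : Ordinal → Type*} [∀ β, Group (G β)] {Γ : Type*} [Group Γ]

/-- The subgroups of `HeisExt Γ` given by the preimages of a chain in `Γ`, with an abelian subgroup
put at the bottom. -/
def towerGroup (N : NormalizerChain α G Γ) (β : Ordinal) : Subgroup (HeisExt Γ) :=
  if β = 0 then cartan (N.group 1) else (N.group β).comap proj

variable (N : NormalizerChain α G Γ) {β : Ordinal}

theorem towerGroup_zero : towerGroup N 0 = cartan (N.group 1) := if_pos rfl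

theorem towerGroup_of_one_le (hβ : 1 ≤ β) : towerGroup N β = (N.group β).comap proj :=
  if_neg (zero_lt_one.trans_le hβ).ne'

theorem towerGroup_mono : Monotone (towerGroup N) := fun β γ h => by
  rcases eq_or_ne γ 0 with rfl | hγ
  · rw [nonpos_iff_eq_zero.1 h]
  rw [towerGroup_of_one_le N (Order.one_le_iff_ne_zero.2 hγ)]
  rcases eq_or_ne β 0 with rfl | hβ
  · rw [towerGroup_zero]
    exact cartan_le.trans (Subgroup.comap_mono (N.mono (Order.one_le_iff_ne_zero.2 hγ)))
  · rw [towerGroup_of_one_le N (Order.one_le_iff_ne_zero.2 hβ)]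
    exact Subgroup.comap_mono (N.mono h)

theorem exists_lt_mem_towerGroup (hβ : Order.IsSuccLimit β) {q : HeisExt Γ}
    (hq : q ∈ towerGroup N β) : ∃ γ < β, q ∈ towerGroup N γ := by
  have h1 : 1 < β := by simpa using hβ.add_one_lt hβ.bot_lt
  rw [towerGroup_of_one_le N h1.le] at hq
  obtain ⟨γ, hγ, hqγ⟩ := N.exists_lt β hβ _ hq
  refine ⟨max γ 1, max_lt hγ h1, ?_⟩
  rw [towerGroup_of_one_le N (le_max_right γ 1)]
  exact N.mono (le_max_left γ 1) hqγ

/-- The tower of subgroups of `HeisExt Γ` coming from a chain of subgroups of `Γ`. -/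
def subgroupTower (N : NormalizerChain α G Γ) (hinf : (N.group 1 : Set Γ).Infinite) (hα : 1 < α) :
    SubgroupTower α G (HeisExt Γ) where
  group := towerGroup N
  comm g hg h hh := by
    rw [towerGroup_zero] at hg hh
    exact cartan_comm hg hh
  infinite_conjOrbit_zero g hg := by
    rw [towerGroup_zero] at hg ⊢
    exact infinite_conjOrbit_cartan hg
  one_le_normalizer := by
    rw [towerGroup_zero, towerGroup_of_one_le N le_rfl]
    exact comap_le_normalizer_cartan
  exists_seq k hk := by
    rw [towerGroup_of_one_le N le_rfl] at hk
    rw [towerGroup_zero]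
    exact exists_seq_cartan hk
  zero_ne_one := by
    rw [towerGroup_zero, towerGroup_of_one_le N le_rfl]
    exact cartan_ne
  isRelICC_one := by
    rw [towerGroup_of_one_le N le_rfl]
    exact isRelICC_comap_proj hinf
  one_le β hβ := towerGroup_mono N hβ
  normalizer_eq β h1 hβ := by
    rw [towerGroup_of_one_le N h1, towerGroup_of_one_le N le_add_self]
    exact (N.comap proj proj_surjective).normalizer_eq β h1 hβ
  exists_hom β h1 hβ := by
    rw [towerGroup_of_one_le N h1, towerGroup_of_one_le N le_add_self]
    exact (N.comap proj proj_surjective).exists_hom β h1 hβ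
  limit β hβ _ q :=
    ⟨exists_lt_mem_towerGroup N hβ, fun ⟨_, hγ, hq⟩ => towerGroup_mono N hγ.le hq⟩
  top := by rw [towerGroup_of_one_le N hα.le, N.top, Subgroup.comap_top]

end HeisExt

theorem countable_subgroup_closure {G : Type*} [Group G] {s : Set G} (hs : s.Countable) :
    Countable (Subgroup.closure s) := by
  have := hs.to_subtype
  have hrange : (FreeGroup.lift ((↑) : s → G)).range = Subgroup.closure s := by
    rw [FreeGroup.range_lift_eq_closure, Subtype.range_coe]
  rw [← hrange]
  exact (FreeGroup.lift ((↑) : s → G)).rangeRestrict_surjective.countable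

theorem exists_orderIso_Ico_one {α : Ordinal} (hα : α.card ≤ Cardinal.aleph0) :
    ∃ (I : Type) (_ : LinearOrder I) (_ : Countable I), Nonempty (I ≃o Set.Ico 1 α) := by
  have h_Iio : Countable (Set.Iio α) := by
    rw [← Cardinal.mk_le_aleph0_iff, Cardinal.mk_Iio_ordinal]
    exact Cardinal.lift_le_aleph0.2 hα
  have h_Ico : Countable (Set.Ico 1 α) := Set.Countable.mono (fun x hx => hx.2) h_Iio
  have h_small : Small.{0} (Set.Ico 1 α) := Countable.toSmall _
  let e := (equivShrink (Set.Ico 1 α)).symm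
  let _ : LinearOrder (Shrink.{0} (Set.Ico 1 α)) := LinearOrder.lift' e e.injective
  exact ⟨Shrink.{0} (Set.Ico 1 α), inferInstance, e.injective.countable, ⟨⟨e, Iff.rfl⟩⟩⟩

namespace IteratedWreath

instance {I : Type*} [LinearOrder I] {G : I → Type*} [∀ i, Group (G i)] [Countable I]
    [∀ i, Countable (G i)] : Countable (wreath G) :=
  countable_subgroup_closure (Set.countable_range _)

section Upper

variable {I : Type*} [LinearOrder I] {f : I → Ordinal}

/-- The indices whose image under a monotone map is at least `β`. -/
def upper (hf : Monotone f) (β : Ordinal) : UpperSet I :=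
  ⟨{i | β ≤ f i}, fun _ _ h hi => le_trans hi (hf h)⟩

theorem upper_apply (hf : StrictMono f) (i : I) :
    upper hf.monotone (f i) = UpperSet.Ici i := by
  ext j
  exact hf.le_iff_le

theorem upper_apply_add_one (hf : StrictMono f) (i : I) :
    upper hf.monotone (f i + 1) = UpperSet.Ioi i := by
  ext j
  exact (Order.add_one_le_iff).trans hf.lt_iff_lt

variable {G : I → Type*} [∀ i, Group (G i)]

theorem stab_upper_mono (hf : Monotone f) : Monotone fun β => stab G (upper hf β) :=
  fun _ _ h _ hw i hi => hw i (h.trans hi)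

theorem exists_lt_mem_stab (hf : Monotone f) {β : Ordinal} (hβ : Order.IsSuccLimit β)
    {w : wreath G} (hw : w ∈ stab G (upper hf β)) : ∃ γ < β, w ∈ stab G (upper hf γ) := by
  have hfin := finite_support w
  refine ⟨hfin.toFinset.sup fun i => f i + 1, ?_, fun i hi => ?_⟩
  · refine (Finset.sup_lt_iff hβ.bot_lt).2 fun i hi => hβ.add_one_lt (not_le.1 fun h => ?_)
    exact hfin.mem_toFinset.1 hi (hw i h)
  · by_contra h
    have h_le_sup := Finset.le_sup (f := fun i => f i + 1) (hfin.mem_toFinset.2 h)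
    exact (Order.add_one_le_iff.1 (h_le_sup.trans hi)).false

end Upper

/-- The chain of stabilizers in the iterated wreath product of the groups `G β`, `1 ≤ β < α`. -/
def normalizerChain {I : Type*} [LinearOrder I] {α : Ordinal} (e : I ≃o Set.Ico 1 α)
    (G : Ordinal → Type*) [∀ β, Group (G β)] [∀ i, Nontrivial (G (e i))] :
    NormalizerChain α G (wreath fun i => G (e i)) :=
  have he : StrictMono fun i => (e i : Ordinal) := e.strictMono
  { group := fun β => stab _ (upper he.monotone β)
    mono := stab_upper_mono he.monotone
    normalizer_eq := fun β h1 hβ => by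
      obtain ⟨i, rfl⟩ : ∃ i, (e i : Ordinal) = β := ⟨e.symm ⟨β, h1, hβ⟩, by simp⟩
      rw [upper_apply he, upper_apply_add_one he, ← normalizer_stab]
    exists_hom := fun β h1 hβ => by
      obtain ⟨i, rfl⟩ : ∃ i, (e i : Ordinal) = β := ⟨e.symm ⟨β, h1, hβ⟩, by simp⟩
      rw [upper_apply he, upper_apply_add_one he]
      exact ⟨stabHom (G := fun i => G (e i)) i, stabHom_surjective (G := fun i => G (e i)) i,
        stabHom_eq_one_iff (G := fun i => G (e i))⟩
    exists_lt := fun β hβ _ => exists_lt_mem_stab he.monotone hβ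
    top := eq_top_iff.2 fun _ _ i hi => absurd (e i).2.2 (not_lt.2 hi) }

theorem isFolner_top_wreath {I : Type*} [LinearOrder I] [WellFoundedLT I] {G : I → Type*}
    [∀ i, Group (G i)] (h : ∀ i, IsAmenable (G i)) : IsFolner (⊤ : Subgroup (wreath G)) := by
  have hcomap := (isFolner_wreath h).comap (φ := (wreath G).subtype) Subtype.val_injective
    (by rw [Subgroup.range_subtype])
  rwa [Subgroup.comap_subtype, Subgroup.subgroupOf_self] at hcomap

end IteratedWreath

theorem isFolner_top_prod {Γ Δ : Type*} [Group Γ] [Group Δ] (hΓ : IsFolner (⊤ : Subgroup Γ))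
    (hΔ : IsFolner (⊤ : Subgroup Δ)) : IsFolner (⊤ : Subgroup (Γ × Δ)) := by
  have hinl := hΓ.map (φ := MonoidHom.inl Γ Δ) (Prod.mk_left_injective 1)
  have hinr := hΔ.map (φ := MonoidHom.inr Γ Δ) (Prod.mk_right_injective 1)
  have hsup := hinl.sup hinr
    (by
      rw [Subgroup.le_normalizer_iff]
      rintro _ ⟨a, -, rfl⟩ _ ⟨b, -, rfl⟩
      exact ⟨b, trivial, by ext <;> simp⟩)
    (by
      rw [eq_bot_iff]
      rintro _ ⟨⟨a, -, rfl⟩, b, -, hab⟩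
      have ha : a = 1 := (congrArg Prod.fst hab).symm
      simp [ha])
  convert hsup
  refine (eq_top_iff.2 fun x _ => ?_).symm
  rw [show x = (x.1, 1) * (1, x.2) by simp]
  exact mul_mem (Subgroup.mem_sup_left ⟨x.1, trivial, rfl⟩)
    (Subgroup.mem_sup_right ⟨x.2, trivial, rfl⟩)

theorem infinite_comap_fst {Γ Δ : Type*} [Group Γ] [Group Δ] [Infinite Δ] (H : Subgroup Γ) :
    (H.comap (MonoidHom.fst Γ Δ) : Set (Γ × Δ)).Infinite := by
  refine (Set.infinite_range_of_injective (Prod.mk_right_injective (β := Δ) (1 : Γ))).mono ?_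
  rintro _ ⟨n, rfl⟩
  exact one_mem H

open IteratedWreath in
theorem exists_subgroupTower (α : Ordinal) (hα : 1 < α) (hαcount : α.card ≤ Cardinal.aleph0)
    (G : Ordinal → Type) [∀ β, Group (G β)]
    (hGcount : ∀ β, 1 ≤ β → β < α → Countable (G β))
    (hGnontriv : ∀ β, 1 ≤ β → β < α → Nontrivial (G β))
    (hGamen : ∀ β, 1 ≤ β → β < α → IsAmenable (G β)) :
    ∃ (Γ : Type) (_ : Group Γ) (_ : Countable Γ), IsFolner (⊤ : Subgroup Γ) ∧
      Nonempty (SubgroupTower α G (HeisExt Γ)) := by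
  obtain ⟨I, _, _, ⟨e⟩⟩ := exists_orderIso_Ico_one hαcount
  have : WellFoundedLT I := e.strictMono.wellFoundedLT
  have (i : I) : Countable (G (e i)) := hGcount _ (e i).2.1 (e i).2.2
  have (i : I) : Nontrivial (G (e i)) := hGnontriv _ (e i).2.1 (e i).2.2
  have hwreath : IsFolner (⊤ : Subgroup (wreath fun i => G (e i))) :=
    isFolner_top_wreath fun i => hGamen _ (e i).2.1 (e i).2.2
  -- The factor `ℤ` makes all the subgroups of the chain infinite.
  let N := (normalizerChain e G).comap (MonoidHom.fst _ (Multiplicative ℤ)) Prod.fst_surjective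
  exact ⟨(wreath fun i => G (e i)) × Multiplicative ℤ, inferInstance, inferInstance,
    isFolner_top_prod hwreath IsFolner.int, ⟨HeisExt.subgroupTower N (infinite_comap_fst _) hα⟩⟩

/-! ### The spectrum of the centre -/

namespace Lamp

section Fourier

variable {Γ : Type*}

theorem neg_eq (c : Lamp Γ) : -c = c := by
  ext1 x
  rw [Finsupp.neg_apply, CharTwo.neg_eq]

variable (Γ) in
/-- The dual group of `Lamp Γ`; its Haar probability measure is only ever evaluated on cylinder
sets, so it carries no topology. -/
abbrev Dual : Type _ := Lamp Γ →+ ZMod 2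

/-- The nontrivial character of `ZMod 2`. -/
def sgn (t : ZMod 2) : ℂ := if t = 0 then 1 else -1

theorem sgn_zero : sgn 0 = 1 := if_pos rfl

theorem sgn_add (s t : ZMod 2) : sgn (s + t) = sgn s * sgn t := by
  have h : ∀ s t : ZMod 2, (s + t = 0 ↔ (s = 0 ↔ t = 0)) := by decide
  simp only [sgn, h]
  by_cases hs : s = 0 <;> by_cases ht : t = 0 <;> simp [hs, ht]

theorem sgn_injective : Function.Injective sgn := by
  have h : ∀ s t : ZMod 2, ((s = 0 ↔ t = 0) → s = t) := by decide
  intro s t hst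
  refine h s t ?_
  simp only [sgn] at hst
  by_cases hs : s = 0 <;> by_cases ht : t = 0 <;> simp_all <;> norm_num at hst

theorem conj_sgn (t : ZMod 2) : conj (sgn t) = sgn t := by
  rw [sgn]
  split_ifs <;> simp

theorem exists_dual_ne {c d : Lamp Γ} (h : c ≠ d) : ∃ x : Dual Γ, x c ≠ x d := by
  obtain ⟨u, hu⟩ := Finsupp.ne_iff.1 h
  obtain ⟨i, hi⟩ : ∃ i, (c u).coeff i ≠ (d u).coeff i := by
    by_contra! h
    exact hu (Polynomial.ext h)
  exact ⟨(Polynomial.lcoeff (ZMod 2) i).toAddMonoidHom.comp (Finsupp.applyAddHom u), hi⟩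

/-- The Fourier transform of the group algebra of `Lamp Γ`. -/
def fourierHom : AddMonoidAlgebra ℂ (Lamp Γ) →ₐ[ℂ] (Dual Γ → ℂ) :=
  AddMonoidAlgebra.lift ℂ _ _
    { toFun := fun c x => sgn (x c.toAdd)
      map_one' := by
        ext x
        simp [sgn_zero]
      map_mul' := fun c d => by
        ext x
        simp [sgn_add] }

theorem fourierHom_single (c : Lamp Γ) (z : ℂ) :
    fourierHom (AddMonoidAlgebra.single c z) = fun x => z * sgn (x c) := by
  rw [fourierHom, AddMonoidAlgebra.lift_single]
  rfl

theorem fourierHom_injective : Function.Injective (fourierHom (Γ := Γ)) := by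
  let χ : Lamp Γ → (Multiplicative (Dual Γ) →* ℂ) := fun c =>
    { toFun := fun x => sgn (x.toAdd c)
      map_one' := sgn_zero
      map_mul' := fun x y => sgn_add _ _ }
  have hχ : Function.Injective χ := fun c d h => by
    by_contra hne
    obtain ⟨x, hx⟩ := exists_dual_ne hne
    exact hx (sgn_injective (DFunLike.congr_fun h (Multiplicative.ofAdd x)))
  have hindep := (linearIndependent_monoidHom (Multiplicative (Dual Γ)) ℂ).comp χ hχ
  rw [injective_iff_map_eq_zero]
  intro a ha
  have h0 := linearIndependent_iff.1 hindep a.coeff ?_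
  · ext c
    simp [h0]
  · refine Eq.trans ?_ ha
    rw [fourierHom, AddMonoidAlgebra.lift_apply, Finsupp.linearCombination_apply]
    rfl

/-- A function on the dual is a cylinder function if it depends on finitely many coordinates. -/
def IsCylinder {β : Type*} (f : Dual Γ → β) : Prop :=
  ∃ S : Finset (Lamp Γ), ∀ x y : Dual Γ, (∀ c ∈ S, x c = y c) → f x = f y

namespace IsCylinder

variable {β δ : Type*} {f : Dual Γ → β}

theorem const (b : β) : IsCylinder fun _ : Dual Γ => b := ⟨∅, fun _ _ _ => rfl⟩

theorem eval (c : Lamp Γ) : IsCylinder fun x : Dual Γ => x c :=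
  ⟨{c}, fun _ _ h => h c (Finset.mem_singleton_self c)⟩

theorem comp (hf : IsCylinder f) (φ : β → δ) : IsCylinder fun x => φ (f x) := by
  obtain ⟨S, hS⟩ := hf
  exact ⟨S, fun x y h => congrArg φ (hS x y h)⟩

theorem ofReal {f : Dual Γ → ℝ} (hf : IsCylinder f) : IsCylinder fun x => (f x : ℂ) :=
  hf.comp _

theorem pi {ι : Type*} [Finite ι] {β : ι → Type*} {f : ∀ i, Dual Γ → β i}
    (hf : ∀ i, IsCylinder (f i)) : IsCylinder fun x i => f i x := by
  classical
  have := Fintype.ofFinite ι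
  choose S hS using hf
  refine ⟨Finset.univ.biUnion S, fun x y h => funext fun i => hS i x y fun c hc => ?_⟩
  exact h c (Finset.mem_biUnion.2 ⟨i, Finset.mem_univ i, hc⟩)

theorem comp₂ {ε : Type*} {g : Dual Γ → δ} (hf : IsCylinder f) (hg : IsCylinder g)
    (φ : β → δ → ε) : IsCylinder fun x => φ (f x) (g x) := by
  classical
  obtain ⟨S, hS⟩ := hf
  obtain ⟨T, hT⟩ := hg
  refine ⟨S ∪ T, fun x y h => congrArg₂ φ (hS x y fun c hc => ?_) (hT x y fun c hc => ?_)⟩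
  · exact h c (Finset.mem_union_left _ hc)
  · exact h c (Finset.mem_union_right _ hc)

theorem forall_finset {ι : Type*} {p : ι → Dual Γ → Prop} (D : Finset ι)
    (hp : ∀ i, IsCylinder (p i)) : IsCylinder fun x => ∀ i ∈ D, p i x := by
  simpa using (pi (ι := D) fun i => hp i).comp fun q => ∀ i, q i

theorem exists_finset {ι : Type*} {p : ι → Dual Γ → Prop} (D : Finset ι)
    (hp : ∀ i, IsCylinder (p i)) : IsCylinder fun x => ∃ i ∈ D, p i x := by
  simpa using (pi (ι := D) fun i => hp i).comp fun q => ∃ i, q i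

theorem sum {ι M : Type*} [AddCommMonoid M] (D : Finset ι) {f : ι → Dual Γ → M}
    (hf : ∀ i, IsCylinder (f i)) : IsCylinder fun x => ∑ i ∈ D, f i x := by
  classical
  induction D using Finset.induction_on with
  | empty => simpa using const (0 : M)
  | insert i D hi ih =>
    simp only [Finset.sum_insert hi]
    exact (hf i).comp₂ ih (· + ·)

theorem comp_affine (hf : IsCylinder f) (φ : Lamp Γ →+ Lamp Γ) (x₀ : Dual Γ) :
    IsCylinder fun x : Dual Γ => f (x.comp φ + x₀) := by
  classical
  obtain ⟨S, hS⟩ := hf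
  refine ⟨S.image φ, fun x y h => hS _ _ fun c hc => ?_⟩
  simp [h (φ c) (Finset.mem_image_of_mem _ hc)]

theorem exists_eq_comp (hf : IsCylinder f) :
    ∃ (S : Finset (Lamp Γ)) (F : (S → ZMod 2) → β), ∀ x, f x = F fun c => x c := by
  obtain ⟨S, hS⟩ := hf
  have : Nonempty β := ⟨f 0⟩
  have hfac : f.FactorsThrough fun (x : Dual Γ) (c : S) => x c := fun x y h =>
    hS x y fun c hc => congrFun h ⟨c, hc⟩
  obtain ⟨F, hF⟩ := (Function.factorsThrough_iff f).1 hfac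
  exact ⟨S, F, congrFun hF⟩

theorem finite_range (hf : IsCylinder f) : (Set.range f).Finite := by
  obtain ⟨S, F, hF⟩ := hf.exists_eq_comp
  refine (Set.finite_range F).subset ?_
  rintro _ ⟨x, rfl⟩
  exact ⟨_, (hF x).symm⟩

end IsCylinder

theorem isCylinder_fourierHom (a : AddMonoidAlgebra ℂ (Lamp Γ)) : IsCylinder (fourierHom a) := by
  induction a using AddMonoidAlgebra.induction_linear with
  | zero => simpa using! IsCylinder.const 0
  | add a b ha hb => simpa using! ha.comp₂ hb (· + ·)
  | single c z => simpa only [fourierHom_single] using (IsCylinder.eval c).comp fun t => z * sgn t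

theorem indicator_coord_mem_range_fourierHom (c : Lamp Γ) (t : ZMod 2) :
    (fun x : Dual Γ => if x c = t then (1 : ℂ) else 0) ∈ fourierHom.range := by
  refine ⟨AddMonoidAlgebra.single 0 (1 / 2) + AddMonoidAlgebra.single c (sgn t / 2), ?_⟩
  ext x
  have h : ∀ s t : ZMod 2, (s = t ↔ (s = 0 ↔ t = 0)) := by decide
  change fourierHom _ x = _
  simp only [map_add, Pi.add_apply, fourierHom_single, map_zero, h (x c) t, sgn]
  by_cases h1 : x c = 0 <;> by_cases h2 : t = 0 <;> simp [h1, h2] <;> norm_num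

theorem IsCylinder.exists_fourierHom_eq {f : Dual Γ → ℂ} (hf : IsCylinder f) :
    ∃ a, fourierHom a = f := by
  classical
  change f ∈ fourierHom.range
  obtain ⟨S, F, hF⟩ := hf.exists_eq_comp
  have hsum : f = ∑ p : S → ZMod 2, F p • ∏ c : S,
      fun x : Dual Γ => if x c = p c then (1 : ℂ) else 0 := by
    ext x
    rw [Finset.sum_apply, Finset.sum_eq_single fun c : S => x c]
    · simp [hF x]
    · intro p _ hp
      obtain ⟨c, hc⟩ := Function.ne_iff.1 hp
      rw [Pi.smul_apply, Finset.prod_apply,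
        Finset.prod_eq_zero (Finset.mem_univ c) (if_neg (Ne.symm hc)), smul_zero]
    · simp
  rw [hsum]
  exact sum_mem fun p _ => Subalgebra.smul_mem _
    (prod_mem fun (c : S) _ => indicator_coord_mem_range_fourierHom (c : Lamp Γ) (p c)) _

@[elab_as_elim]
theorem IsCylinder.induction_on {P : ∀ f : Dual Γ → ℂ, IsCylinder f → Prop}
    (character : ∀ c z, P (fun x => z * sgn (x c)) ((IsCylinder.eval c).comp fun t => z * sgn t))
    (add : ∀ f g hf hg, P f hf → P g hg → P (fun x => f x + g x) (hf.comp₂ hg (· + ·)))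
    {f : Dual Γ → ℂ} (hf : IsCylinder f) : P f hf := by
  obtain ⟨a, rfl⟩ := hf.exists_fourierHom_eq
  induction a using AddMonoidAlgebra.induction_linear with
  | zero => simpa using! character 0 0
  | add a b ha hb =>
    simpa using! add _ _ _ _ (ha (isCylinder_fourierHom a)) (hb (isCylinder_fourierHom b))
  | single c z => simpa only [fourierHom_single] using character c z

open Classical in
/-- The real-valued indicator function of a predicate on the dual. -/
def indicator (p : Dual Γ → Prop) (x : Dual Γ) : ℝ := if p x then 1 else 0

theorem IsCylinder.indicator {p : Dual Γ → Prop} (hp : IsCylinder p) :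
    IsCylinder (Lamp.indicator p) := by
  classical
  exact hp.comp fun t => if t then (1 : ℝ) else 0

theorem indicator_nonneg (p : Dual Γ → Prop) (x : Dual Γ) : 0 ≤ indicator p x := by
  rw [indicator]
  split_ifs <;> norm_num

end Fourier

variable {Γ : Type*} [Group Γ]

/-- The action of `Γ` on the dual of `Lamp Γ`. -/
def act (g : Γ) (x : Dual Γ) : Dual Γ := x.comp (DistribSMul.toAddMonoidHom (Lamp Γ) g⁻¹)

theorem act_apply (g : Γ) (x : Dual Γ) (c : Lamp Γ) : act g x c = x (g⁻¹ • c) := rfl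

theorem act_act (g h : Γ) (x : Dual Γ) : act g (act h x) = act (g * h) x := by
  refine DFunLike.ext _ _ fun c => ?_
  simp [act_apply, mul_smul]

theorem act_one (x : Dual Γ) : act 1 x = x := by
  refine DFunLike.ext _ _ fun c => ?_
  simp [act_apply]

theorem IsCylinder.act {β : Type*} {f : Dual Γ → β} (hf : IsCylinder f) (g : Γ) :
    IsCylinder fun x => f (Lamp.act g x) := by
  simpa only [add_zero] using! hf.comp_affine (DistribSMul.toAddMonoidHom (Lamp Γ) g⁻¹) 0

end Lamp

namespace HeisExt

open Ell2 GroupVN Lamp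

section Central

variable {Γ : Type*} [Group Γ]

theorem central_zero : central (0 : Lamp Γ) = 1 := rfl

theorem central_add (c d : Lamp Γ) : central (c + d) = central c * central d := by
  ext1 <;> simp [central]

theorem mul_central (q : HeisExt Γ) (c : Lamp Γ) :
    q * central c = central (q.g • c) * q := by
  ext1 <;> simp [central, add_comm]

theorem central_injective : Function.Injective (central (Γ := Γ)) := fun c d h => by
  simpa [central] using h

theorem central_inv (c : Lamp Γ) : (central c)⁻¹ = central c := by
  rw [inv_eq_iff_mul_eq_one, ← central_add, ← central_zero]
  nth_rw 1 [← neg_eq c]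
  rw [neg_add_cancel]

end Central

variable {Γ : Type} [Group Γ]

/-- The action of the group algebra of `Lamp Γ`, as the centre of the Heisenberg group, on `ℓ²`. -/
def centralRep : AddMonoidAlgebra ℂ (Lamp Γ) →ₐ[ℂ] (Ell2 (HeisExt Γ) →L[ℂ] Ell2 (HeisExt Γ)) :=
  AddMonoidAlgebra.lift ℂ _ _
    { toFun := fun c => left (central c.toAdd)
      map_one' := left_one
      map_mul' := fun c d => by rw [toAdd_mul, central_add, left_mul] }

theorem centralRep_single (c : Lamp Γ) (z : ℂ) :
    centralRep (AddMonoidAlgebra.single c z) = z • left (central c) := by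
  rw [centralRep, AddMonoidAlgebra.lift_single]
  rfl

variable (Γ) in
/-- The linear span of the translations by the centre of the Heisenberg group. -/
def centralSpan : Submodule ℂ (Ell2 (HeisExt Γ) →L[ℂ] Ell2 (HeisExt Γ)) :=
  Submodule.span ℂ (Set.range fun c : Lamp Γ => left (central c))

theorem centralRep_mem_centralSpan (a : AddMonoidAlgebra ℂ (Lamp Γ)) :
    centralRep a ∈ centralSpan Γ := by
  rw [centralRep, AddMonoidAlgebra.lift_apply]
  exact sum_mem fun c _ => Submodule.smul_mem _ _ (Submodule.subset_span ⟨c, rfl⟩)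

open Classical in
/-- The operator in the centre of the Heisenberg group algebra with Fourier transform `f`. The
junk value `0` is taken when `f` is not a cylinder function. -/
def spectralOp (f : Dual Γ → ℂ) : Ell2 (HeisExt Γ) →L[ℂ] Ell2 (HeisExt Γ) :=
  if h : ∃ a, fourierHom a = f then centralRep h.choose else 0

theorem spectralOp_fourierHom (a : AddMonoidAlgebra ℂ (Lamp Γ)) :
    spectralOp (fourierHom a) = centralRep a := by
  have h : ∃ b, fourierHom b = fourierHom a := ⟨a, rfl⟩
  rw [spectralOp, dif_pos h, fourierHom_injective h.choose_spec]

theorem spectralOp_mem_centralSpan (f : Dual Γ → ℂ) : spectralOp f ∈ centralSpan Γ := by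
  rw [spectralOp]
  split_ifs with h
  · exact centralRep_mem_centralSpan _
  · exact zero_mem _

theorem spectralOp_mem_groupVN (f : Dual Γ → ℂ) : spectralOp f ∈ groupVN (HeisExt Γ) := by
  have hle : centralSpan Γ ≤ (groupVN (HeisExt Γ)).toSubalgebra.toSubmodule := by
    rw [centralSpan, Submodule.span_le]
    rintro _ ⟨c, rfl⟩
    exact left_mem_groupVN _
  exact hle (spectralOp_mem_centralSpan f)

theorem spectralOp_character (c : Lamp Γ) (z : ℂ) :
    spectralOp (fun x => z * sgn (x c)) = z • left (central c) := by
  rw [← fourierHom_single, spectralOp_fourierHom, centralRep_single]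

theorem spectralOp_const (z : ℂ) : spectralOp (fun _ : Dual Γ => z) = z • 1 := by
  simpa [sgn_zero, central_zero, left_one] using spectralOp_character (0 : Lamp Γ) z

theorem spectralOp_mul {f g : Dual Γ → ℂ} (hf : IsCylinder f) (hg : IsCylinder g) :
    spectralOp (fun x => f x * g x) = spectralOp f * spectralOp g := by
  obtain ⟨a, rfl⟩ := hf.exists_fourierHom_eq
  obtain ⟨b, rfl⟩ := hg.exists_fourierHom_eq
  rw [spectralOp_fourierHom, spectralOp_fourierHom, ← map_mul, ← spectralOp_fourierHom, map_mul]
  rfl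

theorem spectralOp_add {f g : Dual Γ → ℂ} (hf : IsCylinder f) (hg : IsCylinder g) :
    spectralOp (fun x => f x + g x) = spectralOp f + spectralOp g := by
  obtain ⟨a, rfl⟩ := hf.exists_fourierHom_eq
  obtain ⟨b, rfl⟩ := hg.exists_fourierHom_eq
  rw [spectralOp_fourierHom, spectralOp_fourierHom, ← map_add, ← spectralOp_fourierHom, map_add]
  rfl

theorem spectralOp_sum {ι : Type*} (D : Finset ι) {f : ι → Dual Γ → ℂ}
    (hf : ∀ i, IsCylinder (f i)) :
    spectralOp (fun x => ∑ i ∈ D, f i x) = ∑ i ∈ D, spectralOp (f i) := by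
  classical
  induction D using Finset.induction_on with
  | empty => simpa using spectralOp_const (0 : ℂ)
  | insert i D hi ih =>
    simp only [Finset.sum_insert hi]
    rw [spectralOp_add (hf i) (.sum D hf), ih]

theorem star_spectralOp {f : Dual Γ → ℂ} (hf : IsCylinder f) :
    star (spectralOp f) = spectralOp fun x => conj (f x) := by
  induction hf using IsCylinder.induction_on with
  | character c z =>
    simp only [map_mul, conj_sgn]
    rw [spectralOp_character, spectralOp_character, star_smul, star_left, central_inv]
    rfl
  | add f g hf hg ihf ihg =>
    simp only [map_add]
    rw [spectralOp_add hf hg, star_add, ihf, ihg, ← spectralOp_add (hf.comp _) (hg.comp _)]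

theorem left_mul_spectralOp {f : Dual Γ → ℂ} (hf : IsCylinder f) (q : HeisExt Γ) :
    left q * spectralOp f = spectralOp (fun x => f (act q.g⁻¹ x)) * left q := by
  induction hf using IsCylinder.induction_on with
  | character c z =>
    simp only [act_apply, inv_inv]
    rw [spectralOp_character, spectralOp_character, mul_smul_comm, smul_mul_assoc, ← left_mul,
      ← left_mul, mul_central]
  | add f g hf hg ihf ihg =>
    rw [spectralOp_add hf hg, mul_add, ihf, ihg, ← add_mul, ← spectralOp_add (hf.act _) (hg.act _)]

theorem coef_spectralOp_affine {f : Dual Γ → ℂ} (hf : IsCylinder f) {φ : Lamp Γ →+ Lamp Γ}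
    (hφ : Function.Injective φ) (x₀ : Dual Γ) :
    coef (spectralOp fun x : Dual Γ => f (x.comp φ + x₀)) 1 1 = coef (spectralOp f) 1 1 := by
  induction hf using IsCylinder.induction_on with
  | character c z =>
    have hchar : (fun x : Dual Γ => z * sgn ((x.comp φ + x₀) c)) =
        fun x => z * sgn (x₀ c) * sgn (x (φ c)) := by
      ext x
      rw [AddMonoidHom.add_apply, sgn_add, AddMonoidHom.comp_apply]
      ring
    have hcentral : ∀ d : Lamp Γ, (1 = central d * 1) = (d = 0) := fun d => by
      rw [mul_one, ← central_zero, central_injective.eq_iff]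
      exact propext eq_comm
    classical
    rw [hchar, spectralOp_character, spectralOp_character, coef_smul, coef_smul, coef_left,
      coef_left]
    simp only [hcentral, map_eq_zero_iff φ hφ]
    by_cases hc : c = 0 <;> simp [hc, sgn_zero]
  | add f g hf hg ihf ihg =>
    rw [spectralOp_add (hf.comp_affine φ x₀) (hg.comp_affine φ x₀), spectralOp_add hf hg, coef_add,
      coef_add, ihf, ihg]

/-- The integral of a real cylinder function against Haar measure on the dual, read off from the
canonical trace. -/
def haarMean (f : Dual Γ → ℝ) : ℝ := (coef (spectralOp fun x => (f x : ℂ)) 1 1).re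

theorem norm_spectralOp_basis_sq {f : Dual Γ → ℂ} (hf : IsCylinder f) (q : HeisExt Γ) :
    ‖spectralOp f (basis q)‖ ^ 2 = haarMean fun x => ‖f x‖ ^ 2 := by
  have hstar : (spectralOp fun x => (((‖f x‖ ^ 2 : ℝ)) : ℂ)) =
      star (spectralOp f) * spectralOp f := by
    rw [star_spectralOp hf, ← spectralOp_mul (hf.comp _) hf]
    congr 1
    ext x
    rw [← Complex.normSq_eq_conj_mul_self, Complex.normSq_eq_norm_sq]
  have hdiag := coef_eq (spectralOp_mem_groupVN fun x => (((‖f x‖ ^ 2 : ℝ)) : ℂ)) q q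
  rw [mul_inv_cancel] at hdiag
  rw [haarMean, ← hdiag, hstar, coef_eq_inner, mul_apply_eq_comp,
    ContinuousLinearMap.star_eq_adjoint, ContinuousLinearMap.adjoint_inner_right,
    inner_self_eq_norm_sq_to_K]
  norm_cast

theorem haarMean_nonneg {f : Dual Γ → ℝ} (hf : IsCylinder f) (h : ∀ x, 0 ≤ f x) :
    0 ≤ haarMean f := by
  have hsqrt : (fun x => ‖((√(f x) : ℝ) : ℂ)‖ ^ 2) = f := by
    ext x
    rw [Complex.norm_real, Real.norm_eq_abs, sq_abs, Real.sq_sqrt (h x)]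
  rw [← hsqrt, ← norm_spectralOp_basis_sq (hf.comp fun t => ((√t : ℝ) : ℂ)) 1]
  positivity

theorem haarMean_add {f g : Dual Γ → ℝ} (hf : IsCylinder f) (hg : IsCylinder g) :
    haarMean (fun x => f x + g x) = haarMean f + haarMean g := by
  simp only [haarMean, Complex.ofReal_add]
  rw [spectralOp_add hf.ofReal hg.ofReal, coef_add, Complex.add_re]

theorem haarMean_const (r : ℝ) : haarMean (fun _ : Dual Γ => r) = r := by
  rw [haarMean, spectralOp_const, coef_smul, coef_one]
  simp

theorem haarMean_mono {f g : Dual Γ → ℝ} (hf : IsCylinder f) (hg : IsCylinder g)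
    (h : ∀ x, f x ≤ g x) : haarMean f ≤ haarMean g := by
  have hgf : IsCylinder fun x => g x - f x := hg.comp₂ hf (· - ·)
  have hnonneg := haarMean_nonneg hgf fun x => sub_nonneg.2 (h x)
  have hadd := haarMean_add hgf hf
  simp only [sub_add_cancel] at hadd
  linarith

theorem haarMean_sum {ι : Type*} (D : Finset ι) {f : ι → Dual Γ → ℝ} (hf : ∀ i, IsCylinder (f i)) :
    haarMean (fun x => ∑ i ∈ D, f i x) = ∑ i ∈ D, haarMean (f i) := by
  classical
  induction D using Finset.induction_on with
  | empty => simp [haarMean_const]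
  | insert i D hi ih =>
    simp only [Finset.sum_insert hi]
    rw [haarMean_add (hf i) (.sum D hf), ih]

/-- The Haar measure of a cylinder set. -/
def haarProb (p : Dual Γ → Prop) : ℝ := haarMean (indicator p)

theorem haarProb_nonneg {p : Dual Γ → Prop} (hp : IsCylinder p) : 0 ≤ haarProb p :=
  haarMean_nonneg hp.indicator (indicator_nonneg p)

theorem haarProb_le_sum {ι : Type*} (D : Finset ι) {p : Dual Γ → Prop} {q : ι → Dual Γ → Prop}
    (hp : IsCylinder p) (hq : ∀ i, IsCylinder (q i)) (h : ∀ x, p x → ∃ i ∈ D, q i x) :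
    haarProb p ≤ ∑ i ∈ D, haarProb (q i) := by
  simp only [haarProb]
  rw [← haarMean_sum D fun i => (hq i).indicator]
  refine haarMean_mono hp.indicator (.sum D fun i => (hq i).indicator) fun x => ?_
  by_cases hx : p x
  · obtain ⟨i, hi, hix⟩ := h x hx
    refine le_trans ?_ (Finset.single_le_sum (fun j _ => indicator_nonneg (q j) x) hi)
    simp [indicator, hx, hix]
  · rw [show indicator p x = 0 from if_neg hx]
    exact Finset.sum_nonneg fun j _ => indicator_nonneg (q j) x

theorem haarProb_mono {p q : Dual Γ → Prop} (hp : IsCylinder p) (hq : IsCylinder q)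
    (h : ∀ x, p x → q x) : haarProb p ≤ haarProb q := by
  simpa using haarProb_le_sum {()} hp (fun _ => hq) fun x hx =>
    ⟨(), Finset.mem_singleton_self _, h x hx⟩

theorem sum_haarProb_le_one {ι : Type*} (D : Finset ι) {q : ι → Dual Γ → Prop}
    (hq : ∀ i, IsCylinder (q i)) (h : ∀ x, ∀ i ∈ D, ∀ j ∈ D, q i x → q j x → i = j) :
    ∑ i ∈ D, haarProb (q i) ≤ 1 := by
  simp only [haarProb]
  rw [← haarMean_sum D fun i => (hq i).indicator, ← haarMean_const (Γ := Γ) 1]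
  refine haarMean_mono (.sum D fun i => (hq i).indicator) (.const 1) fun x => ?_
  by_cases hx : ∃ i ∈ D, q i x
  · obtain ⟨i, hi, hix⟩ := hx
    rw [Finset.sum_eq_single_of_mem i hi fun j hj hne => ?_]
    · simp [indicator, hix]
    · exact if_neg fun hj' => hne (h x j hj i hi hj' hix)
  · have hzero : ∀ i ∈ D, indicator (q i) x = 0 := fun i hi => if_neg fun h => hx ⟨i, hi, h⟩
    rw [Finset.sum_eq_zero hzero]
    exact zero_le_one

theorem haarProb_affine {p : Dual Γ → Prop} (hp : IsCylinder p) {φ : Lamp Γ →+ Lamp Γ}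
    (hφ : Function.Injective φ) (x₀ : Dual Γ) :
    haarProb (fun x : Dual Γ => p (x.comp φ + x₀)) = haarProb p :=
  congrArg Complex.re (coef_spectralOp_affine hp.indicator.ofReal hφ x₀)

theorem haarProb_act {p : Dual Γ → Prop} (hp : IsCylinder p) (g : Γ) :
    haarProb (fun x => p (act g x)) = haarProb p := by
  simpa only [add_zero] using! haarProb_affine hp (φ := DistribSMul.toAddMonoidHom (Lamp Γ) g⁻¹)
    (MulAction.injective g⁻¹) 0

/-- The projection in the centre of the Heisenberg group algebra whose Fourier transform is the
indicator function of a cylinder set. -/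
def spectralProj (p : Dual Γ → Prop) : Ell2 (HeisExt Γ) →L[ℂ] Ell2 (HeisExt Γ) :=
  spectralOp fun x => (indicator p x : ℂ)

theorem spectralProj_and {p q : Dual Γ → Prop} (hp : IsCylinder p) (hq : IsCylinder q) :
    spectralProj (fun x => p x ∧ q x) = spectralProj p * spectralProj q := by
  rw [spectralProj, spectralProj, spectralProj,
    ← spectralOp_mul hp.indicator.ofReal hq.indicator.ofReal]
  congr 1
  ext x
  by_cases h1 : p x <;> by_cases h2 : q x <;> simp [indicator, h1, h2]

theorem spectralProj_true : spectralProj (fun _ : Dual Γ => True) = 1 := by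
  simpa [spectralProj, indicator] using spectralOp_const (Γ := Γ) 1

theorem spectralProj_eq_zero {p : Dual Γ → Prop} (hp : ∀ x, ¬p x) : spectralProj p = 0 := by
  simpa [spectralProj, indicator, hp] using spectralOp_const (Γ := Γ) 0

theorem spectralProj_add_spectralProj_not {p : Dual Γ → Prop} (hp : IsCylinder p) :
    spectralProj p + spectralProj (fun x => ¬p x) = 1 := by
  rw [spectralProj, spectralProj,
    ← spectralOp_add hp.indicator.ofReal (hp.comp Not).indicator.ofReal, ← spectralProj_true,
    spectralProj]
  congr 1
  ext x
  by_cases hx : p x <;> simp [indicator, hx]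

theorem star_spectralProj {p : Dual Γ → Prop} (hp : IsCylinder p) :
    star (spectralProj p) = spectralProj p := by
  rw [spectralProj, star_spectralOp hp.indicator.ofReal]
  simp only [Complex.conj_ofReal]

theorem sum_spectralProj {ι : Type*} (D : Finset ι) {f : Dual Γ → ι} {p : Dual Γ → Prop}
    (hf : IsCylinder f) (hp : IsCylinder p) (h : ∀ x, p x → f x ∈ D) :
    ∑ i ∈ D, spectralProj (fun x => p x ∧ f x = i) = spectralProj p := by
  have hfiber : ∀ i, IsCylinder fun x => p x ∧ f x = i := fun i =>
    hp.comp₂ hf fun a b => a ∧ b = i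
  simp only [spectralProj]
  rw [← spectralOp_sum D fun i => (hfiber i).indicator.ofReal]
  congr 1
  ext x
  by_cases hx : p x
  · rw [Finset.sum_eq_single_of_mem (f x) (h x hx)]
    · simp [indicator, hx]
    · intro i _ hne
      simp [indicator, hne.symm]
  · simp [indicator, hx]

theorem left_mul_spectralProj {p : Dual Γ → Prop} (hp : IsCylinder p) (q : HeisExt Γ) :
    left q * spectralProj p = spectralProj (fun x => p (act q.g⁻¹ x)) * left q :=
  left_mul_spectralOp hp.indicator.ofReal q

theorem norm_spectralProj_basis {p : Dual Γ → Prop} (hp : IsCylinder p) (q : HeisExt Γ) :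
    ‖spectralProj p (basis q)‖ = √(haarProb p) := by
  have hsq : (fun x => ‖(indicator p x : ℂ)‖ ^ 2) = indicator p := by
    ext x
    rw [indicator]
    split_ifs <;> simp
  have hnorm := norm_spectralOp_basis_sq hp.indicator.ofReal q
  rw [hsq] at hnorm
  rw [haarProb, ← hnorm, Real.sqrt_sq (norm_nonneg _), spectralProj]

end HeisExt

/-! ### Finite equivariant relations -/

open scoped Pointwise symmDiff Finset

namespace Lamp

open Finsupp Polynomial

section Label

variable {Γ : Type*} {b : ℕ} {U W : Finset Γ} {u v : Γ} {x : Dual Γ}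

/-- The label of a group element, read off from the first `b` coordinates of a character. -/
def label (b : ℕ) (u : Γ) (x : Dual Γ) : Fin (Fintype.card (Fin b → ZMod 2)) :=
  Fintype.equivFin (Fin b → ZMod 2) fun i => x (single u (X ^ (i : ℕ)))

theorem label_eq_label_iff : label b u x = label b v x ↔
    ∀ i : Fin b, x (single u (X ^ (i : ℕ))) = x (single v (X ^ (i : ℕ))) := by
  rw [label, label, (Fintype.equivFin _).apply_eq_iff_eq, funext_iff]

theorem label_comp_mapDomain (b : ℕ) (e : Equiv.Perm Γ) (u : Γ) (x : Dual Γ) :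
    label b u (x.comp (mapDomain.addMonoidHom e)) = label b (e u) x := by
  simp [label, mapDomain_single]

theorem isCylinder_label (b : ℕ) (u : Γ) : IsCylinder (label b u) :=
  (IsCylinder.pi fun i : Fin b => .eval (single u (X ^ (i : ℕ)))).comp (Fintype.equivFin _)

theorem isCylinder_label_eq (b : ℕ) (u v : Γ) : IsCylinder fun x => label b u x = label b v x :=
  (isCylinder_label b u).comp₂ (isCylinder_label b v) (· = ·)

/-- The label of `u` is the strict minimum over `U`. -/
def IsLabelMin (b : ℕ) (U : Finset Γ) (u : Γ) (x : Dual Γ) : Prop :=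
  u ∈ U ∧ ∀ v ∈ U, v ≠ u → label b u x < label b v x

theorem isCylinder_isLabelMin (b : ℕ) (U : Finset Γ) (u : Γ) : IsCylinder (IsLabelMin b U u) := by
  have hlt : ∀ v, IsCylinder fun x => v ≠ u → label b u x < label b v x := fun v =>
    (isCylinder_label b u).comp₂ (isCylinder_label b v) fun s t => v ≠ u → s < t
  exact (IsCylinder.forall_finset U hlt).comp fun p => u ∈ U ∧ p

theorem IsLabelMin.mono (hu : IsLabelMin b W u x) (hUW : U ⊆ W) (huU : u ∈ U) :
    IsLabelMin b U u x :=
  ⟨huU, fun v hv => hu.2 v (hUW hv)⟩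

theorem IsLabelMin.unique (hu : IsLabelMin b U u x) (hv : IsLabelMin b U v x) : u = v := by
  by_contra h
  exact lt_asymm (hu.2 v hv.1 (Ne.symm h)) (hv.2 u hu.1 h)

theorem exists_isLabelMin (hU : U.Nonempty) (h : (U : Set Γ).InjOn fun u => label b u x) :
    ∃ u, IsLabelMin b U u x := by
  obtain ⟨u, hu, hmin⟩ := U.exists_min_image (fun u => label b u x) hU
  exact ⟨u, hu, fun v hv hne => lt_of_le_of_ne (hmin v hv) fun h' => hne (h hv hu h'.symm)⟩

theorem isLabelMin_comp_mapDomain (b : ℕ) (U : Finset Γ) (u : Γ) (e : Equiv.Perm Γ) (x : Dual Γ) :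
    IsLabelMin b U u (x.comp (mapDomain.addMonoidHom e)) ↔
      IsLabelMin b (U.map e.toEmbedding) (e u) x := by
  simp only [IsLabelMin, label_comp_mapDomain, Finset.mem_map_equiv, Equiv.symm_apply_apply]
  refine and_congr_right fun _ => e.forall_congr fun v => ?_
  rw [Equiv.symm_apply_apply, e.injective.ne_iff]

/-- The label has its strict minimum over `U` and its strict minimum over `W` at the same place. -/
def ShareMin (b : ℕ) (U W : Finset Γ) (x : Dual Γ) : Prop :=
  ∃ u, IsLabelMin b U u x ∧ IsLabelMin b W u x

theorem isCylinder_shareMin (b : ℕ) (U W : Finset Γ) : IsCylinder (ShareMin b U W) := by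
  have h := IsCylinder.exists_finset U fun u =>
    (isCylinder_isLabelMin b U u).comp₂ (isCylinder_isLabelMin b W u) (· ∧ ·)
  refine (congrArg IsCylinder (funext fun x => propext ⟨?_, ?_⟩)).mp h
  · rintro ⟨u, -, hu⟩
    exact ⟨u, hu⟩
  · rintro ⟨u, hu⟩
    exact ⟨u, hu.1.1, hu⟩

theorem shareMin_of_injOn [DecidableEq Γ] (hU : U.Nonempty)
    (hinj : ((U ∪ W : Finset Γ) : Set Γ).InjOn fun u => label b u x)
    (hmin : ∀ u ∈ U ∆ W, ¬IsLabelMin b (U ∪ W) u x) : ShareMin b U W x := by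
  obtain ⟨u, hu⟩ := exists_isLabelMin (hU.mono Finset.subset_union_left) hinj
  have huUW : u ∈ U ∧ u ∈ W := by
    have hmem := Finset.mem_union.1 hu.1
    have hnot := fun h => hmin u h hu
    rw [Finset.mem_symmDiff] at hnot
    tauto
  exact ⟨u, hu.mono Finset.subset_union_left huUW.1, hu.mono Finset.subset_union_right huUW.2⟩

end Label

variable {Γ : Type*} [Group Γ]

theorem label_act (b : ℕ) (g u : Γ) (x : Dual Γ) : label b (g * u) (act g x) = label b u x := by
  simp [label, act_apply]

theorem isLabelMin_act [DecidableEq Γ] (b : ℕ) (U : Finset Γ) (g u : Γ) (x : Dual Γ) :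
    IsLabelMin b (g • U) (g * u) (act g x) ↔ IsLabelMin b U u x := by
  simp only [IsLabelMin, Finset.mem_smul_finset, forall_exists_index, and_imp,
    forall_apply_eq_imp_iff₂, smul_eq_mul, label_act, ne_eq, mul_right_inj, exists_eq_right]

theorem shareMin_act [DecidableEq Γ] (b : ℕ) (U W : Finset Γ) (g : Γ) (x : Dual Γ) :
    ShareMin b (g • U) (g • W) (act g x) ↔ ShareMin b U W x := by
  simp only [ShareMin, ← isLabelMin_act b _ g _ x]
  exact (Equiv.mulLeft g).symm.exists_congr fun u => by simp

/-- An equivariant family of finite equivalence relations on `Γ`, continuously parametrised by the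
dual of `Lamp Γ`. -/
structure FinRel (Γ : Type*) [Group Γ] where
  rel : Dual Γ → Γ → Γ → Prop
  equiv : ∀ x, Equivalence (rel x)
  rel_act : ∀ x k g h, rel (act k x) (k * g) (k * h) ↔ rel x g h
  bound : Finset Γ
  mem_bound : ∀ x h, rel x 1 h → h ∈ bound
  isCylinder : ∀ g h, IsCylinder fun x => rel x g h

namespace FinRel

variable (E N : FinRel Γ) {x : Dual Γ} {g h : Γ}

variable (Γ) in
/-- The relation of equality. -/
def eq : FinRel Γ where
  rel _ g h := g = h
  equiv _ := eq_equivalence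
  rel_act _ k _ _ := mul_right_inj k
  bound := {1}
  mem_bound _ _ hh := Finset.mem_singleton.2 hh.symm
  isCylinder _ _ := .const _

/-- Two group elements are related if they are equal or if the label has its strict minima over
their translates of `K` at the same place. -/
def sameMin [DecidableEq Γ] (b : ℕ) (K : Finset Γ) : FinRel Γ where
  rel x g h := g = h ∨ ShareMin b (g • K) (h • K) x
  equiv x :=
    { refl := fun _ => Or.inl rfl
      symm := by
        rintro g h (rfl | ⟨u, hg, hh⟩)
        · exact Or.inl rfl
        · exact Or.inr ⟨u, hh, hg⟩
      trans := by
        rintro g h k (rfl | ⟨u, hgu, hhu⟩) (rfl | ⟨v, hhv, hkv⟩)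
        · exact Or.inl rfl
        · exact Or.inr ⟨v, hhv, hkv⟩
        · exact Or.inr ⟨u, hgu, hhu⟩
        · obtain rfl := hhu.unique hhv
          exact Or.inr ⟨u, hgu, hkv⟩ }
  rel_act x k g h := by rw [mul_right_inj, mul_smul, mul_smul, shareMin_act]
  bound := insert 1 (K * K⁻¹)
  mem_bound x h := by
    rintro (rfl | ⟨u, hu, hhu⟩)
    · exact Finset.mem_insert_self _ _
    · obtain ⟨l, hl, rfl⟩ := Finset.mem_smul_finset.1 hhu.1
      have hmem : h * l ∈ K := by simpa using hu.1
      refine Finset.mem_insert_of_mem ?_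
      simpa using Finset.mul_mem_mul hmem (Finset.inv_mem_inv hl)
  isCylinder g h := (isCylinder_shareMin b (g • K) (h • K)).comp fun p => g = h ∨ p

theorem inv_mul_mem_bound (hgh : E.rel x g h) : g⁻¹ * h ∈ E.bound := by
  refine E.mem_bound (act g⁻¹ x) _ ?_
  rwa [← inv_mul_cancel g, E.rel_act]

theorem one_mem_bound : 1 ∈ E.bound := E.mem_bound 0 1 ((E.equiv 0).refl 1)

/-- Two group elements are merged if they are already related by `E`, or if the union of their
`E`-classes lies in a single class of `N`. -/
def MergeRel (x : Dual Γ) (g h : Γ) : Prop :=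
  E.rel x g h ∨ ∀ g' h', E.rel x g g' → E.rel x h h' → N.rel x g' h'

theorem mergeRel_equivalence (x : Dual Γ) : Equivalence (E.MergeRel N x) where
  refl g := Or.inl ((E.equiv x).refl g)
  symm := by
    rintro _ _ (hgh | hgh)
    · exact Or.inl ((E.equiv x).symm hgh)
    · exact Or.inr fun g' h' hg hh => (N.equiv x).symm (hgh h' g' hh hg)
  trans := by
    rintro g h k (hgh | hgh) (hhk | hhk)
    · exact Or.inl ((E.equiv x).trans hgh hhk)
    · exact Or.inr fun g' k' hg hk => hhk g' k' ((E.equiv x).trans ((E.equiv x).symm hgh) hg) hk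
    · exact Or.inr fun g' k' hg hk => hgh g' k' hg ((E.equiv x).trans hhk hk)
    · exact Or.inr fun g' k' hg hk => (N.equiv x).trans
        (hgh g' h hg ((E.equiv x).refl h)) (hhk h k' ((E.equiv x).refl h) hk)

theorem mergeRel_act (x : Dual Γ) (k g h : Γ) :
    E.MergeRel N (act k x) (k * g) (k * h) ↔ E.MergeRel N x g h := by
  rw [MergeRel, E.rel_act]
  refine or_congr_right ⟨fun H g' h' hg hh => ?_, fun H g' h' hg hh => ?_⟩
  · rw [← N.rel_act x k]
    exact H _ _ ((E.rel_act x k g g').2 hg) ((E.rel_act x k h h').2 hh)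
  · rw [← mul_inv_cancel_left k g', E.rel_act] at hg
    rw [← mul_inv_cancel_left k h', E.rel_act] at hh
    rw [← mul_inv_cancel_left k g', ← mul_inv_cancel_left k h', N.rel_act]
    exact H _ _ hg hh

theorem isCylinder_mergeRel (g h : Γ) : IsCylinder fun x => E.MergeRel N x g h := by
  have hclasses : IsCylinder fun x => ∀ s ∈ E.bound, ∀ t ∈ E.bound,
      (E.rel x g (g * s) ∧ E.rel x h (h * t)) → N.rel x (g * s) (h * t) :=
    .forall_finset _ fun s => .forall_finset _ fun t =>
      ((E.isCylinder _ _).comp₂ (E.isCylinder _ _) (· ∧ ·)).comp₂ (N.isCylinder _ _)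
        fun p q => p → q
  convert (E.isCylinder g h).comp₂ hclasses (· ∨ ·) using 2 with x
  refine or_congr_right ⟨?_, ?_⟩
  · intro H s _ t _ hst
    exact H _ _ hst.1 hst.2
  · intro H g' h' hg hh
    have hst := H _ (E.inv_mul_mem_bound hg) _ (E.inv_mul_mem_bound hh)
    simp only [mul_inv_cancel_left] at hst
    exact hst ⟨hg, hh⟩

/-- The coarsening of `E` by the relation `MergeRel`. -/
def merge : FinRel Γ where
  rel := E.MergeRel N
  equiv := E.mergeRel_equivalence N
  rel_act := E.mergeRel_act N
  bound := by
    classical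
    exact E.bound ∪ N.bound
  mem_bound x h hh := by
    classical
    rcases hh with hh | hh
    · exact Finset.mem_union_left _ (E.mem_bound x h hh)
    · exact Finset.mem_union_right _
        (N.mem_bound x h (hh 1 h ((E.equiv x).refl 1) ((E.equiv x).refl h)))
  isCylinder := E.isCylinder_mergeRel N

end FinRel

end Lamp

namespace HeisExt

open Finsupp Polynomial Lamp

variable {Γ : Type} [Group Γ]

theorem two_pow_mul_haarProb_label_eq_le_one (b : ℕ) {u v : Γ} (huv : u ≠ v) :
    2 ^ b * haarProb (fun x => label b u x = label b v x) ≤ 1 := by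
  classical
  let y : (Fin b → ZMod 2) → Dual Γ := fun t => ∑ i : Fin b, (AddMonoidHom.mulLeft (t i)).comp
    ((lcoeff (ZMod 2) (i : ℕ)).toAddMonoidHom.comp (applyAddHom u))
  have hy : ∀ t w (j : Fin b), y t (single w (X ^ (j : ℕ))) = if w = u then t j else 0 := by
    intro t w j
    simp only [y, AddMonoidHom.finsetSum_apply, AddMonoidHom.comp_apply, applyAddHom_apply,
      LinearMap.toAddMonoidHom_coe, lcoeff_apply, AddMonoidHom.coe_mulLeft]
    by_cases hw : w = u
    · simp [hw, coeff_X_pow, Fin.val_inj]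
    · simp [hw]
  -- The `2 ^ b` translates by `y t` of the event are disjoint and have the same probability.
  have hcyl : ∀ t, IsCylinder fun x => label b u (x + y t) = label b v (x + y t) := fun t => by
    simpa using! (isCylinder_label_eq b u v).comp_affine (AddMonoidHom.id _) (y t)
  have hsum := sum_haarProb_le_one Finset.univ hcyl fun x t _ t' _ ht ht' => by
    rw [label_eq_label_iff] at ht ht'
    ext1 i
    have hi := ht i
    have hi' := ht' i
    simp only [AddMonoidHom.add_apply, hy, if_true, huv.symm, if_false, add_zero] at hi hi'
    exact add_left_cancel (hi.trans hi'.symm)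
  have hprob : ∀ t, haarProb (fun x => label b u (x + y t) = label b v (x + y t)) =
      haarProb fun x => label b u x = label b v x := fun t => by
    simpa using! haarProb_affine (isCylinder_label_eq b u v) (φ := AddMonoidHom.id _)
      (fun _ _ h => h) (y t)
  simpa [hprob] using hsum

theorem haarProb_isLabelMin_eq (b : ℕ) {U : Finset Γ} {u v : Γ} (hu : u ∈ U) (hv : v ∈ U) :
    haarProb (IsLabelMin b U v) = haarProb (IsLabelMin b U u) := by
  classical
  have hinj : Function.Injective (mapDomain.addMonoidHom (Equiv.swap u v) : Lamp Γ →+ Lamp Γ) :=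
    mapDomain_injective (Equiv.swap u v).injective
  have hU : U.map (Equiv.swap u v).toEmbedding = U := by
    refine Finset.map_perm fun w hw => ?_
    by_contra hwU
    exact hw (Equiv.swap_apply_of_ne_of_ne (ne_of_mem_of_not_mem hu hwU).symm
      (ne_of_mem_of_not_mem hv hwU).symm)
  rw [← haarProb_affine (isCylinder_isLabelMin b U u) hinj 0]
  simp only [add_zero, isLabelMin_comp_mapDomain, hU, Equiv.swap_apply_left]

theorem card_mul_haarProb_isLabelMin_le_one (b : ℕ) {U : Finset Γ} {u : Γ} (hu : u ∈ U) :
    #U * haarProb (IsLabelMin b U u) ≤ 1 := by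
  have hsum := sum_haarProb_le_one U (fun v => isCylinder_isLabelMin b U v)
    fun x v _ w _ hv hw => hv.unique hw
  rw [Finset.sum_congr rfl fun v hv => haarProb_isLabelMin_eq b hu hv] at hsum
  simpa using hsum

theorem sum_haarProb_label_eq_le (b : ℕ) (V : Finset Γ) :
    ∑ q ∈ V.offDiag, haarProb (fun x => label b q.1 x = label b q.2 x) ≤ (#V : ℝ) ^ 2 / 2 ^ b := by
  have hterm : ∀ q ∈ V.offDiag, haarProb (fun x => label b q.1 x = label b q.2 x) ≤ 1 / 2 ^ b := by
    intro q hq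
    rw [le_div_iff₀ (by positivity), mul_comm]
    exact two_pow_mul_haarProb_label_eq_le_one b (Finset.mem_offDiag.1 hq).2.2
  have hcard : (#V.offDiag : ℝ) ≤ #V ^ 2 := by
    rw [Finset.offDiag_card, sq]
    exact_mod_cast Nat.sub_le _ _
  refine (Finset.sum_le_card_nsmul _ _ _ hterm).trans ?_
  rw [nsmul_eq_mul, mul_one_div]
  gcongr

theorem sum_haarProb_isLabelMin_le (b : ℕ) {B V : Finset Γ} (hBV : B ⊆ V) :
    ∑ u ∈ B, haarProb (IsLabelMin b V u) ≤ (#B : ℝ) / #V := by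
  have hterm : ∀ u ∈ B, haarProb (IsLabelMin b V u) ≤ 1 / #V := by
    intro u hu
    have hV : 0 < #V := Finset.card_pos.2 ⟨u, hBV hu⟩
    rw [le_div_iff₀ (by exact_mod_cast hV), mul_comm]
    exact card_mul_haarProb_isLabelMin_le_one b (hBV hu)
  refine (Finset.sum_le_card_nsmul _ _ _ hterm).trans_eq ?_
  rw [nsmul_eq_mul, mul_one_div]

theorem haarProb_not_shareMin_le [DecidableEq Γ] (b : ℕ) {U : Finset Γ} (hU : U.Nonempty)
    (W : Finset Γ) : haarProb (fun x => ¬ShareMin b U W x) ≤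
      (#(U ∪ W) : ℝ) ^ 2 / 2 ^ b + (#(U ∆ W) : ℝ) / #(U ∪ W) := by
  let p : (Γ × Γ) ⊕ Γ → Dual Γ → Prop := Sum.elim
    (fun q x => label b q.1 x = label b q.2 x) (IsLabelMin b (U ∪ W))
  have hp : ∀ i, IsCylinder (p i) := by
    rintro (q | u)
    · exact isCylinder_label_eq b q.1 q.2
    · exact isCylinder_isLabelMin b _ u
  have hcover : ∀ x, ¬ShareMin b U W x → ∃ i ∈ (U ∪ W).offDiag.disjSum (U ∆ W), p i x := by
    intro x hx
    by_contra! hno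
    refine hx (shareMin_of_injOn hU (fun u hu v hv huv => by_contra fun hne => ?_) fun u hu => ?_)
    · exact hno (Sum.inl (u, v)) (Finset.inl_mem_disjSum.2 (Finset.mem_offDiag.2 ⟨hu, hv, hne⟩)) huv
    · exact hno (Sum.inr u) (Finset.inr_mem_disjSum.2 hu)
  have hsum := haarProb_le_sum _ ((isCylinder_shareMin b U W).comp Not) hp hcover
  rw [Finset.sum_disjSum] at hsum
  exact hsum.trans (add_le_add (sum_haarProb_label_eq_le b _)
    (sum_haarProb_isLabelMin_le b Finset.symmDiff_subset_union))

theorem card_symmDiff_smul_le [DecidableEq Γ] (g : Γ) (K : Finset Γ) :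
    #(K ∆ (g • K)) ≤ #(exitSet g⁻¹ K) + #(exitSet g K) := by
  have hsub : K ∆ (g • K) ⊆ exitSet g⁻¹ K ∪ g • exitSet g K := by
    intro a
    simp only [Finset.mem_symmDiff, Finset.mem_union, mem_exitSet, ← Finset.inv_smul_mem_iff,
      smul_eq_mul, mul_inv_cancel_left]
    tauto
  refine (Finset.card_le_card hsub).trans ((Finset.card_union_le _ _).trans_eq ?_)
  rw [Finset.card_smul_finset]

theorem haarProb_not_sameMin_le [DecidableEq Γ] (b : ℕ) {K : Finset Γ} (hK : K.Nonempty) {g : Γ}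
    {ε : ℝ} (hg : (#(exitSet g K) : ℝ) ≤ ε * #K) (hg' : (#(exitSet g⁻¹ K) : ℝ) ≤ ε * #K) :
    haarProb (fun x => ¬(FinRel.sameMin b K).rel x 1 g) ≤ 4 * (#K : ℝ) ^ 2 / 2 ^ b + 2 * ε := by
  have : (0 : ℝ) < #K := by exact_mod_cast hK.card_pos
  have hle : (#K : ℝ) ≤ #(K ∪ g • K) := by
    exact_mod_cast Finset.card_le_card Finset.subset_union_left
  have hunion : (#(K ∪ g • K) : ℝ) ≤ 2 * #K := by
    have h := Finset.card_union_le K (g • K)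
    rw [Finset.card_smul_finset, ← two_mul] at h
    exact_mod_cast h
  have hsymm : (#(K ∆ (g • K)) : ℝ) ≤ 2 * ε * #K := by
    have h : (#(K ∆ (g • K)) : ℝ) ≤ #(exitSet g⁻¹ K) + #(exitSet g K) := by
      exact_mod_cast card_symmDiff_smul_le g K
    linarith
  calc haarProb (fun x => ¬(FinRel.sameMin b K).rel x 1 g)
      ≤ haarProb (fun x => ¬ShareMin b K (g • K) x) :=
        haarProb_mono (((FinRel.sameMin b K).isCylinder 1 g).comp Not)
          ((isCylinder_shareMin b K (g • K)).comp Not) fun x hx hmin =>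
            hx (Or.inr (by rwa [one_smul]))
    _ ≤ (#(K ∪ g • K) : ℝ) ^ 2 / 2 ^ b + (#(K ∆ (g • K)) : ℝ) / #(K ∪ g • K) :=
        haarProb_not_shareMin_le b hK _
    _ ≤ (2 * #K) ^ 2 / 2 ^ b + (2 * ε * #K) / #K := by
        gcongr
        exact (Nat.cast_nonneg _).trans hsymm
    _ = 4 * (#K : ℝ) ^ 2 / 2 ^ b + 2 * ε := by
        field_simp
        ring

/-- Given a Følner set, enough label bits make `FinRel.sameMin` identify `1` with any given
elements, up to small probability. -/
theorem exists_finRel_haarProb_not_le (hF : IsFolner (⊤ : Subgroup Γ)) (S : Finset Γ) {ε : ℝ}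
    (hε : 0 < ε) : ∃ N : FinRel Γ, ∀ g ∈ S, haarProb (fun x => ¬N.rel x 1 g) ≤ ε := by
  classical
  obtain ⟨K, hK, -, hS⟩ := hF (S ∪ S⁻¹) (fun _ _ => Subgroup.mem_top _) (ε / 4) (by positivity)
  obtain ⟨b, hb⟩ := pow_unbounded_of_one_lt (4 * (#K : ℝ) ^ 2 / (ε / 2)) one_lt_two
  have hlabel : 4 * (#K : ℝ) ^ 2 / 2 ^ b ≤ ε / 2 :=
    ((div_lt_comm₀ (by positivity) (by positivity)).1 hb).le
  refine ⟨.sameMin b K, fun g hg => ?_⟩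
  have hprob := haarProb_not_sameMin_le b hK (hS g (Finset.mem_union_left _ hg))
    (hS g⁻¹ (Finset.mem_union_right _ (Finset.inv_mem_inv hg)))
  linarith

theorem haarProb_not_rel_eq (E : FinRel Γ) (g h : Γ) :
    haarProb (fun x => ¬E.rel x g h) = haarProb fun x => ¬E.rel x 1 (g⁻¹ * h) := by
  rw [← haarProb_act ((E.isCylinder g h).comp Not) g]
  congr! 3 with x
  simpa using E.rel_act x g 1 (g⁻¹ * h)

/-- Merging with `N` fails to relate `1` and `g` only if `N` separates the classes of `1` and `g`,
which consist of boundedly many elements. -/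
theorem haarProb_not_merge_le (E N : FinRel Γ) (g : Γ) :
    haarProb (fun x => ¬(E.merge N).rel x 1 g) ≤
      ∑ q ∈ E.bound ×ˢ E.bound, haarProb fun x => ¬N.rel x 1 (q.1⁻¹ * (g * q.2)) := by
  simp only [← haarProb_not_rel_eq]
  refine haarProb_le_sum _ (((E.merge N).isCylinder 1 g).comp Not)
    (fun q => (N.isCylinder q.1 (g * q.2)).comp Not) fun x hx => ?_
  by_contra! hno
  refine hx (Or.inr fun g' h' hg' hh' => ?_)
  have hrel := hno (g', g⁻¹ * h')
    (Finset.mem_product.2 ⟨E.mem_bound x g' hg', E.inv_mul_mem_bound hh'⟩)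
  rwa [mul_inv_cancel_left] at hrel

theorem exists_finRel_ge_haarProb_not_le (hF : IsFolner (⊤ : Subgroup Γ)) (E : FinRel Γ)
    (S : Finset Γ) {ε : ℝ} (hε : 0 < ε) : ∃ E' : FinRel Γ,
      (∀ x g h, E.rel x g h → E'.rel x g h) ∧ ∀ g ∈ S, haarProb (fun x => ¬E'.rel x 1 g) ≤ ε := by
  classical
  let D := E.bound ×ˢ E.bound
  have hcard : (0 : ℝ) < #D := by
    exact_mod_cast Finset.card_pos.2 ⟨(1, 1), Finset.mk_mem_product E.one_mem_bound E.one_mem_bound⟩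
  obtain ⟨N, hN⟩ := exists_finRel_haarProb_not_le hF
    (S.biUnion fun g => D.image fun q => q.1⁻¹ * (g * q.2)) (div_pos hε hcard)
  refine ⟨E.merge N, fun x g h hgh => Or.inl hgh, fun g hg => ?_⟩
  refine (haarProb_not_merge_le E N g).trans ((Finset.sum_le_card_nsmul D _ _ fun q hq =>
    hN _ (Finset.mem_biUnion.2 ⟨g, hg, Finset.mem_image_of_mem _ hq⟩)).trans_eq ?_)
  rw [nsmul_eq_mul, mul_div_cancel₀ _ hcard.ne']

theorem exists_finRel_seq [Countable Γ] (hF : IsFolner (⊤ : Subgroup Γ)) :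
    ∃ E : ℕ → FinRel Γ, (∀ n x g h, (E n).rel x g h → (E (n + 1)).rel x g h) ∧
      ∀ g, Filter.Tendsto (fun n => haarProb fun x => ¬(E n).rel x 1 g) Filter.atTop (nhds 0) := by
  classical
  obtain ⟨e, he⟩ := exists_surjective_nat Γ
  choose coarsen hle hsmall using fun (n : ℕ) (E : FinRel Γ) =>
    exists_finRel_ge_haarProb_not_le hF E ((Finset.range n).image e)
      (ε := 1 / ((n : ℝ) + 1)) (by positivity)
  let E : ℕ → FinRel Γ := fun n => Nat.rec (FinRel.eq Γ) coarsen n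
  refine ⟨E, fun n => hle n (E n), fun g => ?_⟩
  rw [← Filter.tendsto_add_atTop_iff_nat 1]
  obtain ⟨k, rfl⟩ := he g
  refine squeeze_zero' (.of_forall fun n => haarProb_nonneg (((E (n + 1)).isCylinder 1 (e k)).comp
    Not)) ?_ tendsto_one_div_add_atTop_nhds_zero_nat
  filter_upwards [Filter.eventually_gt_atTop k] with n hn
  exact hsmall n (E n) (e k) (Finset.mem_image_of_mem _ (Finset.mem_range.2 hn))

end HeisExt

/-! ### Hyperfiniteness -/

/-- The star subalgebra spanned by a set whose span contains `1` and its products and adjoints. -/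
def starSubalgebraOfSpan {A : Type*} [Ring A] [StarRing A] [Algebra ℂ A] [StarModule ℂ A]
    (B : Set A) (hone : 1 ∈ Submodule.span ℂ B)
    (hmul : ∀ x ∈ B, ∀ y ∈ B, x * y ∈ Submodule.span ℂ B)
    (hstar : ∀ x ∈ B, star x ∈ Submodule.span ℂ B) : StarSubalgebra ℂ A where
  toSubalgebra := (Submodule.span ℂ B).toSubalgebra hone fun x y hx hy => by
    have hle : Submodule.span ℂ B * Submodule.span ℂ B ≤ Submodule.span ℂ B := by
      rw [Submodule.span_mul_span, Submodule.span_le]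
      rintro _ ⟨x, hx, y, hy, rfl⟩
      exact hmul x hx y hy
    exact hle (Submodule.mul_mem_mul hx hy)
  star_mem' := fun {x} (hx : x ∈ Submodule.span ℂ B) => by
    change star x ∈ Submodule.span ℂ B
    induction hx using Submodule.span_induction with
    | mem x hx => exact hstar x hx
    | zero => simp
    | add x y _ _ hx hy => simpa using add_mem hx hy
    | smul z x _ hx => simpa using Submodule.smul_mem _ (star z) hx

theorem finite_span {R M : Type*} [Ring R] [Finite R] [AddCommGroup M] [Module R M] {D : Set M}
    (hD : D.Finite) : (Submodule.span R D : Set M).Finite := by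
  have := Module.Finite.span_of_finite R hD
  have := Module.finite_of_finite R (M := Submodule.span R D)
  exact Set.toFinite _

theorem exists_monotone_finset_exhaustion {X : Type*} [Countable X] [Nonempty X]
    (F : ℕ → Finset X) : ∃ S : ℕ → Finset X, Monotone S ∧ (∀ n, F n ⊆ S (n + 1)) ∧
      ∀ x, ∀ᶠ n in Filter.atTop, x ∈ S n := by
  classical
  obtain ⟨e, he⟩ := exists_surjective_nat X
  refine ⟨fun n => (Finset.range n).biUnion fun m => insert (e m) (F m),
    fun m n hmn => Finset.biUnion_subset_biUnion_of_subset_left _ (Finset.range_mono hmn),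
    fun n x hx => Finset.mem_biUnion.2
      ⟨n, Finset.self_mem_range_succ n, Finset.mem_insert_of_mem hx⟩, fun x => ?_⟩
  obtain ⟨m, rfl⟩ := he x
  filter_upwards [Filter.eventually_gt_atTop m] with n hn
  exact Finset.mem_biUnion.2 ⟨m, Finset.mem_range.2 hn, Finset.mem_insert_self _ _⟩

namespace Lamp.FinRel

variable {Γ : Type*} [Group Γ] (E : FinRel Γ) {x : Dual Γ} {g : Γ} {A : Set Γ}

/-- The equivalence class of `1`. -/
def cell (x : Dual Γ) : Set Γ := {h | E.rel x 1 h}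

theorem one_mem_cell (x : Dual Γ) : 1 ∈ E.cell x := (E.equiv x).refl 1

theorem finite_cell (x : Dual Γ) : (E.cell x).Finite :=
  E.bound.finite_toSet.subset fun h hh => E.mem_bound x h hh

theorem isCylinder_cell : IsCylinder E.cell := by
  convert (IsCylinder.pi (ι := E.bound) fun h => E.isCylinder 1 h).comp
    fun p => {h : Γ | ∃ hh : h ∈ E.bound, p ⟨h, hh⟩} using 2 with x
  ext h
  exact ⟨fun hh => ⟨E.mem_bound x h hh, hh⟩, fun hh => hh.2⟩

theorem isCylinder_cell_eq (A : Set Γ) : IsCylinder fun x => E.cell x = A :=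
  E.isCylinder_cell.comp fun B => B = A

theorem cell_act (hg : g⁻¹ ∈ E.cell x) : E.cell (act g x) = g • E.cell x := by
  ext h
  rw [Set.mem_smul_set_iff_inv_smul_mem, smul_eq_mul]
  have hrel : E.rel (act g x) 1 h ↔ E.rel x g⁻¹ (g⁻¹ * h) := by
    rw [← E.rel_act x g, mul_inv_cancel, mul_inv_cancel_left]
  exact hrel.trans ⟨(E.equiv x).trans hg, (E.equiv x).trans ((E.equiv x).symm hg)⟩

theorem cell_act_inv_eq_iff (hA : 1 ∈ A) (hg : g⁻¹ ∈ A) :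
    E.cell (act g⁻¹ x) = A ↔ E.cell x = g • A := by
  constructor
  · rintro rfl
    rw [← E.cell_act hg, act_act, mul_inv_cancel, act_one]
  · intro h
    rw [E.cell_act, h, inv_smul_smul]
    rw [h, Set.mem_smul_set_iff_inv_smul_mem]
    simpa using hA

end Lamp.FinRel

namespace HeisExt

section LocallyFinite

variable {Γ : Type*} [Group Γ] {S S' : Set (HeisExt Γ)} {T T' : Set Γ} {q r : HeisExt Γ}

/-- The elements of the Heisenberg group over `Lamp Γ` with coordinates in `V`, `W` and `Z`. -/
def boxSubgroup (V W Z : AddSubgroup (Lamp Γ)) (hVW : ∀ v ∈ V, ∀ w ∈ W, v * w ∈ Z) :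
    Subgroup (HeisExt Γ) where
  carrier := {q | q.a ∈ V ∧ q.b ∈ W ∧ q.c ∈ Z ∧ q.g = 1}
  one_mem' := ⟨V.zero_mem, W.zero_mem, Z.zero_mem, rfl⟩
  mul_mem' := by
    rintro q r ⟨ha, hb, hc, hg⟩ ⟨ha', hb', hc', hg'⟩
    refine ⟨?_, ?_, ?_, ?_⟩
    · simpa [hg] using add_mem ha ha'
    · simpa [hg] using add_mem hb hb'
    · simpa [hg] using add_mem (add_mem hc hc') (hVW _ ha _ hb')
    · simp [hg, hg']
  inv_mem' := by
    rintro q ⟨ha, hb, hc, hg⟩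
    refine ⟨?_, ?_, ?_, ?_⟩
    · simpa [hg] using ha
    · simpa [hg] using hb
    · simpa [hg] using add_mem (neg_mem hc) (hVW _ ha _ hb)
    · simp [hg]

theorem finite_boxSubgroup {V W Z : AddSubgroup (Lamp Γ)} (hVW : ∀ v ∈ V, ∀ w ∈ W, v * w ∈ Z)
    (hV : (V : Set (Lamp Γ)).Finite) (hW : (W : Set (Lamp Γ)).Finite)
    (hZ : (Z : Set (Lamp Γ)).Finite) : (boxSubgroup V W Z hVW : Set (HeisExt Γ)).Finite := by
  refine ((hV.prod (hW.prod hZ)).image fun p => (⟨p.1, p.2.1, p.2.2, 1⟩ : HeisExt Γ)).subset ?_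
  rintro q ⟨ha, hb, hc, hg⟩
  exact ⟨(q.a, q.b, q.c), ⟨ha, hb, hc⟩, by ext1 <;> simp [hg]⟩

theorem finite_closure (hS : S.Finite) (hg : ∀ s ∈ S, s.g = 1) :
    (Subgroup.closure S : Set (HeisExt Γ)).Finite := by
  let V := Submodule.span (ZMod 2) (HeisExt.a '' S)
  let W := Submodule.span (ZMod 2) (HeisExt.b '' S)
  let D : Set (Lamp Γ) := HeisExt.c '' S ∪ Set.image2 (fun v w => v * w) V W
  have hV : (V : Set (Lamp Γ)).Finite := finite_span (hS.image _)
  have hW : (W : Set (Lamp Γ)).Finite := finite_span (hS.image _)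
  have hD : D.Finite := (hS.image _).union (hV.image2 _ hW)
  let box := boxSubgroup V.toAddSubgroup W.toAddSubgroup
    (Submodule.span (ZMod 2) D).toAddSubgroup fun v hv w hw =>
      Submodule.subset_span (Or.inr ⟨v, hv, w, hw, rfl⟩)
  have hle : Subgroup.closure S ≤ box := (Subgroup.closure_le _).2 fun s hs =>
    ⟨Submodule.subset_span ⟨s, hs, rfl⟩, Submodule.subset_span ⟨s, hs, rfl⟩,
      Submodule.subset_span (Or.inl ⟨s, hs, rfl⟩), hg s hs⟩
  exact (finite_boxSubgroup _ hV hW (finite_span hD)).subset hle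

/-- The group generated by the conjugates of `S` by the elements of `T`. -/
def conjGroup (S : Set (HeisExt Γ)) (T : Set Γ) : Subgroup (HeisExt Γ) :=
  Subgroup.closure (Set.image2 (fun t s => lift t * s * (lift t)⁻¹) T S)

theorem conjGroup_mono (hS : S ⊆ S') (hT : T ⊆ T') : conjGroup S T ≤ conjGroup S' T' :=
  Subgroup.closure_mono (Set.image2_subset hT hS)

theorem mem_conjGroup (hT : 1 ∈ T) (hq : q ∈ S) : q ∈ conjGroup S T :=
  Subgroup.subset_closure ⟨1, hT, q, hq, by simp⟩

theorem conj_mem_conjGroup (hq : q ∈ conjGroup S T) (g : Γ) :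
    lift g * q * (lift g)⁻¹ ∈ conjGroup S (g • T) := by
  rw [conjGroup] at hq
  induction hq using Subgroup.closure_induction with
  | mem _ hx =>
    obtain ⟨t, ht, s, hs, rfl⟩ := hx
    refine Subgroup.subset_closure ⟨g * t, Set.smul_mem_smul_set ht, s, hs, ?_⟩
    simp only [map_mul, mul_inv_rev, mul_assoc]
  | one => simp [one_mem]
  | mul x y _ _ hx hy => simpa [mul_assoc] using mul_mem hx hy
  | inv x _ hx => simpa [mul_assoc] using inv_mem hx

theorem finite_conjGroup (hS : S.Finite) (hg : ∀ s ∈ S, s.g = 1) (hT : T.Finite) :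
    (conjGroup S T : Set (HeisExt Γ)).Finite := by
  refine finite_closure (hT.image2 _ hS) ?_
  rintro _ ⟨t, -, s, hs, rfl⟩
  simp [hg s hs, lift]

/-- The elements of `HeisExt Γ` whose action moves the base point `1` of `T` within `T` and whose
Heisenberg part is generated by the conjugates of `S` by `T`. -/
def arrows (S : Set (HeisExt Γ)) (T : Set Γ) : Set (HeisExt Γ) :=
  {q | q.g⁻¹ ∈ T ∧ (lift q.g)⁻¹ * q ∈ conjGroup S T}

theorem finite_arrows (hS : S.Finite) (hg : ∀ s ∈ S, s.g = 1) (hT : T.Finite) :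
    (arrows S T).Finite := by
  refine (hT.image2 (fun t q => lift t⁻¹ * q) (finite_conjGroup hS hg hT)).subset ?_
  rintro q ⟨hqT, hq⟩
  exact ⟨_, hqT, _, hq, by simp⟩

theorem arrows_mono (hS : S ⊆ S') (hT : T ⊆ T') : arrows S T ⊆ arrows S' T' :=
  fun _ hq => ⟨hT hq.1, conjGroup_mono hS hT hq.2⟩

theorem one_mem_arrows (hT : 1 ∈ T) : 1 ∈ arrows S T :=
  ⟨by simpa using hT, by simp [one_mem]⟩

theorem mul_mem_arrows (hq : q ∈ arrows S T) (hr : r ∈ arrows S (q.g • T)) :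
    r * q ∈ arrows S T := by
  constructor
  · simpa using Set.mem_smul_set_iff_inv_smul_mem.1 hr.1
  · have hconj := conj_mem_conjGroup hr.2 q.g⁻¹
    rw [inv_smul_smul] at hconj
    simpa [mul_assoc] using mul_mem hconj hq.2

theorem mul_central_mem_arrows (hT : 1 ∈ T) (hq : q ∈ arrows S T) {c : Lamp Γ}
    (hc : central c ∈ S) : q * central c ∈ arrows S T := by
  constructor
  · simpa [central] using hq.1
  · simpa [mul_assoc, central] using mul_mem hq.2 (mem_conjGroup hT hc)

theorem inv_mem_arrows (hT : 1 ∈ T) (hq : q ∈ arrows S T) : q⁻¹ ∈ arrows S (q.g • T) := by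
  constructor
  · rw [Set.mem_smul_set_iff_inv_smul_mem]
    simpa using hT
  · simpa [mul_assoc] using conj_mem_conjGroup (inv_mem hq.2) q.g

end LocallyFinite

open Ell2 GroupVN Lamp

variable {Γ : Type} [Group Γ] {E E' : FinRel Γ} {S S' : Set (HeisExt Γ)}
  {T U : Ell2 (HeisExt Γ) →L[ℂ] Ell2 (HeisExt Γ)} {q : HeisExt Γ}

theorem exists_finset_mem_span_central (hT : T ∈ centralSpan Γ) : ∃ Z : Finset (Lamp Γ),
    T ∈ Submodule.span ℂ ((fun c => left (central c)) '' (Z : Set (Lamp Γ))) := by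
  classical
  obtain ⟨t, ht, hTt⟩ := Submodule.mem_span_finite_of_mem_span hT
  rw [← Set.image_univ, Finset.subset_set_image_iff] at ht
  obtain ⟨Z, -, rfl⟩ := ht
  exact ⟨Z, by rwa [Finset.coe_image] at hTt⟩

/-- The projection onto the part of the spectrum where the `E`-class of `1` is `A`. -/
def cellProj (E : FinRel Γ) (A : Set Γ) : Ell2 (HeisExt Γ) →L[ℂ] Ell2 (HeisExt Γ) :=
  spectralProj fun x => E.cell x = A

theorem left_mul_cellProj {A : Set Γ} (hA : 1 ∈ A) (hq : q.g⁻¹ ∈ A) :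
    left q * cellProj E A = cellProj E (q.g • A) * left q := by
  simp only [cellProj, left_mul_spectralProj (E.isCylinder_cell_eq A),
    E.cell_act_inv_eq_iff hA hq]

theorem star_cellProj (E : FinRel Γ) (A : Set Γ) : star (cellProj E A) = cellProj E A :=
  star_spectralProj (E.isCylinder_cell_eq A)

theorem cellProj_mul_self (E : FinRel Γ) (A : Set Γ) :
    cellProj E A * cellProj E A = cellProj E A := by
  simp only [cellProj, ← spectralProj_and (E.isCylinder_cell_eq A) (E.isCylinder_cell_eq A),
    and_self]

theorem cellProj_mul_of_ne (E : FinRel Γ) {A B : Set Γ} (hAB : A ≠ B) :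
    cellProj E A * cellProj E B = 0 := by
  rw [cellProj, cellProj, ← spectralProj_and (E.isCylinder_cell_eq A) (E.isCylinder_cell_eq B)]
  exact spectralProj_eq_zero fun x hx => hAB (hx.1.symm.trans hx.2)

theorem sum_spectralProj_mul_cellProj (E : FinRel Γ) {p : Dual Γ → Prop} (hp : IsCylinder p) :
    ∑ A ∈ E.isCylinder_cell.finite_range.toFinset, spectralProj p * cellProj E A =
      spectralProj p := by
  simp only [cellProj, ← spectralProj_and hp (E.isCylinder_cell_eq _)]
  exact sum_spectralProj _ E.isCylinder_cell hp fun x _ =>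
    (Set.Finite.mem_toFinset _).2 ⟨x, rfl⟩

theorem mul_spectralProj_mem_of_forall_cell (E : FinRel Γ) {p : Dual Γ → Prop} (hp : IsCylinder p)
    {V : Submodule ℂ (Ell2 (HeisExt Γ) →L[ℂ] Ell2 (HeisExt Γ))}
    (h : ∀ y, T * (spectralProj p * cellProj E (E.cell y)) ∈ V) : T * spectralProj p ∈ V := by
  rw [← sum_spectralProj_mul_cellProj E hp, Finset.mul_sum]
  refine Submodule.sum_mem _ fun A hA => ?_
  obtain ⟨y, rfl⟩ := (Set.Finite.mem_toFinset _).1 hA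
  exact h y

/-- The partial isometries spanning the finite-dimensional algebra attached to `E` and `S`. -/
def partialIsometries (E : FinRel Γ) (S : Set (HeisExt Γ)) :
    Set (Ell2 (HeisExt Γ) →L[ℂ] Ell2 (HeisExt Γ)) :=
  {T | ∃ x, ∃ q ∈ arrows S (E.cell x), T = left q * cellProj E (E.cell x)}

theorem finite_partialIsometries (E : FinRel Γ) (hS : S.Finite) (hg : ∀ s ∈ S, s.g = 1) :
    (partialIsometries E S).Finite := by
  have hsub : partialIsometries E S ⊆
      ⋃ A ∈ Set.range E.cell, (fun q => left q * cellProj E A) '' arrows S A := by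
    rintro _ ⟨x, q, hq, rfl⟩
    exact Set.mem_biUnion ⟨x, rfl⟩ ⟨q, hq, rfl⟩
  refine (E.isCylinder_cell.finite_range.biUnion ?_).subset hsub
  rintro _ ⟨x, rfl⟩
  exact (finite_arrows hS hg (E.finite_cell x)).image _

theorem one_mem_span_partialIsometries (E : FinRel Γ) (S : Set (HeisExt Γ)) :
    1 ∈ Submodule.span ℂ (partialIsometries E S) := by
  rw [← mul_one 1]
  nth_rw 2 [← spectralProj_true]
  refine mul_spectralProj_mem_of_forall_cell E (.const True) fun y => Submodule.subset_span ?_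
  exact ⟨y, 1, one_mem_arrows (E.one_mem_cell y), by rw [left_one, spectralProj_true, one_mul]⟩

theorem mul_mem_span_partialIsometries (hT : T ∈ partialIsometries E S)
    (hU : U ∈ partialIsometries E S) : T * U ∈ Submodule.span ℂ (partialIsometries E S) := by
  obtain ⟨y, q, hq, rfl⟩ := hT
  obtain ⟨x, r, hr, rfl⟩ := hU
  have hcomm := left_mul_cellProj (E := E) (E.one_mem_cell x) hr.1
  by_cases hyx : E.cell y = r.g • E.cell x
  · rw [hyx] at hq ⊢
    refine Submodule.subset_span ⟨x, q * r, mul_mem_arrows hr hq, ?_⟩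
    rw [left_mul, mul_assoc, mul_assoc, hcomm, ← mul_assoc (cellProj E _), cellProj_mul_self]
  · rw [hcomm, mul_assoc, ← mul_assoc (cellProj E _), cellProj_mul_of_ne E hyx, zero_mul, mul_zero]
    exact zero_mem _

theorem star_mem_span_partialIsometries (hT : T ∈ partialIsometries E S) :
    star T ∈ Submodule.span ℂ (partialIsometries E S) := by
  obtain ⟨x, q, hq, rfl⟩ := hT
  refine Submodule.subset_span ⟨act q.g x, q⁻¹, ?_, ?_⟩
  · rw [E.cell_act hq.1]
    exact inv_mem_arrows (E.one_mem_cell x) hq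
  · rw [left_mul_cellProj (E.one_mem_cell x) hq.1, star_mul, star_cellProj, star_left,
      E.cell_act hq.1]

/-- The star algebra spanned by the partial isometries attached to `E` and `S`. -/
def finAlgebra (E : FinRel Γ) (S : Set (HeisExt Γ)) :
    StarSubalgebra ℂ (Ell2 (HeisExt Γ) →L[ℂ] Ell2 (HeisExt Γ)) :=
  starSubalgebraOfSpan (partialIsometries E S) (one_mem_span_partialIsometries E S)
    (fun _ hT _ hU => mul_mem_span_partialIsometries hT hU)
    fun _ hT => star_mem_span_partialIsometries hT

theorem mem_finAlgebra : T ∈ finAlgebra E S ↔ T ∈ Submodule.span ℂ (partialIsometries E S) :=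
  Iff.rfl

theorem finiteDimensional_finAlgebra (E : FinRel Γ) (hS : S.Finite) (hg : ∀ s ∈ S, s.g = 1) :
    FiniteDimensional ℂ (finAlgebra E S) :=
  FiniteDimensional.span_of_finite ℂ (finite_partialIsometries E hS hg)

theorem finAlgebra_subset_groupVN (E : FinRel Γ) (S : Set (HeisExt Γ)) :
    (finAlgebra E S : Set (Ell2 (HeisExt Γ) →L[ℂ] Ell2 (HeisExt Γ))) ⊆ groupVN (HeisExt Γ) := by
  have hle : Submodule.span ℂ (partialIsometries E S) ≤
      (groupVN (HeisExt Γ)).toStarSubalgebra.toSubalgebra.toSubmodule := by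
    rw [Submodule.span_le]
    rintro _ ⟨x, q, -, rfl⟩
    exact (groupVN (HeisExt Γ)).toStarSubalgebra.mul_mem (left_mem_groupVN q)
      (spectralOp_mem_groupVN _)
  exact hle

theorem left_mul_mul_cellProj_mem_finAlgebra {x : Dual Γ} (hq : q ∈ arrows S (E.cell x))
    (hT : T ∈ Submodule.span ℂ ((fun c => left (central c)) '' {c | central c ∈ S})) :
    left q * (T * cellProj E (E.cell x)) ∈ finAlgebra E S := by
  rw [mem_finAlgebra]
  induction hT using Submodule.span_induction with
  | mem _ hP =>
    obtain ⟨c, hc, rfl⟩ := hP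
    refine Submodule.subset_span ⟨x, q * central c, ?_, by rw [left_mul, mul_assoc]⟩
    exact mul_central_mem_arrows (E.one_mem_cell x) hq hc
  | zero => simp
  | add P Q _ _ hP hQ => simpa only [add_mul, mul_add] using add_mem hP hQ
  | smul z P _ hP => simpa only [smul_mul_assoc, mul_smul_comm] using Submodule.smul_mem _ z hP

theorem finAlgebra_mono (hE : ∀ x g h, E.rel x g h → E'.rel x g h) (hS : S ⊆ S')
    (hcell : ∀ x, cellProj E (E.cell x) ∈
      Submodule.span ℂ ((fun c => left (central c)) '' {c | central c ∈ S'})) :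
    finAlgebra E S ≤ finAlgebra E' S' := by
  suffices hle : Submodule.span ℂ (partialIsometries E S) ≤
    Submodule.span ℂ (partialIsometries E' S') from hle
  rw [Submodule.span_le]
  rintro _ ⟨x, q, hq, rfl⟩
  refine mul_spectralProj_mem_of_forall_cell E' (E.isCylinder_cell_eq _) fun y => ?_
  by_cases hxy : ∃ z, E.cell z = E.cell x ∧ E'.cell z = E'.cell y
  · obtain ⟨z, hzx, hzy⟩ := hxy
    have hsub : E.cell x ⊆ E'.cell y := hzx ▸ hzy ▸ fun h => hE z 1 h
    exact left_mul_mul_cellProj_mem_finAlgebra (arrows_mono hS hsub hq) (hcell x)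
  · rw [cellProj, ← spectralProj_and (E.isCylinder_cell_eq _) (E'.isCylinder_cell_eq _),
      spectralProj_eq_zero fun z hz => hxy ⟨z, hz⟩, mul_zero]
    exact zero_mem _

theorem left_mul_spectralProj_mem_finAlgebra (hq : (lift q.g)⁻¹ * q ∈ S) :
    left q * spectralProj (fun x => E.rel x 1 q.g⁻¹) ∈ finAlgebra E S := by
  refine mul_spectralProj_mem_of_forall_cell E (E.isCylinder 1 _) fun y => ?_
  rw [cellProj, ← spectralProj_and (E.isCylinder 1 _) (E.isCylinder_cell_eq _)]
  by_cases hy : q.g⁻¹ ∈ E.cell y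
  · have hcell : (fun x => E.rel x 1 q.g⁻¹ ∧ E.cell x = E.cell y) = fun x => E.cell x = E.cell y :=
      funext fun x => propext ⟨And.right, fun h => ⟨(h ▸ hy : q.g⁻¹ ∈ E.cell x), h⟩⟩
    rw [hcell]
    exact Submodule.subset_span ⟨y, q, ⟨hy, mem_conjGroup (E.one_mem_cell y) hq⟩, rfl⟩
  · have hempty (x : Dual Γ) : ¬(E.rel x 1 q.g⁻¹ ∧ E.cell x = E.cell y) :=
      fun hx => hy (hx.2 ▸ (hx.1 : q.g⁻¹ ∈ E.cell x))
    rw [spectralProj_eq_zero hempty, mul_zero]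
    exact zero_mem _

theorem exists_finset_cellProj_mem_span (E : FinRel Γ) : ∃ Z : Finset (Lamp Γ), ∀ x,
    cellProj E (E.cell x) ∈
      Submodule.span ℂ ((fun c => left (central c)) '' (Z : Set (Lamp Γ))) := by
  classical
  choose Z hZ using fun A => exists_finset_mem_span_central (T := cellProj E A)
    (spectralOp_mem_centralSpan _)
  refine ⟨E.isCylinder_cell.finite_range.toFinset.biUnion Z, fun x => ?_⟩
  refine Submodule.span_mono (Set.image_mono ?_) (hZ (E.cell x))
  exact Finset.coe_subset.2
    (Finset.subset_biUnion_of_mem Z ((Set.Finite.mem_toFinset _).2 ⟨x, rfl⟩))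

theorem norm_coef_mul_spectralProj_le {p : Dual Γ → Prop} (hp : IsCylinder p) (x y : HeisExt Γ) :
    ‖coef (T * spectralProj p) x y‖ ≤ ‖T‖ * √(haarProb p) := by
  rw [coef_eq_inner, ← norm_spectralProj_basis hp y, mul_apply_eq_comp]
  refine (norm_inner_le_norm _ _).trans ?_
  rw [norm_basis, one_mul]
  exact T.le_opNorm _

theorem norm_coef_left_mul_spectralProj_mul_le {p : Dual Γ → Prop} (hp : IsCylinder p)
    (q x y : HeisExt Γ) : ‖coef (left q * spectralProj p * T) x y‖ ≤ ‖T‖ * √(haarProb p) := by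
  rw [← Complex.norm_conj, ← coef_star, star_mul, star_mul, star_spectralProj hp, star_left,
    ← mul_assoc, coef, mul_apply_eq_comp, left_basis]
  exact (norm_coef_mul_spectralProj_le hp y _).trans_eq
    (by rw [ContinuousLinearMap.star_eq_adjoint, LinearIsometryEquiv.norm_map])

/-- The commutator vanishes on the part of the spectrum where `p` holds. -/
theorem norm_coef_commutator_le {p : Dual Γ → Prop} (hp : IsCylinder p)
    (hT : Commute (left q * spectralProj p) T) (x y : HeisExt Γ) :
    ‖coef (left q * T - T * left q) x y‖ ≤
      (‖T‖ + ‖T * left q‖) * √(haarProb fun x => ¬p x) := by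
  let P' := spectralProj fun x => ¬p x
  have hsplit : left q * spectralProj p + left q * P' = left q := by
    rw [← mul_add, spectralProj_add_spectralProj_not hp, mul_one]
  have hcomm : left q * T - T * left q = left q * P' * T - T * left q * P' := by
    calc left q * T - T * left q
        = (left q * spectralProj p + left q * P') * T -
            T * (left q * spectralProj p + left q * P') := by rw [hsplit]
      _ = left q * P' * T - T * left q * P' := by
          rw [add_mul, mul_add, hT.eq, mul_assoc T]
          abel
  rw [hcomm, coef_sub, add_mul]
  exact (norm_sub_le _ _).trans (add_le_add
    (norm_coef_left_mul_spectralProj_mul_le (hp.comp Not) q x y)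
    (norm_coef_mul_spectralProj_le (hp.comp Not) x y))

theorem commute_left_of_tendsto {ι : Type*} {l : Filter ι} [l.NeBot] {p : ι → Dual Γ → Prop}
    (hp : ∀ i, IsCylinder (p i))
    (hlim : Filter.Tendsto (fun i => haarProb fun x => ¬p i x) l (nhds 0))
    (hT : ∀ᶠ i in l, Commute (left q * spectralProj (p i)) T) : Commute (left q) T := by
  refine coef_ext fun x y => ?_
  rw [← sub_eq_zero, ← coef_sub, ← norm_le_zero_iff]
  have hbound : Filter.Tendsto
      (fun i => (‖T‖ + ‖T * left q‖) * √(haarProb fun x => ¬p i x)) l (nhds 0) := by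
    simpa using hlim.sqrt.const_mul (‖T‖ + ‖T * left q‖)
  exact ge_of_tendsto hbound (hT.mono fun i hi => norm_coef_commutator_le (hp i) hi x y)

theorem vNGen_iUnion_eq_groupVN {B : ℕ → Set (Ell2 (HeisExt Γ) →L[ℂ] Ell2 (HeisExt Γ))}
    (hB : ∀ n, B n ⊆ groupVN (HeisExt Γ))
    (hleft : ∀ q, ∃ p : ℕ → Dual Γ → Prop, (∀ n, IsCylinder (p n)) ∧
      Filter.Tendsto (fun n => haarProb fun x => ¬p n x) Filter.atTop (nhds 0) ∧
      ∀ᶠ n in Filter.atTop, left q * spectralProj (p n) ∈ B n) :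
    vNGen (⋃ n, B n) = groupVN (HeisExt Γ) := by
  rw [← subgroupVN_top]
  apply Set.Subset.antisymm
  · rw [← vNGen_subgroupVN, subgroupVN_top]
    exact vNGen_mono (Set.iUnion_subset hB)
  · rw [subgroupVN_eq, ← vNGen_vNGen (⋃ n, B n)]
    refine vNGen_mono ?_
    rintro _ ⟨q, -, rfl⟩ T hT
    obtain ⟨p, hp, hlim, hmem⟩ := hleft q
    exact (commute_left_of_tendsto hp hlim
      (hmem.mono fun n hn => (hT _ (Set.mem_iUnion.2 ⟨n, hn⟩)))).symm

theorem isHyperfinite [Countable Γ] (hF : IsFolner (⊤ : Subgroup Γ)) :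
    IsHyperfinite (groupVN (HeisExt Γ)) := by
  classical
  obtain ⟨E, hE, hlim⟩ := exists_finRel_seq hF
  choose Z hZ using fun n => exists_finset_cellProj_mem_span (E n)
  obtain ⟨F, hFmono, hZF, hFtop⟩ :=
    exists_monotone_finset_exhaustion fun n => (Z n).image (central (Γ := Γ))
  let S : ℕ → Set (HeisExt Γ) := fun n => {q | q ∈ F n ∧ q.g = 1}
  have hS (n : ℕ) : (S n).Finite := (F n).finite_toSet.subset fun q hq => hq.1
  refine ⟨fun n => finAlgebra (E n) (S n), monotone_nat_of_le_succ fun n => ?_,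
    fun n => finiteDimensional_finAlgebra (E n) (hS n) fun s hs => hs.2,
    fun n => finAlgebra_subset_groupVN (E n) (S n),
    vNGen_iUnion_eq_groupVN (fun n => finAlgebra_subset_groupVN (E n) (S n)) fun q => ?_⟩
  · refine finAlgebra_mono (hE n) (fun q hq => ⟨hFmono n.le_succ hq.1, hq.2⟩) fun x => ?_
    refine Submodule.span_mono (Set.image_mono fun c hc => ?_) (hZ n x)
    exact ⟨hZF n (Finset.mem_image_of_mem _ hc), rfl⟩
  · refine ⟨fun n x => (E n).rel x 1 q.g⁻¹, fun n => (E n).isCylinder 1 _, hlim _, ?_⟩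
    filter_upwards [hFtop ((lift q.g)⁻¹ * q)] with n hn
    exact left_mul_spectralProj_mem_finAlgebra ⟨hn, by simp [lift]⟩

end HeisExt

/-- for every countable ordinal `α > 1` and every family of nontrivial
countable discrete amenable groups `G_β` (`1 ≤ β < α`) there is a masa `A` in a
hyperfinite II₁ factor `R` whose normalizer tower has length exactly `α`, ends at `R`,
is semi-regular (`𝒩¹(A) = N_R(A)''` is a factor distinct from `R`), and realises each
`G_β` as the quotient of the group of unitary normalisers `N_R(𝒩^β(A))` by the unitary
group `U(𝒩^β(A))` (encoded by a surjective multiplicative map with the appropriate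
kernel, together with normality of `U(𝒩^β(A))` in `N_R(𝒩^β(A))`). -/
theorem exists_masa_with_tower_length
    (α : Ordinal) (hα : 1 < α) (hαcount : α.card ≤ Cardinal.aleph0)
    (G : Ordinal → Type) [∀ β, Group (G β)]
    (hGcount : ∀ β, 1 ≤ β → β < α → Countable (G β))
    (hGnontriv : ∀ β, 1 ≤ β → β < α → Nontrivial (G β))
    (hGamen : ∀ β, 1 ≤ β → β < α → IsAmenable (G β)) :
    ∃ (𝓗 : Type) (_ : NormedAddCommGroup 𝓗) (_ : InnerProductSpace ℂ 𝓗)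
      (_ : CompleteSpace 𝓗) (R : VonNeumannAlgebra 𝓗) (A : Set (𝓗 →L[ℂ] 𝓗)),
      -- R is a hyperfinite II₁ factor
      IsHyperfinite R ∧ IsIIOneFactor R ∧
      -- A is a masa in R
      A ⊆ (R : Set (𝓗 →L[ℂ] 𝓗)) ∧ Set.centralizer A ∩ (R : Set (𝓗 →L[ℂ] 𝓗)) = A ∧
      -- (i) the tower reaches R exactly at stage α
      tower R A α = (R : Set (𝓗 →L[ℂ] 𝓗)) ∧
      (∀ β : Ordinal, β < α → tower R A β ≠ tower R A (β + 1)) ∧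
      -- (ii) A is semi-regular: 𝒩¹(A) = N_R(A)'' is a factor distinct from R
      tower R A 1 = vNGen (normSet R A) ∧
      IsFactorSet (tower R A 1) ∧ tower R A 1 ≠ (R : Set (𝓗 →L[ℂ] 𝓗)) ∧
      -- (iii) N_R(𝒩^β(A)) / U(𝒩^β(A)) ≅ G_β for 1 ≤ β < α
      (∀ β : Ordinal, 1 ≤ β → β < α →
        -- U(𝒩^β(A)) is normal in N_R(𝒩^β(A))
        (∀ u ∈ normSet R (tower R A β), ∀ a ∈ tower R A β,
          a ∈ unitary (𝓗 →L[ℂ] 𝓗) → u * a * star u ∈ tower R A β) ∧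
        -- the quotient is isomorphic to G_β
        ∃ φ : (𝓗 →L[ℂ] 𝓗) → G β,
          (∀ u ∈ normSet R (tower R A β), ∀ v ∈ normSet R (tower R A β),
            φ (u * v) = φ u * φ v) ∧
          (∀ g : G β, ∃ u ∈ normSet R (tower R A β), φ u = g) ∧
          (∀ u ∈ normSet R (tower R A β), (φ u = 1 ↔ u ∈ tower R A β))) := by
  obtain ⟨Γ, _, _, hF, ⟨t⟩⟩ := exists_subgroupTower α hα hαcount G hGcount hGnontriv hGamen
  refine ⟨Ell2 (HeisExt Γ), inferInstance, inferInstance, inferInstance, GroupVN.groupVN _,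
    GroupVN.subgroupVN (t.group 0), HeisExt.isHyperfinite hF, t.isIIOneFactor, fun _ h => h.1,
    GroupVN.centralizer_inter_groupVN t.comm t.infinite_conjOrbit_zero, t.tower_top,
    fun β hβ => t.tower_ne_tower_add_one hGnontriv hβ, tower_one _ _, t.isFactorSet_tower_one,
    t.tower_one_ne hα hGnontriv, fun β h1 hβ => ?_⟩
  rw [t.tower_eq hβ.le]
  exact ⟨fun u hu a ha _ => (conj_mem_iff_of_mem_normSet hu).2 ha, t.exists_quotient_map h1 hβ⟩

end
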